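/- Let n ≥ 2 and let Γ ⊆ ℝⁿ be a convex invariant cone, and let f be a concave elliptic Hessian operator on Γ satisfying condition N with constants N₁, N₂ > 0. Let u : ℝⁿ → ℝ be a smooth entire admissible function which has quadratic growth, solves F(D²u) = 1 on all of ℝⁿ, and satisfies condition D with some constants D₁, D₂ > 0. Then u is a quadratic polynomial, i.e. there exist a symmetric matrix A, a vector b ∈ ℝⁿ and c ∈ ℝ with u(x) = ½ xᵀAx + b·x + c for all x. -/

import Mathlib

open scoped BigOperators

noncomputable section

/-- The positive orthant `Γₙ = (0,∞)ⁿ` in `ℝⁿ`. -/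
def PosOrthant (n : ℕ) : Set (Fin n → ℝ) := {lam | ∀ i, 0 < lam i}

/-- A convex invariant cone: an open cone `Γ ⊆ ℝⁿ` with vertex at the origin, `Γ ≠ ℝⁿ`,
which is convex, satisfies `Γ + Γₙ ⊆ Γ`, and is invariant under permutations of coordinates. -/
def IsConvexInvariantCone {n : ℕ} (Γ : Set (Fin n → ℝ)) : Prop :=
  IsOpen Γ ∧ Γ ≠ Set.univ ∧ Convex ℝ Γ ∧
    (∀ lam ∈ Γ, ∀ t : ℝ, 0 < t → t • lam ∈ Γ) ∧
    (∀ lam ∈ Γ, ∀ tau ∈ PosOrthant n, lam + tau ∈ Γ) ∧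
    (∀ lam ∈ Γ, ∀ σ : Equiv.Perm (Fin n), lam ∘ σ ∈ Γ)

/-- The partial derivative `∂f/∂λᵢ(λ)`. -/
def fpd {n : ℕ} (f : (Fin n → ℝ) → ℝ) (i : Fin n) (lam : Fin n → ℝ) : ℝ :=
  fderiv ℝ f lam (Pi.single i 1)

/-- A concave elliptic Hessian operator on a convex invariant cone `Γ`:
a `C²`, permutation-invariant, concave function `f` on `Γ` which is elliptic
(`∂f/∂λᵢ > 0`), positive, and positively homogeneous of degree one. -/
def IsConcaveEllipticHessianOp {n : ℕ} (Γ : Set (Fin n → ℝ)) (f : (Fin n → ℝ) → ℝ) : Prop :=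
  ContDiffOn ℝ 2 f Γ ∧ ConcaveOn ℝ Γ f ∧
    (∀ lam ∈ Γ, ∀ σ : Equiv.Perm (Fin n), f (lam ∘ σ) = f lam) ∧
    (∀ lam ∈ Γ, ∀ i, 0 < fpd f i lam) ∧
    (∀ lam ∈ Γ, 0 < f lam) ∧
    (∀ lam ∈ Γ, ∀ t : ℝ, 0 < t → f (t • lam) = t * f lam)

/-- Condition N: whenever `λ ∈ Γ` satisfies `f(λ) = 1` and `Σᵢ ∂f/∂λᵢ(λ) ≤ C` for some `C > 0`,
then `∂f/∂λᵢ(λ) ≥ 1/(N₁ C^{N₂})` for every `i`. -/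
def ConditionN {n : ℕ} (Γ : Set (Fin n → ℝ)) (f : (Fin n → ℝ) → ℝ) (N₁ N₂ : ℝ) : Prop :=
  ∀ lam ∈ Γ, f lam = 1 → ∀ C : ℝ, 0 < C → (∑ i, fpd f i lam) ≤ C →
    ∀ i, 1 / (N₁ * C ^ N₂) ≤ fpd f i lam

/-- The Hessian matrix `D²u(x)`. -/
def hessianMatrix {n : ℕ} (u : EuclideanSpace ℝ (Fin n) → ℝ) (x : EuclideanSpace ℝ (Fin n)) :
    Matrix (Fin n) (Fin n) ℝ :=
  fun i j => iteratedFDeriv ℝ 2 u x ![EuclideanSpace.single i 1, EuclideanSpace.single j 1]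

/-- The vector of eigenvalues `λ(D²u(x))` of the Hessian of `u` at `x`
(junk value `0` if the Hessian matrix fails to be symmetric). -/
def hessEigen {n : ℕ} (u : EuclideanSpace ℝ (Fin n) → ℝ) (x : EuclideanSpace ℝ (Fin n)) :
    Fin n → ℝ :=
  if h : (hessianMatrix u x).IsHermitian then h.eigenvalues else 0

/-- Condition D for a solution `u` of `F(D²u) = 1` on a set `Ω`: at every point, if an
eigenvalue `λᵢ` of `D²u` exceeds `D₁` then `∂f/∂λᵢ(λ) ⬝ λᵢ ≤ D₂`. -/
def ConditionD {n : ℕ} (f : (Fin n → ℝ) → ℝ) (u : EuclideanSpace ℝ (Fin n) → ℝ)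
    (Ω : Set (EuclideanSpace ℝ (Fin n))) (D₁ D₂ : ℝ) : Prop :=
  ∀ x ∈ Ω, ∀ i, D₁ < hessEigen u x i →
    fpd f i (hessEigen u x) * hessEigen u x i ≤ D₂

/-- The `k`-th elementary symmetric polynomial `σ_k` on `ℝⁿ`. -/
def esymmF (n k : ℕ) (lam : Fin n → ℝ) : ℝ :=
  ∑ s ∈ (Finset.univ : Finset (Fin n)).powersetCard k, ∏ i ∈ s, lam i

/-- The Gårding cone `Γ_k = {λ : σ_j(λ) > 0, j = 1,…,k}`. -/
def GammaK (n k : ℕ) : Set (Fin n → ℝ) :=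
  {lam | ∀ j : ℕ, 1 ≤ j → j ≤ k → 0 < esymmF n j lam}

/-- The cone `Γ̂_p` of vectors all of whose sums of `p` distinct coordinates are positive. -/
def GammaHat (n p : ℕ) : Set (Fin n → ℝ) :=
  {lam | ∀ s : Finset (Fin n), s.card = p → 0 < ∑ i ∈ s, lam i}

/-- The `p`-Monge–Ampère operator `M_p(λ) = ∏_{i₁<⋯<i_p} (λ_{i₁} + ⋯ + λ_{i_p})`. -/
def pMA (n p : ℕ) (lam : Fin n → ℝ) : ℝ :=
  ∏ s ∈ (Finset.univ : Finset (Fin n)).powersetCard p, ∑ i ∈ s, lam i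

/-- Quadratic growth: `u(x) ≥ C⁻¹|x|² − C` for some `C > 0`. -/
def QuadraticGrowth {n : ℕ} (u : EuclideanSpace ℝ (Fin n) → ℝ) : Prop :=
  ∃ C : ℝ, 0 < C ∧ ∀ x, C⁻¹ * ‖x‖ ^ 2 - C ≤ u x

/-- `u` is a quadratic polynomial: `u(x) = ½ xᵀAx + b·x + c` with `A` symmetric. -/
def IsQuadraticPolynomial {n : ℕ} (u : EuclideanSpace ℝ (Fin n) → ℝ) : Prop :=
  ∃ (A : Matrix (Fin n) (Fin n) ℝ) (b : Fin n → ℝ) (c : ℝ), A.IsSymm ∧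
    ∀ x, u x = (1 / 2) * (∑ i, ∑ j, A i j * x i * x j) + (∑ i, b i * x i) + c


/-- directional derivative -/
def dd {n : ℕ} (v : EuclideanSpace ℝ (Fin n)) (g : EuclideanSpace ℝ (Fin n) → ℝ) :
    EuclideanSpace ℝ (Fin n) → ℝ := fun x => fderiv ℝ g x v

section calc_dd
variable {n : ℕ}

lemma dd_smooth {g : EuclideanSpace ℝ (Fin n) → ℝ} (hg : ContDiff ℝ (⊤ : ℕ∞) g)
    (v : EuclideanSpace ℝ (Fin n)) : ContDiff ℝ (⊤ : ℕ∞) (dd v g) := by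
  unfold dd
  have : ContDiff ℝ (⊤ : ℕ∞) (fderiv ℝ g) := hg.fderiv_right (by simp)
  exact this.clm_apply contDiff_const

lemma dd_dd_eq {g : EuclideanSpace ℝ (Fin n) → ℝ} (hg : ContDiff ℝ (⊤ : ℕ∞) g)
    (v w x : EuclideanSpace ℝ (Fin n)) :
    dd v (dd w g) x = fderiv ℝ (fderiv ℝ g) x v w := by
  have h1 : ContDiff ℝ (⊤ : ℕ∞) (fderiv ℝ g) := hg.fderiv_right (by simp)
  have h2 : DifferentiableAt ℝ (fderiv ℝ g) x := (h1.differentiable (by simp)) x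
  unfold dd
  rw [fderiv_clm_apply h2 (by fun_prop)]
  simp

lemma dd_comm {g : EuclideanSpace ℝ (Fin n) → ℝ} (hg : ContDiff ℝ (⊤ : ℕ∞) g)
    (v w : EuclideanSpace ℝ (Fin n)) : dd v (dd w g) = dd w (dd v g) := by
  funext x
  rw [dd_dd_eq hg, dd_dd_eq hg]
  have : IsSymmSndFDerivAt ℝ g x := hg.contDiffAt.isSymmSndFDerivAt (by
    simp only [minSmoothness_of_isRCLikeNormedField]
    exact WithTop.coe_le_coe.mpr (le_top : (2 : ℕ∞) ≤ ⊤))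
  exact this v w

lemma dd_add_left (v w : EuclideanSpace ℝ (Fin n)) (g : EuclideanSpace ℝ (Fin n) → ℝ) :
    dd (v + w) g = fun x => dd v g x + dd w g x := by
  funext x; simp [dd]

lemma dd_smul_left (a : ℝ) (v : EuclideanSpace ℝ (Fin n)) (g : EuclideanSpace ℝ (Fin n) → ℝ) :
    dd (a • v) g = fun x => a * dd v g x := by
  funext x; simp [dd]

lemma dd_add {g h : EuclideanSpace ℝ (Fin n) → ℝ} (hg : ContDiff ℝ (⊤ : ℕ∞) g)
    (hh : ContDiff ℝ (⊤ : ℕ∞) h) (v : EuclideanSpace ℝ (Fin n)) :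
    dd v (fun x => g x + h x) = fun x => dd v g x + dd v h x := by
  funext x
  have h1 := (hg.differentiable (by simp)) x
  have h2 := (hh.differentiable (by simp)) x
  simp [dd, fderiv_fun_add h1 h2]

lemma dd_const_mul {g : EuclideanSpace ℝ (Fin n) → ℝ} (hg : ContDiff ℝ (⊤ : ℕ∞) g)
    (a : ℝ) (v : EuclideanSpace ℝ (Fin n)) :
    dd v (fun x => a * g x) = fun x => a * dd v g x := by
  funext x
  have h1 := (hg.differentiable (by simp)) x
  simp [dd, fderiv_const_mul h1]

lemma dd_const (a : ℝ) (v : EuclideanSpace ℝ (Fin n)) :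
    dd v (fun _ => a) = fun _ => 0 := by
  funext x; simp [dd]

lemma dd_const_sub {g : EuclideanSpace ℝ (Fin n) → ℝ}
    (a : ℝ) (v : EuclideanSpace ℝ (Fin n)) :
    dd v (fun x => a - g x) = fun x => - dd v g x := by
  funext x
  simp [dd, fderiv_const_sub]

lemma dd_neg {g : EuclideanSpace ℝ (Fin n) → ℝ} (v : EuclideanSpace ℝ (Fin n)) :
    dd v (fun x => - g x) = fun x => - dd v g x := by
  funext x
  simp [dd, fderiv_fun_neg]

lemma dd_sum {ι : Type*} (s : Finset ι) {g : ι → EuclideanSpace ℝ (Fin n) → ℝ}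
    (hg : ∀ i, ContDiff ℝ (⊤ : ℕ∞) (g i)) (v : EuclideanSpace ℝ (Fin n)) :
    dd v (fun x => ∑ i ∈ s, g i x) = fun x => ∑ i ∈ s, dd v (g i) x := by
  funext x
  have h1 : ∀ i ∈ s, DifferentiableAt ℝ (g i) x := fun i _ => ((hg i).differentiable (by simp)) x
  simp [dd, fderiv_fun_sum h1]

lemma dd_line {g : EuclideanSpace ℝ (Fin n) → ℝ} (hg : ContDiff ℝ (⊤ : ℕ∞) g)
    (x v : EuclideanSpace ℝ (Fin n)) (t : ℝ) :
    HasDerivAt (fun s : ℝ => g (x + s • v)) (dd v g (x + t • v)) t := by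
  have h1 := ((hg.differentiable (by simp)) (x + t • v)).hasFDerivAt
  have h2 : HasDerivAt (fun s : ℝ => x + s • v) v t := by
    simpa using ((hasDerivAt_id t).smul_const v).const_add x
  exact h1.comp_hasDerivAt t h2

end calc_dd

/-- two-jet at zero of a real function -/
def J2 (g : ℝ → ℝ) (a b c : ℝ) : Prop :=
  g 0 = a ∧ ∃ g' : ℝ → ℝ, (∀ᶠ t in nhds (0 : ℝ), HasDerivAt g (g' t) t) ∧ g' 0 = b ∧
    HasDerivAt g' c 0

namespace J2

lemma congr {g : ℝ → ℝ} {a b c a' b' c' : ℝ} (h : J2 g a b c) (h1 : a = a') (h2 : b = b')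
    (h3 : c = c') : J2 g a' b' c' := by subst h1 h2 h3; exact h

lemma const (a : ℝ) : J2 (fun _ => a) a 0 0 :=
  ⟨rfl, fun _ => 0, Filter.Eventually.of_forall fun t => hasDerivAt_const t a, rfl,
    hasDerivAt_const 0 0⟩

lemma add {g h : ℝ → ℝ} {a b c a' b' c' : ℝ} (hg : J2 g a b c) (hh : J2 h a' b' c') :
    J2 (fun t => g t + h t) (a + a') (b + b') (c + c') := by
  obtain ⟨h0, g', h1, h2, h3⟩ := hg
  obtain ⟨k0, k', k1, k2, k3⟩ := hh
  refine ⟨by simp [h0, k0], fun t => g' t + k' t, ?_, by simp [h2, k2], h3.add k3⟩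
  filter_upwards [h1, k1] with t ht kt using ht.add kt

lemma mul {g h : ℝ → ℝ} {a b c a' b' c' : ℝ} (hg : J2 g a b c) (hh : J2 h a' b' c') :
    J2 (fun t => g t * h t) (a * a') (b * a' + a * b') (c * a' + 2 * (b * b') + a * c') := by
  obtain ⟨h0, g', h1, h2, h3⟩ := hg
  obtain ⟨k0, k', k1, k2, k3⟩ := hh
  refine ⟨by simp [h0, k0], fun t => g' t * h t + g t * k' t, ?_, by simp [h0, k0, h2, k2], ?_⟩
  · filter_upwards [h1, k1] with t ht kt using ht.mul kt
  · have e1 := h3.mul k1.self_of_nhds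
    have e2 := h1.self_of_nhds.mul k3
    refine (e1.add e2).congr_deriv ?_
    rw [h0, k0, h2, k2]; ring

lemma const_mul {g : ℝ → ℝ} {a b c : ℝ} (r : ℝ) (hg : J2 g a b c) :
    J2 (fun t => r * g t) (r * a) (r * b) (r * c) :=
  ((const r).mul hg).congr (by ring) (by ring) (by ring)

lemma sum {ι : Type*} (s : Finset ι) {g : ι → ℝ → ℝ} {a b c : ι → ℝ}
    (h : ∀ i, J2 (g i) (a i) (b i) (c i)) :
    J2 (fun t => ∑ i ∈ s, g i t) (∑ i ∈ s, a i) (∑ i ∈ s, b i) (∑ i ∈ s, c i) := by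
  classical
  induction s using Finset.induction_on with
  | empty => simpa using const 0
  | insert i s hi ih =>
    simp only [Finset.sum_insert hi]
    exact (h i).add ih

lemma log {g : ℝ → ℝ} {a b c : ℝ} (hg : J2 g a b c) (ha : 0 < a) :
    J2 (fun t => Real.log (g t)) (Real.log a) (b / a) (c / a - (b / a) ^ 2) := by
  obtain ⟨h0, g', h1, h2, h3⟩ := hg
  have hc : ContinuousAt g 0 := h1.self_of_nhds.continuousAt
  have hpos : ∀ᶠ t in nhds (0 : ℝ), 0 < g t := hc.eventually (lt_mem_nhds (by rw [h0]; exact ha))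
  refine ⟨by simp [h0], fun t => g' t / g t, ?_, by simp [h0, h2], ?_⟩
  · filter_upwards [h1, hpos] with t ht hp using ht.log hp.ne'
  · have := h3.div h1.self_of_nhds (by rw [h0]; exact ha.ne')
    refine this.congr_deriv ?_
    rw [h0, h2]; field_simp

lemma sin (w : ℝ) : J2 (fun t => Real.sin (w * t)) 0 w 0 := by
  refine ⟨by simp, fun t => Real.cos (w * t) * w, Filter.Eventually.of_forall fun t => ?_,
    by simp, ?_⟩
  · simpa using (((hasDerivAt_id t).const_mul w).sin)
  · have := ((((hasDerivAt_id (0:ℝ)).const_mul w).cos).mul_const w)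
    simpa using this

lemma cos (w : ℝ) : J2 (fun t => Real.cos (w * t)) 1 0 (-w ^ 2) := by
  refine ⟨by simp, fun t => -Real.sin (w * t) * w, Filter.Eventually.of_forall fun t => ?_,
    by simp, ?_⟩
  · simpa using (((hasDerivAt_id t).const_mul w).cos)
  · have := ((((hasDerivAt_id (0:ℝ)).const_mul w).sin).neg.mul_const w)
    refine this.congr_deriv ?_
    simp; ring

lemma localMax {g : ℝ → ℝ} {a b c : ℝ} (hg : J2 g a b c) (hm : IsLocalMax g 0) :
    b = 0 ∧ c ≤ 0 := by
  obtain ⟨h0, g', h1, h2, h3⟩ := hg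
  have hb : b = 0 := by
    rw [← h2]; exact hm.hasDerivAt_eq_zero h1.self_of_nhds
  refine ⟨hb, ?_⟩
  by_contra hc
  push Not at hc
  have hd : deriv g =ᶠ[nhds 0] g' := by filter_upwards [h1] with t ht using ht.deriv
  have hdd : deriv (deriv g) 0 = c := by rw [hd.deriv_eq]; exact h3.deriv
  have hmin : IsLocalMin g 0 := isLocalMin_of_deriv_deriv_pos (by rw [hdd]; exact hc)
    (by rw [hd.self_of_nhds, h2, hb]) h1.self_of_nhds.continuousAt
  have heq : g =ᶠ[nhds 0] fun _ => g 0 := by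
    filter_upwards [hm, hmin] with t h1 h2 using le_antisymm h1 h2
  have hz : deriv g =ᶠ[nhds 0] fun _ => 0 := by
    have := heq.deriv
    filter_upwards [this] with t ht
    rw [ht]; simp
  have : deriv (deriv g) 0 = 0 := by rw [hz.deriv_eq]; simp
  linarith

lemma localMin {g : ℝ → ℝ} {a b c : ℝ} (hg : J2 g a b c) (hm : IsLocalMin g 0) :
    b = 0 ∧ 0 ≤ c := by
  have h := (hg.const_mul (-1)).localMax (by
    have := hm.neg
    refine this.congr (Filter.Eventually.of_forall fun t => ?_)
    simp)
  constructor <;> linarith [h.1, h.2]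

end J2

section tests
variable {n : ℕ}

lemma J2_line {g : EuclideanSpace ℝ (Fin n) → ℝ} (hg : ContDiff ℝ (⊤ : ℕ∞) g)
    (x v : EuclideanSpace ℝ (Fin n)) :
    J2 (fun t => g (x + t • v)) (g x) (dd v g x) (dd v (dd v g) x) := by
  refine ⟨by simp, fun t => dd v g (x + t • v), Filter.Eventually.of_forall (dd_line hg x v),
    by simp, ?_⟩
  simpa using dd_line (dd_smooth hg v) x v 0

lemma tendsto_line (x v : EuclideanSpace ℝ (Fin n)) :
    Filter.Tendsto (fun t : ℝ => x + t • v) (nhds 0) (nhds x) := by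
  have : Continuous (fun t : ℝ => x + t • v) := by fun_prop
  simpa using this.tendsto 0

lemma localMin_test {g : EuclideanSpace ℝ (Fin n) → ℝ} (hg : ContDiff ℝ (⊤ : ℕ∞) g)
    {x : EuclideanSpace ℝ (Fin n)} (hm : IsLocalMin g x) (v : EuclideanSpace ℝ (Fin n)) :
    dd v g x = 0 ∧ 0 ≤ dd v (dd v g) x := by
  refine (J2_line hg x v).localMin ?_
  have := (tendsto_line x v).eventually hm
  filter_upwards [this] with t ht
  simpa using ht

lemma J2_normsq (x v : EuclideanSpace ℝ (Fin n)) :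
    J2 (fun t : ℝ => ‖x + t • v‖ ^ 2) (‖x‖ ^ 2) (2 * inner ℝ x v) (2 * ‖v‖ ^ 2) := by
  have h : (fun t : ℝ => ‖x + t • v‖ ^ 2) =
      fun t : ℝ => ‖x‖ ^ 2 + (2 * inner ℝ x v * t + ‖v‖ ^ 2 * (t * t)) := by
    funext t
    rw [norm_add_sq_real, inner_smul_right, norm_smul, mul_pow, Real.norm_eq_abs, sq_abs]; ring
  rw [h]
  have hid : J2 (fun t : ℝ => t) 0 1 0 :=
    ⟨rfl, fun _ => 1, Filter.Eventually.of_forall fun t => hasDerivAt_id t, rfl,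
      hasDerivAt_const 0 1⟩
  exact ((J2.const (‖x‖ ^ 2)).add ((hid.const_mul (2 * inner ℝ x v)).add
    ((hid.mul hid).const_mul (‖v‖ ^ 2)))).congr (by ring) (by ring) (by ring)

/-- Test at a maximum of `w h^γ e^{ε|x|²}`. -/
lemma max_test {w h : EuclideanSpace ℝ (Fin n) → ℝ} (hw : ContDiff ℝ (⊤ : ℕ∞) w)
    (hh : ContDiff ℝ (⊤ : ℕ∞) h) (γ : ℕ) (ε : ℝ) {x : EuclideanSpace ℝ (Fin n)}
    (hm : IsLocalMax (fun y => w y * h y ^ γ * Real.exp (ε * ‖y‖ ^ 2)) x)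
    (hwx : 0 < w x) (hhx : 0 < h x) (v : EuclideanSpace ℝ (Fin n)) :
    dd v w x / w x + γ * (dd v h x / h x) + 2 * ε * inner ℝ x v = 0 ∧
    dd v (dd v w) x / w x - (dd v w x / w x) ^ 2
      + γ * (dd v (dd v h) x / h x - (dd v h x / h x) ^ 2) + 2 * ε * ‖v‖ ^ 2 ≤ 0 := by
  have j := (((J2_line hw x v).log hwx).add (((J2_line hh x v).log hhx).const_mul (γ : ℝ))).add
    ((J2_normsq x v).const_mul ε)
  have hl := tendsto_line x v
  have hp1 : ∀ᶠ t in nhds (0:ℝ), 0 < w (x + t • v) :=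
    hl.eventually (hw.continuous.continuousAt.eventually (lt_mem_nhds hwx))
  have hp2 : ∀ᶠ t in nhds (0:ℝ), 0 < h (x + t • v) :=
    hl.eventually (hh.continuous.continuousAt.eventually (lt_mem_nhds hhx))
  have hm' := hl.eventually hm
  have key : ∀ y, 0 < w y → 0 < h y → Real.log (w y * h y ^ γ * Real.exp (ε * ‖y‖ ^ 2)) =
      Real.log (w y) + γ * Real.log (h y) + ε * ‖y‖ ^ 2 := by
    intro y h1 h2
    rw [Real.log_mul (by positivity) (by positivity), Real.log_mul (by positivity) (by positivity),
      Real.log_pow, Real.log_exp]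
  have r := j.localMax (by
    filter_upwards [hp1, hp2, hm'] with t h1 h2 h3
    simp only [zero_smul, add_zero]
    rw [← key _ h1 h2, ← key _ hwx hhx]
    exact Real.log_le_log (by positivity) h3)
  constructor
  · linarith [r.1]
  · linarith [r.2]

end tests


abbrev EE (n : ℕ) := EuclideanSpace ℝ (Fin n)

/-- Abstract pointwise data extracted from the equation. -/
structure EllData (n : ℕ) (N₁ : ℝ) (m : ℕ) (D₁ D₂ : ℝ) (u : EE n → ℝ) where
  smooth : ContDiff ℝ (⊤ : ℕ∞) u
  b : EE n → OrthonormalBasis (Fin n) ℝ (EE n)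
  lam : EE n → Fin n → ℝ
  phi : EE n → Fin n → ℝ
  diag : ∀ x i j, dd (b x i) (dd (b x j) u) x = if i = j then lam x i else 0
  pos : ∀ x i, 0 < phi x i
  euler : ∀ x, ∑ i, phi x i * lam x i = 1
  comp : ∀ x y (b' : OrthonormalBasis (Fin n) ℝ (EE n)),
    1 ≤ ∑ i, phi x i * dd (b' i) (dd (b' i) u) y
  condN : ∀ x (C : ℝ), 1 ≤ C → ∑ i, phi x i ≤ C → ∀ i, 1 ≤ N₁ * C ^ m * phi x i
  condD : ∀ x i, D₁ < lam x i → phi x i * lam x i ≤ D₂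

section bilin
variable {n : ℕ} {u : EE n → ℝ}

lemma dd2_expand (hu : ContDiff ℝ (⊤ : ℕ∞) u) (v e s : EE n) (α β : ℝ) (y : EE n) :
    dd (v + α • e + β • s) (dd (v + α • e + β • s) u) y =
      dd v (dd v u) y + 2 * (α * dd v (dd e u) y) + 2 * (β * dd v (dd s u) y)
      + α * α * dd e (dd e u) y + 2 * (α * β * dd e (dd s u) y) + β * β * dd s (dd s u) y := by
  have c1 : dd v (dd e u) y = dd e (dd v u) y := by rw [dd_comm hu]
  have c2 : dd v (dd s u) y = dd s (dd v u) y := by rw [dd_comm hu]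
  have c3 : dd s (dd e u) y = dd e (dd s u) y := by rw [dd_comm hu]
  simp only [dd_dd_eq hu, map_add, map_smul, add_apply,
    smul_apply, smul_eq_mul] at c1 c2 c3 ⊢
  rw [c1, c2, c3]; ring

/-- plane rotation as isometry equivalence -/
lemma exists_rot (e s : EE n) (he : ‖e‖ = 1) (hs : ‖s‖ = 1) (hes : inner ℝ e s = 0) (c S : ℝ)
    (hcS : c ^ 2 + S ^ 2 = 1) : ∃ R : EE n ≃ₗᵢ[ℝ] EE n, ∀ v, R v = v +
      ((c - 1) * inner ℝ e v - S * inner ℝ s v) • e + (S * inner ℝ e v + (c - 1) * inner ℝ s v) • s := by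
  let f : EE n →ₗ[ℝ] EE n :=
    { toFun := fun v => v + ((c - 1) * inner ℝ e v - S * inner ℝ s v) • e
        + (S * inner ℝ e v + (c - 1) * inner ℝ s v) • s
      map_add' := by
        intro v w
        simp only [inner_add_right]; module
      map_smul' := by
        intro a v
        simp only [inner_smul_right, RingHom.id_apply]; module }
  have hn : ∀ v, ‖f v‖ = ‖v‖ := by
    intro v
    have hf : f v = v + ((c - 1) * inner ℝ e v - S * inner ℝ s v) • e
        + (S * inner ℝ e v + (c - 1) * inner ℝ s v) • s := rfl
    have h2 : ‖f v‖ ^ 2 = ‖v‖ ^ 2 := by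
      rw [hf, ← real_inner_self_eq_norm_sq, ← real_inner_self_eq_norm_sq]
      have hee : inner ℝ e e = (1:ℝ) := by rw [real_inner_self_eq_norm_sq, he]; norm_num
      have hss : inner ℝ s s = (1:ℝ) := by rw [real_inner_self_eq_norm_sq, hs]; norm_num
      have hse : inner ℝ s e = (0:ℝ) := by rw [real_inner_comm]; exact hes
      simp only [inner_add_left, inner_add_right, inner_smul_left, inner_smul_right, hee, hss, hes, hse,
        real_inner_comm e v, real_inner_comm s v, RCLike.conj_to_real]
      have : S ^ 2 = 1 - c ^ 2 := by linarith
      ring_nf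
      rw [this]; ring
    have := congrArg Real.sqrt h2
    rwa [Real.sqrt_sq (norm_nonneg _), Real.sqrt_sq (norm_nonneg _)] at this
  let L : EE n →ₗᵢ[ℝ] EE n := ⟨f, hn⟩
  exact ⟨L.toLinearIsometryEquiv rfl, fun v => rfl⟩

end bilin

namespace EllData
variable {n : ℕ} {N₁ : ℝ} {m : ℕ} {D₁ D₂ : ℝ} {u : EE n → ℝ}

/-- linearized operator -/
def L (A : EllData n N₁ m D₁ D₂ u) (g : EE n → ℝ) (x : EE n) : ℝ :=
  ∑ i, A.phi x i * dd (A.b x i) (dd (A.b x i) g) x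

/-- trace of coefficients -/
def tr (A : EllData n N₁ m D₁ D₂ u) (x : EE n) : ℝ := ∑ i, A.phi x i

lemma bilin_test (A : EllData n N₁ m D₁ D₂ u) (x v : EE n) :
    A.L (dd v u) x = 0 ∧ 0 ≤ A.L (dd v (dd v u)) x := by
  have hu := A.smooth
  have hs : ∀ i, ContDiff ℝ (⊤ : ℕ∞) (fun y => A.phi x i * dd (A.b x i) (dd (A.b x i) u) y) :=
    fun i => contDiff_const.mul (dd_smooth (dd_smooth hu _) _)
  have hG : ContDiff ℝ (⊤ : ℕ∞) (fun y => ∑ i, A.phi x i * dd (A.b x i) (dd (A.b x i) u) y) :=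
    ContDiff.sum fun i _ => hs i
  have hx : ∑ i, A.phi x i * dd (A.b x i) (dd (A.b x i) u) x = 1 := by
    simp only [A.diag, if_true]; exact A.euler x
  have hm : IsLocalMin (fun y => ∑ i, A.phi x i * dd (A.b x i) (dd (A.b x i) u) y) x := by
    refine Filter.Eventually.of_forall fun y => ?_
    simp only [hx]; exact A.comp x y (A.b x)
  have h1 : ∀ g : Fin n → EE n → ℝ, (∀ i, ContDiff ℝ (⊤ : ℕ∞) (g i)) →
      dd v (fun y => ∑ i, A.phi x i * g i y) = fun y => ∑ i, A.phi x i * dd v (g i) y := by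
    intro g hg
    rw [dd_sum _ (fun i => contDiff_const.mul (hg i))]
    funext y
    refine Finset.sum_congr rfl fun i _ => ?_
    rw [dd_const_mul (hg i)]
  have key := localMin_test hG hm v
  have hs2 : ∀ i, ContDiff ℝ (⊤ : ℕ∞) (dd (A.b x i) (dd (A.b x i) u)) :=
    fun i => dd_smooth (dd_smooth hu _) _
  rw [h1 _ hs2, h1 _ (fun i => dd_smooth (hs2 i) v)] at key
  have c : ∀ (g : EE n → ℝ), ContDiff ℝ (⊤ : ℕ∞) g → ∀ i, dd v (dd (A.b x i) (dd (A.b x i) g)) =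
      dd (A.b x i) (dd (A.b x i) (dd v g)) := by
    intro g hg i
    rw [dd_comm (dd_smooth hg _) v, dd_comm hg v]
  simp only [c u hu, c _ (dd_smooth hu v)] at key
  exact key

lemma rotation (A : EllData n N₁ m D₁ D₂ u) (x : EE n) (j : Fin n) (σ : Fin n → ℝ)
    (hσ : σ j = 0) :
    ∑ i, (A.phi x i - A.phi x j) * (4 * σ i * dd (A.b x i) (dd (A.b x j) (dd (A.b x j) u)) x
        - 2 * σ i ^ 2 * (A.lam x j - A.lam x i))
      ≤ A.L (dd (A.b x j) (dd (A.b x j) u)) x := by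
  have hu := A.smooth
  set e := A.b x j with he
  set s0 : EE n := ∑ i, σ i • A.b x i with hs0
  by_cases hz : s0 = 0
  · have hσ0 : ∀ i, σ i = 0 := by
      intro i
      have := congrArg (fun v => inner ℝ (A.b x i) v) hz
      simpa [hs0, inner_sum, inner_smul_right, OrthonormalBasis.inner_eq_ite] using this
    simp only [hσ0]
    simpa using (A.bilin_test x e).2
  set ω := ‖s0‖ with hω
  have hωpos : 0 < ω := norm_pos_iff.mpr hz
  set s : EE n := ω⁻¹ • s0 with hs
  have hs0s : s0 = ω • s := by rw [hs, smul_smul, mul_inv_cancel₀ hωpos.ne', one_smul]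
  have hsn : ‖s‖ = 1 := by
    rw [hs, norm_smul, norm_inv, norm_norm, inv_mul_cancel₀ hωpos.ne']
  have hen : ‖e‖ = 1 := (A.b x).orthonormal.1 j
  have hb0 : ∀ i, inner ℝ (A.b x i) s0 = σ i := by
    intro i
    simp [hs0, inner_sum, inner_smul_right, OrthonormalBasis.inner_eq_ite]
  have hsi : ∀ i, inner ℝ s (A.b x i) = ω⁻¹ * σ i := by
    intro i
    rw [real_inner_comm, hs, inner_smul_right, hb0]
  have hei : ∀ i, inner ℝ e (A.b x i) = if i = j then (1:ℝ) else 0 := by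
    intro i
    rw [he, OrthonormalBasis.inner_eq_ite]
    simp [eq_comm]
  have hes : inner ℝ e s = 0 := by
    rw [real_inner_comm, he, hsi, hσ, mul_zero]
  have hω2 : ω ^ 2 = ∑ i, σ i ^ 2 := by
    rw [hω, ← real_inner_self_eq_norm_sq]
    conv_lhs => rw [hs0, sum_inner]
    refine Finset.sum_congr rfl fun i _ => ?_
    rw [inner_smul_left, hb0]; simp [sq]
  -- derivative identities
  have ddlin : ∀ (g : EE n → ℝ) (y : EE n), ω * dd s g y = ∑ i, σ i * dd (A.b x i) g y := by
    intro g y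
    have : ω * dd s g y = dd s0 g y := by rw [hs0s]; simp [dd]
    rw [this, hs0]; simp [dd]
  have his : ∀ i, dd (A.b x i) (dd s u) x = ω⁻¹ * σ i * A.lam x i := by
    intro i
    have h1 : ω * dd (A.b x i) (dd s u) x = σ i * A.lam x i := by
      rw [dd_comm hu, ddlin]
      rw [Finset.sum_eq_single i]
      · rw [A.diag]; simp
      · intro k _ hk; rw [A.diag]; simp [hk]
      · simp
    field_simp; linarith
  have hess : dd e (dd s u) x = 0 := by rw [he, his, hσ]; simp
  have hss : ω ^ 2 * dd s (dd s u) x = ∑ i, σ i ^ 2 * A.lam x i := by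
    have : ω ^ 2 * dd s (dd s u) x = ω * (ω * dd s (dd s u) x) := by ring
    rw [this, ddlin, Finset.mul_sum]
    refine Finset.sum_congr rfl fun i _ => ?_
    rw [his]; field_simp
  -- test functions
  set α : Fin n → ℝ → ℝ := fun i t => (Real.cos (ω * t) + (-1)) * (if i = j then 1 else 0)
      + (-1) * (Real.sin (ω * t) * (ω⁻¹ * σ i)) with hα
  set β : Fin n → ℝ → ℝ := fun i t => Real.sin (ω * t) * (if i = j then 1 else 0)
      + (Real.cos (ω * t) + (-1)) * (ω⁻¹ * σ i) with hβ
  have jα : ∀ i, J2 (α i) 0 (-σ i) (-ω ^ 2 * (if i = j then 1 else 0)) := by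
    intro i
    refine ((((J2.cos ω).add (J2.const (-1))).mul (J2.const _)).add
      (((J2.sin ω).mul (J2.const _)).const_mul (-1))).congr ?_ ?_ ?_
    · ring
    · field_simp; ring
    · ring
  have jβ : ∀ i, J2 (β i) 0 (ω * (if i = j then 1 else 0)) (-ω * σ i) := by
    intro i
    refine (((J2.sin ω).mul (J2.const _)).add
      (((J2.cos ω).add (J2.const (-1))).mul (J2.const _))).congr ?_ ?_ ?_
    · ring
    · ring
    · field_simp; ring
  have sm : ∀ v w : EE n, ContDiff ℝ (⊤ : ℕ∞) (dd v (dd w u)) := fun v w =>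
    dd_smooth (dd_smooth hu _) _
  have jH : ∀ v w : EE n, J2 (fun t => dd v (dd w u) (x + t • e)) (dd v (dd w u) x)
      (dd e (dd v (dd w u)) x) (dd e (dd e (dd v (dd w u))) x) := fun v w => J2_line (sm v w) x e
  have c3 : ∀ v, dd e (dd v (dd e u)) = dd v (dd e (dd e u)) := fun v => by
    rw [dd_comm (dd_smooth hu e) e v]
  have c4 : dd e (dd e (dd s u)) = dd s (dd e (dd e u)) := by
    rw [dd_comm hu e s, dd_comm (dd_smooth hu e) e s]
  have hee : dd e (dd e u) x = A.lam x j := by rw [he, A.diag]; simp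
  have hej : ∀ i, dd (A.b x i) (dd e u) x = if i = j then A.lam x j else 0 := by
    intro i; rw [he, A.diag]; split_ifs with h
    · rw [h]
    · rfl
  have jtot : ∀ i, ∃ a b, J2 (fun t => dd (A.b x i + α i t • e + β i t • s)
      (dd (A.b x i + α i t • e + β i t • s) u) (x + t • e)) a b
      (dd e (dd e (dd (A.b x i) (dd (A.b x i) u))) x
      - (4 * σ i * dd (A.b x i) (dd e (dd e u)) x
        - 2 * σ i ^ 2 * (A.lam x j - A.lam x i))
      + (if i = j then 1 else 0) * (-2 * ω ^ 2 * A.lam x j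
        + 4 * (ω * dd s (dd e (dd e u)) x) + 2 * (ω ^ 2 * dd s (dd s u) x))) := by
    intro i
    have := ((((((jH (A.b x i) (A.b x i)).add (((jα i).mul (jH (A.b x i) e)).const_mul 2)).add
      (((jβ i).mul (jH (A.b x i) s)).const_mul 2)).add (((jα i).mul (jα i)).mul (jH e e))).add
      ((((jα i).mul (jβ i)).mul (jH e s)).const_mul 2)).add (((jβ i).mul (jβ i)).mul (jH s s)))
    simp only [dd2_expand hu]
    refine ⟨_, _, this.congr rfl rfl ?_⟩
    rw [c3, hej, his, hee, hess]
    by_cases hij : i = j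
    · subst hij
      rw [← he, c4]
      simp only [if_true, hσ]; ring
    · simp only [if_neg hij]
      field_simp; ring
  choose ja jb jtot using jtot
  have jsum := J2.sum Finset.univ (fun i => (jtot i).const_mul (A.phi x i))
  have hmin := jsum.localMin (by
    refine Filter.Eventually.of_forall fun t => ?_
    obtain ⟨R, hR⟩ := exists_rot e s hen hsn hes (Real.cos (ω * t)) (Real.sin (ω * t))
      (Real.cos_sq_add_sin_sq _)
    have hRb : ∀ i, ((A.b x).map R) i = A.b x i + α i t • e + β i t • s := by
      intro i
      rw [OrthonormalBasis.map_apply, hR, hei, hsi, hα, hβ]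
      congr 2
      · congr 1; ring
    have h1 := A.comp x (x + t • e) ((A.b x).map R)
    simp only [hRb] at h1
    have h0 : ∀ i, A.b x i + α i 0 • e + β i 0 • s = A.b x i := by
      intro i; simp [hα, hβ]
    simp only [h0, zero_smul, add_zero, A.diag, if_true]
    rw [A.euler]; exact h1)
  have h2 := hmin.2
  have hLe : A.L (dd e (dd e u)) x =
      ∑ i, A.phi x i * dd e (dd e (dd (A.b x i) (dd (A.b x i) u))) x := by
    unfold L
    refine Finset.sum_congr rfl fun i _ => ?_
    have c : ∀ (g : EE n → ℝ), ContDiff ℝ (⊤ : ℕ∞) g → dd e (dd (A.b x i) (dd (A.b x i) g)) =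
        dd (A.b x i) (dd (A.b x i) (dd e g)) := by
      intro g hg
      rw [dd_comm (dd_smooth hg _) e, dd_comm hg e]
    rw [c u hu, c _ (dd_smooth hu e)]
  rw [hLe]
  have hD : ω * dd s (dd e (dd e u)) x = ∑ i, σ i * dd (A.b x i) (dd e (dd e u)) x := ddlin _ _
  -- rewrite the sum
  have expand : (0:ℝ) ≤ ∑ i, (A.phi x i * dd e (dd e (dd (A.b x i) (dd (A.b x i) u))) x
      - A.phi x i * (4 * σ i * dd (A.b x i) (dd e (dd e u)) x
        - 2 * σ i ^ 2 * (A.lam x j - A.lam x i))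
      + A.phi x i * (if i = j then 1 else 0) * (-2 * ω ^ 2 * A.lam x j
        + 4 * (ω * dd s (dd e (dd e u)) x) + 2 * (ω ^ 2 * dd s (dd s u) x))) := by
    refine h2.trans (le_of_eq (Finset.sum_congr rfl fun i _ => ?_))
    ring
  rw [Finset.sum_add_distrib, Finset.sum_sub_distrib] at expand
  simp only [mul_ite, ite_mul, mul_one, mul_zero, zero_mul, Finset.sum_ite_eq', Finset.mem_univ, if_true] at expand
  rw [hss, hD, mul_assoc (-2:ℝ), hω2] at expand
  have fin : ∑ i, (A.phi x i - A.phi x j) * (4 * σ i * dd (A.b x i) (dd e (dd e u)) x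
        - 2 * σ i ^ 2 * (A.lam x j - A.lam x i)) =
      ∑ i, A.phi x i * (4 * σ i * dd (A.b x i) (dd e (dd e u)) x
        - 2 * σ i ^ 2 * (A.lam x j - A.lam x i)) -
      A.phi x j * (-2 * ((∑ i, σ i ^ 2) * A.lam x j) + 4 * (∑ i, σ i * dd (A.b x i) (dd e (dd e u)) x)
        + 2 * ∑ i, σ i ^ 2 * A.lam x i) := by
    simp only [Finset.mul_sum, Finset.sum_mul, ← Finset.sum_add_distrib, ← Finset.sum_sub_distrib]
    refine Finset.sum_congr rfl fun i _ => ?_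
    ring
  rw [fin]; linarith

end EllData


section misc
variable {n : ℕ}

lemma dd_mul {g h : EE n → ℝ} (hg : ContDiff ℝ (⊤ : ℕ∞) g)
    (hh : ContDiff ℝ (⊤ : ℕ∞) h) (v : EE n) :
    dd v (fun x => g x * h x) = fun x => dd v g x * h x + g x * dd v h x := by
  funext x
  have h1 := (hg.differentiable (by simp)) x
  have h2 := (hh.differentiable (by simp)) x
  simp [dd, fderiv_fun_mul h1 h2]; ring

lemma dd_comp_affine {g : EE n → ℝ} (hg : ContDiff ℝ (⊤ : ℕ∞) g) (x0 : EE n) (R : ℝ) (v : EE n) :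
    dd v (fun x => g (x0 + R • x)) = fun x => R * dd v g (x0 + R • x) := by
  funext x
  have h1 := ((hg.differentiable (by simp)) (x0 + R • x)).hasFDerivAt
  have h2 : HasFDerivAt (fun x : EE n => x0 + R • x) (R • ContinuousLinearMap.id ℝ (EE n)) x := by
    simpa using ((hasFDerivAt_id x).const_smul R).const_add x0
  have h3 := (h1.comp x h2).fderiv
  have h4 : (g ∘ fun x : EE n => x0 + R • x) = fun x => g (x0 + R • x) := rfl
  rw [h4] at h3
  simp [dd, h3]

lemma gradSq_basis {u : EE n → ℝ} (b : OrthonormalBasis (Fin n) ℝ (EE n))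
    (y : EE n) : ‖gradient u y‖ ^ 2 = ∑ k, dd (b k) u y ^ 2 := by
  rw [← b.sum_sq_inner_left (gradient u y)]
  refine Finset.sum_congr rfl fun k _ => ?_
  simp [gradient, dd, InnerProductSpace.toDual_symm_apply]

/-- Quadratic form of Hessian in an orthonormal basis diagonalizing at `x`. -/
lemma dd_sum_vec (ι : Type*) (s : Finset ι) (a : ι → ℝ) (v : ι → EE n) (g : EE n → ℝ) (x : EE n) :
    dd (∑ i ∈ s, a i • v i) g x = ∑ i ∈ s, a i * dd (v i) g x := by
  simp [dd]

lemma hess_cross_expand {g : EE n → ℝ} (hg : ContDiff ℝ (⊤ : ℕ∞) g)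
    (b : OrthonormalBasis (Fin n) ℝ (EE n)) (v x : EE n) :
    dd v (dd v g) x = ∑ i, ∑ j, inner ℝ (b i) v * (inner ℝ (b j) v * dd (b i) (dd (b j) g) x) := by
  have hv : v = ∑ i, inner ℝ (b i) v • b i := (b.sum_repr' v).symm
  have h1 : ∀ w, dd v (dd w g) x = ∑ i, inner ℝ (b i) v * dd (b i) (dd w g) x := by
    intro w
    conv_lhs => rw [hv]
    rw [dd_sum_vec]
  rw [h1]
  refine Finset.sum_congr rfl fun i _ => ?_
  rw [dd_comm hg, h1, Finset.mul_sum]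
  refine Finset.sum_congr rfl fun j _ => ?_
  rw [dd_comm hg]

end misc

namespace EllData
variable {n : ℕ} {N₁ : ℝ} {m : ℕ} {D₁ D₂ : ℝ} {u : EE n → ℝ}

lemma phi_le_tr (A : EllData n N₁ m D₁ D₂ u) (x : EE n) (i : Fin n) : A.phi x i ≤ A.tr x :=
  Finset.single_le_sum (f := A.phi x) (fun j _ => (A.pos x j).le) (Finset.mem_univ i)

lemma tr_pos [NeZero n] (A : EllData n N₁ m D₁ D₂ u) (x : EE n) : 0 < A.tr x :=
  lt_of_lt_of_le (A.pos x 0) (A.phi_le_tr x 0)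

lemma L_u (A : EllData n N₁ m D₁ D₂ u) (x : EE n) : A.L u x = 1 := by
  unfold L; simp only [A.diag, if_true]; exact A.euler x

lemma hess_diag (A : EllData n N₁ m D₁ D₂ u) (x v : EE n) :
    dd v (dd v u) x = ∑ i, A.lam x i * inner ℝ (A.b x i) v ^ 2 := by
  rw [hess_cross_expand A.smooth (A.b x) v x]
  refine Finset.sum_congr rfl fun i _ => ?_
  rw [Finset.sum_eq_single i]
  · rw [A.diag]; simp; ring
  · intro j _ hj; rw [A.diag]; simp [hj.symm]
  · simp

lemma sum_inner_sq (A : EllData n N₁ m D₁ D₂ u) (x v : EE n) :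
    ∑ i, inner ℝ (A.b x i) v ^ 2 = ‖v‖ ^ 2 := (A.b x).sum_sq_inner_right v

lemma norm_b (A : EllData n N₁ m D₁ D₂ u) (x : EE n) (i : Fin n) : ‖A.b x i‖ = 1 :=
  (A.b x).orthonormal.1 i

lemma trace_pos [NeZero n] (A : EllData n N₁ m D₁ D₂ u) (y : EE n)
    (b' : OrthonormalBasis (Fin n) ℝ (EE n)) : 0 < ∑ i, dd (b' i) (dd (b' i) u) y := by
  have h1 : ∀ k : Fin n, 1 ≤ ∑ i, A.phi y i * dd (b' (i + k)) (dd (b' (i + k)) u) y := by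
    intro k
    have := A.comp y y (b'.reindex (Equiv.addRight k).symm)
    simpa using this
  have h2 : (1:ℝ) ≤ ∑ i, A.phi y i * dd (b' (i + 0)) (dd (b' (i + 0)) u) y := h1 0
  have h3 : ∑ k : Fin n, ∑ i, A.phi y i * dd (b' (i + k)) (dd (b' (i + k)) u) y =
      A.tr y * ∑ i, dd (b' i) (dd (b' i) u) y := by
    rw [Finset.sum_comm]
    unfold tr
    rw [Finset.sum_mul]
    refine Finset.sum_congr rfl fun i _ => ?_
    rw [← Finset.mul_sum]
    congr 1
    exact Equiv.sum_comp (Equiv.addLeft i) (fun j => dd (b' j) (dd (b' j) u) y)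
  have h4 : 0 < ∑ k : Fin n, ∑ i, A.phi y i * dd (b' (i + k)) (dd (b' (i + k)) u) y :=
    Finset.sum_pos (fun k _ => lt_of_lt_of_le one_pos (h1 k)) Finset.univ_nonempty
  rw [h3] at h4
  exact (pos_iff_pos_of_mul_pos h4).mp (A.tr_pos y)

/-- rescaling -/
def scale (A : EllData n N₁ m D₁ D₂ u) (x0 : EE n) (R : ℝ) (hR : 0 < R) :
    EllData n N₁ m D₁ D₂ (fun x => R⁻¹ ^ 2 * u (x0 + R • x)) :=
  have hs : ContDiff ℝ (⊤ : ℕ∞) (fun x => u (x0 + R • x)) :=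
    A.smooth.comp (contDiff_const.add (contDiff_id.const_smul R))
  have h2 : ∀ v w x, dd v (dd w (fun x => R⁻¹ ^ 2 * u (x0 + R • x))) x
      = dd v (dd w u) (x0 + R • x) := by
    intro v w x
    rw [dd_const_mul hs, dd_const_mul (dd_smooth hs w), dd_comp_affine A.smooth]
    rw [dd_const_mul, dd_comp_affine (dd_smooth A.smooth w)]
    · field_simp
    · exact (dd_smooth A.smooth w).comp (contDiff_const.add (contDiff_id.const_smul R))
  { smooth := contDiff_const.mul hs
    b := fun x => A.b (x0 + R • x)
    lam := fun x => A.lam (x0 + R • x)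
    phi := fun x => A.phi (x0 + R • x)
    diag := by intro x i j; rw [h2]; exact A.diag _ i j
    pos := fun x i => A.pos _ i
    euler := fun x => A.euler _
    comp := by intro x y b'; simp only [h2]; exact A.comp _ _ b'
    condN := fun x => A.condN _
    condD := fun x => A.condD _ }

lemma scale_hess (A : EllData n N₁ m D₁ D₂ u) (x0 : EE n) (R : ℝ) (hR : 0 < R) (v w x : EE n) :
    dd v (dd w (fun x => R⁻¹ ^ 2 * u (x0 + R • x))) x = dd v (dd w u) (x0 + R • x) := by
  have hs : ContDiff ℝ (⊤ : ℕ∞) (fun x => u (x0 + R • x)) :=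
    A.smooth.comp (contDiff_const.add (contDiff_id.const_smul R))
  rw [dd_const_mul hs, dd_const_mul (dd_smooth hs w), dd_comp_affine A.smooth]
  rw [dd_const_mul, dd_comp_affine (dd_smooth A.smooth w)]
  · field_simp
  · exact (dd_smooth A.smooth w).comp (contDiff_const.add (contDiff_id.const_smul R))

end EllData

lemma compact_sublevel {n : ℕ} {u : EE n → ℝ} (hu : ContDiff ℝ (⊤ : ℕ∞) u) {c : ℝ} (hc : 0 < c)
    (hg : ∀ x, c * ‖x‖ ^ 2 - 1 ≤ u x) : IsCompact {x | u x ≤ 1} := by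
  refine Metric.isCompact_of_isClosed_isBounded (isClosed_le hu.continuous continuous_const) ?_
  refine (Metric.isBounded_closedBall (x := (0 : EE n)) (r := 2 / c + 1)).subset ?_
  intro x hx
  simp only [Set.mem_ofPred_eq] at hx
  have h1 := hg x
  have h2 : ‖x‖ ^ 2 ≤ 2 / c := by rw [le_div_iff₀ hc]; linarith
  simp only [Metric.mem_closedBall, dist_zero_right]
  nlinarith [sq_nonneg (‖x‖ - 1), norm_nonneg x]



lemma grad_alg_lam {lam p q G h ε γ : ℝ} (hG : 0 < G) (hh : 0 < h) (hγ : 1 ≤ γ)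
    (hε : 0 < ε) (h1 : 2 * (p * lam) / G + γ * (-p / h) + 2 * ε * q = 0)
    (hbig : 4 * ε * |q| * h < γ * |p|) : G * γ / (4 * h) ≤ lam := by
  have hp : 0 < |p| := by
    by_contra hc
    have : |p| = 0 := le_antisymm (not_lt.mp hc) (abs_nonneg p)
    rw [this] at hbig
    have : 0 ≤ 4 * ε * |q| * h := by positivity
    linarith
  have hp2 : 0 < p ^ 2 := by rw [← sq_abs]; positivity
  have e1 : 2 * p * lam * h = G * γ * p - 2 * ε * q * G * h := by
    field_simp at h1
    nlinarith [h1]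
  rw [div_le_iff₀ (by positivity)]
  have e2 : 2 * lam * h * p ^ 2 = G * γ * p ^ 2 - 2 * ε * (q * p) * G * h := by
    linear_combination p * e1
  have e3 : q * p ≤ |q| * |p| := by rw [← abs_mul]; exact le_abs_self _
  have e4 : 4 * ε * (q * p) * h ≤ γ * p ^ 2 := by
    rw [← sq_abs p]
    calc 4 * ε * (q * p) * h = (4 * ε * h) * (q * p) := by ring
      _ ≤ (4 * ε * h) * (|q| * |p|) := mul_le_mul_of_nonneg_left e3 (by positivity)
      _ = (4 * ε * |q| * h) * |p| := by ring
      _ ≤ (γ * |p|) * |p| := mul_le_mul_of_nonneg_right hbig.le hp.le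
      _ = _ := by ring
  have e5 : G * γ * p ^ 2 ≤ (lam * (4 * h)) * p ^ 2 := by
    have := mul_le_mul_of_nonneg_left e4 hG.le
    nlinarith
  exact le_of_mul_le_mul_right e5 hp2

lemma grad_alg {n : ℕ} (φ lam p q : Fin n → ℝ) {G h ε γ P D₁ D₂ : ℝ}
    (hφ : ∀ i, 0 < φ i) (hGp : G = ∑ i, p i ^ 2) (hG : 0 < G) (hh : 0 < h) (hγ : 1 ≤ γ)
    (hq : ∑ i, q i ^ 2 ≤ P) (hε : 0 < ε) (hεP : 96 * (ε * P) ≤ 1)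
    (h1 : ∀ i, 2 * (p i * lam i) / G + γ * (-p i / h) + 2 * ε * q i = 0)
    (h2 : 2 * ε * ∑ i, φ i ≤ γ / h + γ * ∑ i, φ i * (p i / h) ^ 2 +
      ∑ i, φ i * (γ * (p i / h) - 2 * ε * q i) ^ 2)
    (hD : ∀ i, D₁ < lam i → φ i * lam i ≤ D₂) (hD2 : 0 < D₂) (hbig : D₁ < G * γ / (4 * h)) :
    ε * ∑ i, φ i ≤ (γ + 12 * γ * D₂) / h := by
  have hqi : ∀ i, q i ^ 2 ≤ P := fun i =>
    (Finset.single_le_sum (f := fun i => q i ^ 2) (fun j _ => sq_nonneg _) (Finset.mem_univ i)).trans hq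
  have key : ∀ i, γ * (φ i * (p i / h) ^ 2) + φ i * (γ * (p i / h) - 2 * ε * q i) ^ 2 ≤
      ε * φ i + (12 * γ * D₂ / (G * h)) * p i ^ 2 := by
    intro i
    have hi := hφ i
    have a1 : (γ * (p i / h) - 2 * ε * q i) ^ 2 ≤ 2 * (γ * (p i / h)) ^ 2 + 8 * ε ^ 2 * q i ^ 2 := by
      nlinarith [sq_nonneg (γ * (p i / h) + 2 * ε * q i)]
    have a2 : 8 * ε ^ 2 * q i ^ 2 ≤ ε / 2 := by
      have : ε * (ε * q i ^ 2) ≤ ε * (ε * P) := by have := hqi i; gcongr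
      nlinarith
    have a3 : γ * (p i / h) ^ 2 ≤ γ ^ 2 * (p i / h) ^ 2 := by
      have : γ ≤ γ ^ 2 := by nlinarith
      gcongr
    have a4 : γ * (φ i * (p i / h) ^ 2) + φ i * (γ * (p i / h) - 2 * ε * q i) ^ 2 ≤
        φ i * (3 * (γ ^ 2 * (p i / h) ^ 2) + ε / 2) := by
      have := mul_le_mul_of_nonneg_left (add_le_add a3 (a1.trans (add_le_add le_rfl a2))) hi.le
      calc _ = φ i * (γ * (p i / h) ^ 2 + (γ * (p i / h) - 2 * ε * q i) ^ 2) := by ring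
        _ ≤ _ := this
        _ = _ := by ring
    refine a4.trans ?_
    by_cases hc : 4 * ε * |q i| * h < γ * |p i|
    · have hl := grad_alg_lam hG hh hγ hε (h1 i) hc
      have hd := hD i (lt_of_lt_of_le hbig hl)
      have hd' : φ i * (G * γ / (4 * h)) ≤ D₂ := (mul_le_mul_of_nonneg_left hl hi.le).trans hd
      have : φ i * (3 * (γ ^ 2 * (p i / h) ^ 2)) ≤ (12 * γ * D₂ / (G * h)) * p i ^ 2 := by
        have e : φ i * (3 * (γ ^ 2 * (p i / h) ^ 2)) =
            (φ i * (G * γ / (4 * h))) * (12 * γ / (G * h) * p i ^ 2) := by field_simp; ring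
        rw [e]
        calc _ ≤ D₂ * (12 * γ / (G * h) * p i ^ 2) := mul_le_mul_of_nonneg_right hd' (by positivity)
          _ = _ := by ring
      nlinarith
    · push Not at hc
      have b1 : γ * |p i| / h ≤ 4 * ε * |q i| := by rw [div_le_iff₀ hh]; exact hc
      have b2 : γ ^ 2 * (p i / h) ^ 2 ≤ 16 * ε ^ 2 * q i ^ 2 := by
        have : (γ * |p i| / h) ^ 2 ≤ (4 * ε * |q i|) ^ 2 := by
          have : 0 ≤ γ * |p i| / h := by positivity
          gcongr
        calc γ ^ 2 * (p i / h) ^ 2 = (γ * |p i| / h) ^ 2 := by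
              rw [div_pow, div_pow, mul_pow, sq_abs]; ring
          _ ≤ _ := this
          _ = _ := by rw [mul_pow, sq_abs]; ring
      have b3 : 48 * ε ^ 2 * q i ^ 2 ≤ ε / 2 := by
        have : ε * (ε * q i ^ 2) ≤ ε * (ε * P) := by have := hqi i; gcongr
        nlinarith
      have b4 : 0 ≤ (12 * γ * D₂ / (G * h)) * p i ^ 2 := by positivity
      have : φ i * (3 * (γ ^ 2 * (p i / h) ^ 2) + ε / 2) ≤ φ i * ε :=
        mul_le_mul_of_nonneg_left (by linarith) hi.le
      linarith
  have hs := Finset.sum_le_sum (fun i (_ : i ∈ Finset.univ) => key i)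
  rw [Finset.sum_add_distrib, Finset.sum_add_distrib, ← Finset.mul_sum, ← Finset.mul_sum,
    ← Finset.mul_sum, ← hGp] at hs
  have e : 12 * γ * D₂ / (G * h) * G = 12 * γ * D₂ / h := by field_simp
  rw [e] at hs
  rw [add_div]; linarith

set_option maxHeartbeats 1600000 in
theorem grad_bound (n : ℕ) [NeZero n] (N₁ : ℝ) (m : ℕ) (D₁ D₂ c : ℝ) (hN₁ : 0 < N₁)
    (hD₁ : 0 < D₁) (hD₂ : 0 < D₂) (hc : 0 < c) :
    ∃ K : ℝ, 0 < K ∧ ∀ (u : EE n → ℝ), EllData n N₁ m D₁ D₂ u →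
      (∀ x, c * ‖x‖ ^ 2 - 1 ≤ u x) → ∀ x, u x < 1 →
        ‖gradient u x‖ ^ 2 * (1 - u x) ^ (m + 1) ≤ K := by
  have hn0 : (0:ℝ) < n := by exact_mod_cast Nat.pos_of_ne_zero (NeZero.ne n)
  set P : ℝ := 2 / c with hP
  have hPpos : 0 < P := by positivity
  set ε : ℝ := 1 / (96 * P) with hε
  have hεpos : 0 < ε := by positivity
  have hεP : 96 * (ε * P) ≤ 1 := by rw [hε]; field_simp; rfl
  set γ : ℝ := ((m + 1 : ℕ) : ℝ) with hγ
  have hγ1 : 1 ≤ γ := by rw [hγ]; push_cast; linarith [Nat.cast_nonneg (α := ℝ) m]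
  set C₁ : ℝ := 2 + (γ + 12 * γ * D₂) / ε with hC₁
  have hC₁pos : 2 ≤ C₁ := by
    have : 0 ≤ (γ + 12 * γ * D₂) / ε := by positivity
    linarith
  set K0 : ℝ := 8 * D₁ * 2 ^ (m + 1) + 64 * ε ^ 2 * P * n * 2 ^ (m + 1) + 16 * (D₂ * (N₁ * C₁ ^ m)) with hK0
  have hK0pos : 0 < K0 := by positivity
  refine ⟨K0 * Real.exp (ε * P), by positivity, ?_⟩
  intro u A hg x hx
  have hu := A.smooth
  set h : EE n → ℝ := fun y => 1 - u y with hh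
  have hhs : ContDiff ℝ (⊤ : ℕ∞) h := contDiff_const.sub hu
  have hbd : ∀ y, u y ≤ 1 → ‖y‖ ^ 2 ≤ P := by
    intro y hy
    rw [hP, le_div_iff₀ hc]; linarith [hg y]
  have hh2 : ∀ y, h y ≤ 2 := by
    intro y
    have := hg y
    have : 0 ≤ c * ‖y‖ ^ 2 := by positivity
    simp only [hh]; linarith
  -- maximum
  set w : EE n → ℝ := fun y => ‖gradient u y‖ ^ 2 with hw
  have hwb : ∀ b : OrthonormalBasis (Fin n) ℝ (EE n), w = fun y => ∑ k, dd (b k) u y * dd (b k) u y := by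
    intro b; funext y; rw [hw]; simp only [gradSq_basis b y, sq]
  have hsq : ∀ v : EE n, ContDiff ℝ (⊤ : ℕ∞) (fun y => dd v u y * dd v u y) := fun v =>
    (dd_smooth hu v).mul (dd_smooth hu v)
  have hws : ContDiff ℝ (⊤ : ℕ∞) w := by
    rw [hwb (A.b x)]; exact ContDiff.sum fun k _ => hsq _
  set Φ : EE n → ℝ := fun y => w y * h y ^ (m + 1) * Real.exp (ε * ‖y‖ ^ 2) with hΦ
  have hΦc : Continuous Φ := by
    have := hws.continuous; have := hhs.continuous
    fun_prop
  obtain ⟨z, hz, hzmax⟩ := (compact_sublevel hu hc hg).exists_isMaxOn ⟨x, hx.le⟩ hΦc.continuousOn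
  have hz' : u z ≤ 1 := hz
  have hΦx : Φ x ≤ Φ z := hzmax (show u x ≤ 1 from hx.le)
  have hxlow : w x * h x ^ (m + 1) ≤ Φ x := by
    have h0 : 0 ≤ w x * h x ^ (m + 1) := by
      have : 0 < h x := by simp only [hh]; linarith
      have : 0 ≤ w x := by simp only [hw]; positivity
      positivity
    have h1 : 1 ≤ Real.exp (ε * ‖x‖ ^ 2) := Real.one_le_exp (by positivity)
    exact le_mul_of_one_le_right h0 h1
  suffices hkey : w z * h z ^ (m + 1) ≤ K0 by
    have h1 : Φ z ≤ K0 * Real.exp (ε * P) := by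
      have : Real.exp (ε * ‖z‖ ^ 2) ≤ Real.exp (ε * P) := by
        apply Real.exp_le_exp.mpr
        have := hbd z hz'
        gcongr
      exact mul_le_mul hkey this (Real.exp_pos _).le hK0pos.le
    exact hxlow.trans (hΦx.trans h1)
  have hhz0 : 0 ≤ h z := by simp only [hh]; linarith
  by_cases hpos : 0 < w z * h z ^ (m + 1)
  swap
  · linarith
  have hwz : 0 < w z := by
    rcases lt_or_eq_of_le (show 0 ≤ w z by simp only [hw]; positivity) with h1 | h1
    · exact h1
    · rw [← h1, zero_mul] at hpos; exact absurd hpos (lt_irrefl _)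
  have hhz : 0 < h z := by
    rcases lt_or_eq_of_le hhz0 with h1 | h1
    · exact h1
    · rw [← h1, zero_pow (by omega), mul_zero] at hpos; exact absurd hpos (lt_irrefl _)
  have hmax : IsLocalMax Φ z := by
    have : ∀ᶠ y in nhds z, 0 < h y := hhs.continuous.continuousAt.eventually (lt_mem_nhds hhz)
    filter_upwards [this] with y hy
    exact hzmax (show u y ≤ 1 by simp only [hh] at hy; linarith)
  have test := fun i => max_test hws hhs (m + 1) ε hmax hwz hhz (A.b z i)
  set p : Fin n → ℝ := fun i => dd (A.b z i) u z with hp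
  set q : Fin n → ℝ := fun i => inner ℝ z (A.b z i) with hq
  have hGp : w z = ∑ i, p i ^ 2 := gradSq_basis (A.b z) z
  have dh1 : ∀ v, dd v h = fun y => - dd v u y := fun v => dd_const_sub 1 v
  have dh2 : ∀ v, dd v (dd v h) z = - dd v (dd v u) z := by
    intro v; rw [dh1, dd_neg]
  have dw1 : ∀ v, dd v w = fun y => ∑ k, 2 * (dd (A.b z k) u y * dd v (dd (A.b z k) u) y) := by
    intro v
    rw [hwb (A.b z), dd_sum _ (fun k => hsq _)]
    funext y
    refine Finset.sum_congr rfl fun k _ => ?_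
    rw [dd_mul (dd_smooth hu _) (dd_smooth hu _)]; ring
  have dw1z : ∀ i, dd (A.b z i) w z = 2 * (p i * A.lam z i) := by
    intro i
    rw [dw1]
    simp only [A.diag]
    rw [Finset.sum_eq_single i]
    · simp [hp]
    · intro k _ hk; simp [hk.symm]
    · simp
  have dw2 : ∀ i, dd (A.b z i) (dd (A.b z i) w) z = 2 * A.lam z i ^ 2 +
      ∑ k, 2 * (p k * dd (A.b z i) (dd (A.b z i) (dd (A.b z k) u)) z) := by
    intro i
    rw [dw1]
    have e1 : ∀ k, ContDiff ℝ (⊤ : ℕ∞) (fun y => dd (A.b z k) u y * dd (A.b z i) (dd (A.b z k) u) y) :=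
      fun k => (dd_smooth hu _).mul (dd_smooth (dd_smooth hu _) _)
    rw [dd_sum _ (fun k => contDiff_const.mul (e1 k))]
    have e2 : ∀ k, dd (A.b z i) (fun y => 2 * (dd (A.b z k) u y * dd (A.b z i) (dd (A.b z k) u) y)) z =
        2 * (dd (A.b z i) (dd (A.b z k) u) z * dd (A.b z i) (dd (A.b z k) u) z) +
        2 * (p k * dd (A.b z i) (dd (A.b z i) (dd (A.b z k) u)) z) := by
      intro k
      rw [dd_const_mul (e1 k), dd_mul (dd_smooth hu _) (dd_smooth (dd_smooth hu _) _)]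
      simp only [hp]; ring
    simp only [e2]
    rw [Finset.sum_add_distrib]
    congr 1
    rw [Finset.sum_eq_single i]
    · rw [A.diag]; simp; ring
    · intro k _ hk; rw [A.diag]; simp [hk.symm]
    · simp
  have hLw : ∑ i, A.phi z i * dd (A.b z i) (dd (A.b z i) w) z = ∑ i, A.phi z i * (2 * A.lam z i ^ 2) := by
    simp only [dw2, mul_add, Finset.sum_add_distrib]
    have : ∑ i, A.phi z i * ∑ k, 2 * (p k * dd (A.b z i) (dd (A.b z i) (dd (A.b z k) u)) z) = 0 := by
      simp only [Finset.mul_sum]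
      rw [Finset.sum_comm]
      apply Finset.sum_eq_zero
      intro k _
      have := (A.bilin_test z (A.b z k)).1
      unfold EllData.L at this
      calc _ = 2 * p k * ∑ i, A.phi z i * dd (A.b z i) (dd (A.b z i) (dd (A.b z k) u)) z := by
            rw [Finset.mul_sum]; refine Finset.sum_congr rfl fun i _ => ?_; ring
        _ = 0 := by rw [this, mul_zero]
    rw [this, add_zero]
  set G := w z with hGdef
  set H := h z with hHdef
  have f1 : ∀ i, 2 * (p i * A.lam z i) / G + γ * (-p i / H) + 2 * ε * q i = 0 := by
    intro i
    have := (test i).1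
    rw [dw1z, dh1] at this
    exact this
  have f2 : 2 * ε * ∑ i, A.phi z i ≤ γ / H + γ * ∑ i, A.phi z i * (p i / H) ^ 2 +
      ∑ i, A.phi z i * (γ * (p i / H) - 2 * ε * q i) ^ 2 := by
    have e1 : ∀ i, A.phi z i * (dd (A.b z i) (dd (A.b z i) w) z) / G
        - A.phi z i * (γ * (p i / H) - 2 * ε * q i) ^ 2
        + γ * (-(A.phi z i * A.lam z i) / H - A.phi z i * (p i / H) ^ 2) + 2 * ε * A.phi z i ≤ 0 := by
      intro i
      have t2 := (test i).2
      have t1 := (test i).1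
      rw [dh1] at t1
      have t3 : dd (A.b z i) w z / G = γ * (p i / H) - 2 * ε * q i := by
        have : dd (A.b z i) w z / G + γ * (-p i / H) + 2 * ε * q i = 0 := t1
        rw [neg_div] at this; linarith
      rw [t3, dh2, dh1, A.norm_b, A.diag] at t2
      simp only [if_true] at t2
      have := mul_nonpos_of_nonneg_of_nonpos (A.pos z i).le t2
      calc _ = A.phi z i * (dd (A.b z i) (dd (A.b z i) w) z / G - (γ * (p i / H) - 2 * ε * q i) ^ 2 +
            γ * (-A.lam z i / H - (-p i / H) ^ 2) + 2 * ε * 1 ^ 2) := by ring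
        _ ≤ 0 := this
    have e2 := Finset.sum_nonpos (fun i (_ : i ∈ Finset.univ) => e1 i)
    rw [Finset.sum_add_distrib, Finset.sum_add_distrib, Finset.sum_sub_distrib, ← Finset.sum_div,
      hLw, ← Finset.mul_sum, Finset.sum_sub_distrib, ← Finset.sum_div, Finset.sum_neg_distrib, A.euler,
      ← Finset.mul_sum] at e2
    have e3 : 0 ≤ (∑ i, A.phi z i * (2 * A.lam z i ^ 2)) / G := by
      apply div_nonneg _ hwz.le
      refine Finset.sum_nonneg fun i _ => ?_
      have := A.pos z i
      positivity
    have e4 : γ * (-1 / H - ∑ i, A.phi z i * (p i / H) ^ 2) =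
      -(γ / H) - γ * ∑ i, A.phi z i * (p i / H) ^ 2 := by ring
    rw [e4] at e2
    linarith
  have hqP : ∑ i, q i ^ 2 ≤ P := by
    have := (A.b z).sum_sq_inner_left z
    simp only [hq]; rw [this]; exact hbd z hz'
  have hH2 : H ≤ 2 := hh2 z
  have hHp : H ^ (m + 1) ≤ 2 ^ (m + 1) := by gcongr
  have hCN : 0 ≤ 16 * (D₂ * (N₁ * C₁ ^ m)) := by positivity
  by_cases hbig : D₁ < G * γ / (4 * H)
  swap
  · have : G ≤ 8 * D₁ := by
      have h1 := not_lt.mp hbig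
      rw [div_le_iff₀ (by positivity)] at h1
      nlinarith
    have h3 : G * H ^ (m + 1) ≤ 8 * D₁ * 2 ^ (m + 1) := by gcongr
    have : 0 ≤ 64 * ε ^ 2 * P * n * 2 ^ (m + 1) := by positivity
    linarith
  have hT := grad_alg (A.phi z) (A.lam z) p q (A.pos z) hGp hwz hhz hγ1 hqP hεpos hεP f1 f2
    (A.condD z) hD₂ hbig
  have hTC : ∑ i, A.phi z i ≤ C₁ / H := by
    have h1 : ∑ i, A.phi z i ≤ (γ + 12 * γ * D₂) / ε / H := by
      rw [div_div, mul_comm ε H, ← div_div, le_div_iff₀ hεpos]; linarith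
    refine h1.trans ?_
    gcongr
    linarith
  have hC1 : 1 ≤ C₁ / H := by rw [le_div_iff₀ hhz]; linarith
  have hN := A.condN z (C₁ / H) hC1 hTC
  -- choose largest component
  obtain ⟨i0, hi0⟩ : ∃ i, G / n ≤ p i ^ 2 := by
    by_contra hcon
    push Not at hcon
    have : ∑ i, p i ^ 2 < ∑ i : Fin n, G / n := Finset.sum_lt_sum_of_nonempty Finset.univ_nonempty
      (fun i _ => hcon i)
    rw [← hGp] at this
    simp only [Finset.sum_const, Finset.card_univ, Fintype.card_fin, nsmul_eq_mul] at this
    rw [mul_div_cancel₀ _ hn0.ne'] at this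
    exact lt_irrefl _ this
  by_cases hcl : 4 * ε * |q i0| * H < γ * |p i0|
  · have hl := grad_alg_lam hwz hhz hγ1 hεpos (f1 i0) hcl
    have hd := A.condD z i0 (lt_of_lt_of_le hbig hl)
    have hd' : A.phi z i0 * (G * γ / (4 * H)) ≤ D₂ :=
      (mul_le_mul_of_nonneg_left hl (A.pos z i0).le).trans hd
    have h1 := hN i0
    have h2 : G * γ / (4 * H) ≤ N₁ * (C₁ / H) ^ m * D₂ := by
      calc G * γ / (4 * H) ≤ (N₁ * (C₁ / H) ^ m * A.phi z i0) * (G * γ / (4 * H)) :=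
            le_mul_of_one_le_left (by positivity) h1
        _ = N₁ * (C₁ / H) ^ m * (A.phi z i0 * (G * γ / (4 * H))) := by ring
        _ ≤ _ := mul_le_mul_of_nonneg_left hd' (by positivity)
    have h3 : G * H ^ (m + 1) ≤ 4 * H ^ 2 * (D₂ * (N₁ * C₁ ^ m)) := by
      have h4 : G * γ / (4 * H) * (4 * H * H ^ (m + 1)) ≤ N₁ * (C₁ / H) ^ m * D₂ * (4 * H * H ^ (m + 1)) :=
        mul_le_mul_of_nonneg_right h2 (by positivity)
      have e1 : G * γ / (4 * H) * (4 * H * H ^ (m + 1)) = γ * (G * H ^ (m + 1)) := by field_simp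
      have e2 : N₁ * (C₁ / H) ^ m * D₂ * (4 * H * H ^ (m + 1)) = 4 * H ^ 2 * (D₂ * (N₁ * C₁ ^ m)) := by
        rw [div_pow]; field_simp; ring
      rw [e1, e2] at h4
      have : G * H ^ (m + 1) ≤ γ * (G * H ^ (m + 1)) := le_mul_of_one_le_left (by positivity) hγ1
      linarith
    have h5 : 4 * H ^ 2 * (D₂ * (N₁ * C₁ ^ m)) ≤ 16 * (D₂ * (N₁ * C₁ ^ m)) := by
      have : 4 * H ^ 2 ≤ 16 := by nlinarith
      exact mul_le_mul_of_nonneg_right this (by positivity)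
    have : 0 ≤ 64 * ε ^ 2 * P * n * 2 ^ (m + 1) := by positivity
    have : 0 ≤ 8 * D₁ * 2 ^ (m + 1) := by positivity
    linarith
  · push Not at hcl
    have hqi : q i0 ^ 2 ≤ P :=
      (Finset.single_le_sum (f := fun i => q i ^ 2) (fun j _ => sq_nonneg _)
        (Finset.mem_univ i0)).trans hqP
    have h1 : p i0 ^ 2 ≤ 64 * ε ^ 2 * P := by
      have h2 : |p i0| ≤ 8 * ε * |q i0| := by
        calc |p i0| ≤ γ * |p i0| := le_mul_of_one_le_left (abs_nonneg _) hγ1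
          _ ≤ 4 * ε * |q i0| * H := hcl
          _ ≤ 4 * ε * |q i0| * 2 := by gcongr
          _ = _ := by ring
      rw [← sq_abs]
      calc |p i0| ^ 2 ≤ (8 * ε * |q i0|) ^ 2 := by gcongr
        _ = 64 * ε ^ 2 * q i0 ^ 2 := by rw [mul_pow, sq_abs]; ring
        _ ≤ _ := by gcongr
    have h2 : G ≤ 64 * ε ^ 2 * P * n := by
      rw [← div_le_iff₀ hn0]; linarith
    have h3 : G * H ^ (m + 1) ≤ 64 * ε ^ 2 * P * n * 2 ^ (m + 1) := by gcongr
    have : 0 ≤ 8 * D₁ * 2 ^ (m + 1) := by positivity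
    linarith



namespace EllData
variable {n : ℕ} {N₁ : ℝ} {m : ℕ} {D₁ D₂ : ℝ} {u : EE n → ℝ}

lemma neg_bound (A : EllData n N₁ m D₁ D₂ u) (hD₁ : 0 < D₁) (hD₂ : 0 < D₂) (x : EE n) (i : Fin n) :
    A.phi x i * (- A.lam x i) ≤ n * D₂ + D₁ * A.tr x := by
  have h1 : ∀ k, A.phi x k * A.lam x k ≤ D₂ + D₁ * A.phi x k := by
    intro k
    have hp := A.pos x k
    by_cases hk : D₁ < A.lam x k
    · have := A.condD x k hk
      have : 0 ≤ D₁ * A.phi x k := by positivity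
      linarith
    · have : A.phi x k * A.lam x k ≤ A.phi x k * D₁ := mul_le_mul_of_nonneg_left (not_lt.mp hk) hp.le
      linarith
  have h2 : ∑ k, (D₂ + D₁ * A.phi x k) = n * D₂ + D₁ * A.tr x := by
    rw [Finset.sum_add_distrib, ← Finset.mul_sum]; simp [tr]
  have h3 := A.euler x
  have h4 : ∑ k, (D₂ + D₁ * A.phi x k - A.phi x k * A.lam x k) = n * D₂ + D₁ * A.tr x - 1 := by
    rw [Finset.sum_sub_distrib, h2, h3]
  have h5 : D₂ + D₁ * A.phi x i - A.phi x i * A.lam x i ≤ n * D₂ + D₁ * A.tr x - 1 := by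
    rw [← h4]
    exact Finset.single_le_sum (f := fun k => D₂ + D₁ * A.phi x k - A.phi x k * A.lam x k)
      (fun k _ => by linarith [h1 k]) (Finset.mem_univ i)
  have : 0 ≤ D₁ * A.phi x i := by have := A.pos x i; positivity
  linarith

/-- algebraic core of the second derivative estimate -/
lemma hess_core [NeZero n] (A : EllData n N₁ m D₁ D₂ u) (hD₁ : 0 < D₁) (hD₂ : 0 < D₂) (z : EE n) (j : Fin n)
    (hlam : D₁ < A.lam z j) {h ε β P : ℝ} (hh : 0 < h) (hβ : 8 ≤ β) (hε : 0 < ε) (hεP : 96 * (ε * P) ≤ 1)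
    (p q : Fin n → ℝ) (hq : ∑ i, q i ^ 2 ≤ P)
    (h1 : ∀ i, dd (A.b z i) (dd (A.b z j) (dd (A.b z j) u)) z / A.lam z j = β * (p i / h) - 2 * ε * q i)
    (h2 : A.L (dd (A.b z j) (dd (A.b z j) u)) z / A.lam z j
      - ∑ i, A.phi z i * (β * (p i / h) - 2 * ε * q i) ^ 2
      - β / h - β * ∑ i, A.phi z i * (p i / h) ^ 2 + 2 * ε * A.tr z ≤ 0) :
    ε * A.tr z ≤ β / h + 5 / A.lam z j * (n * D₂ + D₁ * A.tr z)
       * ∑ i, (β * (p i / h) - 2 * ε * q i) ^ 2 - ε / 2 * A.tr z := by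
  set g : Fin n → ℝ := fun i => β * (p i / h) - 2 * ε * q i with hg
  set l := A.lam z j with hl
  have hl0 : 0 < l := hD₁.trans hlam
  set Q : ℝ := n * D₂ + D₁ * A.tr z with hQ
  have hn1 : (1:ℝ) ≤ n := by exact_mod_cast Nat.one_le_iff_ne_zero.mpr (NeZero.ne n)
  have htr := A.tr_pos z
  have hQ0 : 0 < Q := by positivity
  have hQD : D₂ ≤ Q := by
    have : D₂ ≤ n * D₂ := le_mul_of_one_le_left hD₂.le hn1
    have : 0 ≤ D₁ * A.tr z := by positivity
    linarith
  have hφj : A.phi z j * l ≤ Q := (A.condD z j hlam).trans hQD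
  classical
  let good : Fin n → Prop := fun i => i ≠ j ∧ -l / 3 ≤ A.lam z i ∧ A.phi z j < A.phi z i
  let σ : Fin n → ℝ := fun i => if good i then 3 / 4 * g i else 0
  have hσj : σ j = 0 := by simp [σ, good]
  have rot := A.rotation z j σ hσj
  have rot' : ∑ i, (if good i then 3 / 2 * ((A.phi z i - A.phi z j) * g i ^ 2) else 0) * l
      ≤ A.L (dd (A.b z j) (dd (A.b z j) u)) z := by
    refine le_trans (Finset.sum_le_sum fun i _ => ?_) rot
    have e : dd (A.b z i) (dd (A.b z j) (dd (A.b z j) u)) z = g i * l := by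
      have : g i = _ := (h1 i).symm
      rw [this]; field_simp
    rw [e]
    by_cases hgd : good i
    · simp only [σ, if_pos hgd]
      obtain ⟨_, k1, k2⟩ := hgd
      have k3 : l - A.lam z i ≤ 4 / 3 * l := by linarith
      have k4 : 0 < A.phi z i - A.phi z j := by linarith
      calc 3 / 2 * ((A.phi z i - A.phi z j) * g i ^ 2) * l
          = (A.phi z i - A.phi z j) * (3 * g i ^ 2 * l - 2 * (3 / 4 * g i) ^ 2 * (4 / 3 * l)) := by ring
        _ ≤ (A.phi z i - A.phi z j) * (3 * g i ^ 2 * l - 2 * (3 / 4 * g i) ^ 2 * (l - A.lam z i)) := by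
            gcongr
        _ = _ := by ring
    · simp only [σ, if_neg hgd]; simp
  rw [← Finset.sum_mul, ← le_div_iff₀ hl0] at rot'
  have per : ∀ i, A.phi z i * g i ^ 2 + β * (A.phi z i * (p i / h) ^ 2)
      - (if good i then 3 / 2 * ((A.phi z i - A.phi z j) * g i ^ 2) else 0) ≤
      5 / l * Q * g i ^ 2 + ε / 2 * A.phi z i := by
    intro i
    have hp := A.pos z i
    have a1 : β * (p i / h) ^ 2 ≤ g i ^ 2 / 4 + ε ^ 2 * q i ^ 2 := by
      have e : β * (p i / h) = g i + 2 * ε * q i := by simp only [hg]; ring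
      have e2 : (β * (p i / h)) ^ 2 ≤ 2 * g i ^ 2 + 8 * ε ^ 2 * q i ^ 2 := by
        rw [e]; nlinarith [sq_nonneg (g i - 2 * ε * q i)]
      have e3 : 8 * (β * (p i / h) ^ 2) ≤ (β * (p i / h)) ^ 2 := by
        have : 8 * (β * (p i / h) ^ 2) ≤ β * (β * (p i / h) ^ 2) :=
          mul_le_mul_of_nonneg_right hβ (by positivity)
        calc _ ≤ _ := this
          _ = _ := by ring
      linarith
    have a2 : ε ^ 2 * q i ^ 2 ≤ ε / 2 := by
      have hqi : q i ^ 2 ≤ P := (Finset.single_le_sum (f := fun i => q i ^ 2) (fun j _ => sq_nonneg _)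
        (Finset.mem_univ i)).trans hq
      have : ε * (ε * q i ^ 2) ≤ ε * (ε * P) := by gcongr
      have h0 : 0 ≤ ε * P := mul_nonneg hε.le ((sq_nonneg _).trans hqi)
      nlinarith
    have a3 : A.phi z i * g i ^ 2 + β * (A.phi z i * (p i / h) ^ 2) ≤
        5 / 4 * (A.phi z i * g i ^ 2) + ε / 2 * A.phi z i := by
      have := mul_le_mul_of_nonneg_left (a1.trans (add_le_add le_rfl a2)) hp.le
      linarith
    have key : ∀ t, t * l ≤ 3 * Q → 3 / 2 * (t * g i ^ 2) ≤ 5 / l * Q * g i ^ 2 := by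
      intro t ht
      have : t ≤ 3 * Q / l := by rw [le_div_iff₀ hl0]; exact ht
      have h3 : 3 / 2 * t ≤ 5 / l * Q := by
        calc 3 / 2 * t ≤ 3 / 2 * (3 * Q / l) := by gcongr
          _ = (9 / 2) * (Q / l) := by ring
          _ ≤ 5 * (Q / l) := by gcongr; norm_num
          _ = _ := by ring
      calc _ = (3 / 2 * t) * g i ^ 2 := by ring
        _ ≤ _ := mul_le_mul_of_nonneg_right h3 (sq_nonneg _)
    have hgi : 0 ≤ A.phi z i * g i ^ 2 := by positivity
    by_cases hgd : good i
    · simp only [if_pos hgd]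
      have := key (A.phi z j) (by linarith)
      nlinarith
    · simp only [if_neg hgd, sub_zero]
      have hb : A.phi z i * l ≤ 3 * Q := by
        simp only [good, not_and_or, not_lt, not_le, not_not] at hgd
        rcases hgd with hgd | hgd | hgd
        · rw [hgd]; linarith
        · have := A.neg_bound hD₁ hD₂ z i
          have h3 : A.phi z i * l ≤ A.phi z i * (3 * (-A.lam z i)) :=
            mul_le_mul_of_nonneg_left (by linarith) hp.le
          have h4 : A.phi z i * (3 * (-A.lam z i)) = 3 * (A.phi z i * (-A.lam z i)) := by ring
          linarith
        · have : A.phi z i * l ≤ A.phi z j * l := mul_le_mul_of_nonneg_right hgd hl0.le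
          linarith
      have := key _ hb
      linarith
  have hs := Finset.sum_le_sum (fun i (_ : i ∈ Finset.univ) => per i)
  rw [Finset.sum_sub_distrib, Finset.sum_add_distrib, Finset.sum_add_distrib, ← Finset.mul_sum,
    ← Finset.mul_sum, ← Finset.mul_sum] at hs
  have htr' : ∑ i, A.phi z i = A.tr z := rfl
  rw [htr'] at hs
  have h2' : A.L (dd (A.b z j) (dd (A.b z j) u)) z / l
      - ∑ i, A.phi z i * g i ^ 2
      - β / h - β * ∑ i, A.phi z i * (p i / h) ^ 2 + 2 * ε * A.tr z ≤ 0 := h2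
  linarith

end EllData

lemma hess_continuous {n : ℕ} {u : EE n → ℝ} (hu : ContDiff ℝ (⊤ : ℕ∞) u) :
    Continuous (fun p : EE n × EE n => dd p.2 (dd p.2 u) p.1) := by
  simp only [dd_dd_eq hu]
  have h1 : ContDiff ℝ (⊤ : ℕ∞) (fderiv ℝ u) := hu.fderiv_right (by simp)
  have h2 : Continuous (fderiv ℝ (fderiv ℝ u)) := h1.continuous_fderiv (by simp)
  exact ((h2.comp continuous_fst).clm_apply continuous_snd).clm_apply continuous_snd

set_option maxHeartbeats 1600000 in
theorem hess_bound (n : ℕ) [NeZero n] (N₁ : ℝ) (m : ℕ) (D₁ D₂ c : ℝ) (hN₁ : 0 < N₁)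
    (hD₁ : 0 < D₁) (hD₂ : 0 < D₂) (hc : 0 < c) :
    ∃ K : ℝ, 0 < K ∧ ∀ (u : EE n → ℝ), EllData n N₁ m D₁ D₂ u →
      (∀ x, c * ‖x‖ ^ 2 - 1 ≤ u x) → ∀ x, u x < 1 → ∀ e, ‖e‖ = 1 →
        dd e (dd e u) x * (1 - u x) ^ (m + 11) ≤ K := by
  obtain ⟨Kg, hKg, hgrad⟩ := grad_bound n N₁ m D₁ D₂ c hN₁ hD₁ hD₂ hc
  have hn0 : (0:ℝ) < n := by exact_mod_cast Nat.pos_of_ne_zero (NeZero.ne n)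
  set P : ℝ := 2 / c with hP
  have hPpos : 0 < P := by positivity
  set ε : ℝ := 1 / (96 * P) with hε
  have hεpos : 0 < ε := by positivity
  have hεP : 96 * (ε * P) ≤ 1 := by rw [hε]; field_simp; rfl
  set β : ℝ := ((m + 11 : ℕ) : ℝ) with hβ
  have hβ1 : 8 ≤ β := by rw [hβ]; push_cast; linarith [Nat.cast_nonneg (α := ℝ) m]
  set K₃ : ℝ := 2 * β ^ 2 * Kg + 8 * ε ^ 2 * P * 2 ^ (m + 3) with hK₃
  have hK₃pos : 0 < K₃ := by positivity
  set K₂ : ℝ := 10 * D₁ * K₃ / ε with hK₂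
  have hK₂pos : 0 < K₂ := by positivity
  set C₁ : ℝ := 2 + β / ε + n * D₂ / D₁ with hC₁
  have hC₁pos : 2 ≤ C₁ := by
    have : 0 ≤ β / ε := by positivity
    have : 0 ≤ n * D₂ / D₁ := by positivity
    linarith
  set K0 : ℝ := D₁ * 2 ^ (m + 11) + K₂ * 2 ^ 8 + D₂ * N₁ * C₁ ^ m * 2 ^ 11 with hK0
  have hK0pos : 0 < K0 := by positivity
  refine ⟨K0 * Real.exp (ε * P), by positivity, ?_⟩
  intro u A hg x hx e he
  have hu := A.smooth
  have hgrad' := hgrad u A hg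
  set h : EE n → ℝ := fun y => 1 - u y with hh
  have hhs : ContDiff ℝ (⊤ : ℕ∞) h := contDiff_const.sub hu
  have hbd : ∀ y, u y ≤ 1 → ‖y‖ ^ 2 ≤ P := by
    intro y hy
    rw [hP, le_div_iff₀ hc]; linarith [hg y]
  have hh2 : ∀ y, h y ≤ 2 := by
    intro y
    have := hg y
    have : 0 ≤ c * ‖y‖ ^ 2 := by positivity
    simp only [hh]; linarith
  set Φ : EE n × EE n → ℝ := fun p => dd p.2 (dd p.2 u) p.1 * h p.1 ^ (m + 11) * Real.exp (ε * ‖p.1‖ ^ 2) with hΦ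
  have hΦc : Continuous Φ := by
    have := hess_continuous hu; have := hhs.continuous
    fun_prop
  obtain ⟨⟨z, e'⟩, hz, hzmax⟩ := ((compact_sublevel hu hc hg).prod (isCompact_sphere (0 : EE n) 1)).exists_isMaxOn
    ⟨(x, e), ⟨hx.le, by simpa using he⟩⟩ hΦc.continuousOn
  have hz' : u z ≤ 1 := hz.1
  have he' : ‖e'‖ = 1 := by simpa using hz.2
  have hmaxall : ∀ y v, u y ≤ 1 → ‖v‖ = 1 → Φ (y, v) ≤ Φ (z, e') := by
    intro y v hy hv
    exact hzmax (show (y, v) ∈ _ from ⟨hy, by simpa using hv⟩)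
  by_cases hxpos : 0 < dd e (dd e u) x
  swap
  · have h0 : 0 < 1 - u x := by linarith
    have : dd e (dd e u) x * (1 - u x) ^ (m + 11) ≤ 0 :=
      mul_nonpos_of_nonpos_of_nonneg (not_lt.mp hxpos) (by positivity)
    have : 0 ≤ K0 * Real.exp (ε * P) := by positivity
    linarith
  have hhx : 0 < h x := by simp only [hh]; linarith
  have hxlow : dd e (dd e u) x * h x ^ (m + 11) ≤ Φ (x, e) :=
    le_mul_of_one_le_right (by positivity) (Real.one_le_exp (by positivity))
  have hΦpos : 0 < Φ (z, e') := lt_of_lt_of_le (by positivity) (hxlow.trans (hmaxall x e hx.le he))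
  have hhz0 : 0 ≤ h z := by simp only [hh]; linarith
  have hhz : 0 < h z := by
    rcases lt_or_eq_of_le hhz0 with h1 | h1
    · exact h1
    · simp only [hΦ, ← h1] at hΦpos
      rw [zero_pow (by omega), mul_zero, zero_mul] at hΦpos; exact absurd hΦpos (lt_irrefl _)
  -- max eigenvalue
  obtain ⟨j, -, hj⟩ := Finset.exists_max_image (Finset.univ : Finset (Fin n)) (A.lam z) Finset.univ_nonempty
  have hle : dd e' (dd e' u) z ≤ A.lam z j := by
    rw [A.hess_diag]
    calc ∑ i, A.lam z i * inner ℝ (A.b z i) e' ^ 2 ≤ ∑ i, A.lam z j * inner ℝ (A.b z i) e' ^ 2 :=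
          Finset.sum_le_sum fun i hi => mul_le_mul_of_nonneg_right (hj i hi) (sq_nonneg _)
      _ = A.lam z j := by rw [← Finset.mul_sum, A.sum_inner_sq, he']; ring
  have hlamz : dd (A.b z j) (dd (A.b z j) u) z = A.lam z j := by rw [A.diag]; simp
  have hΦle : Φ (z, e') ≤ Φ (z, A.b z j) := by
    simp only [hΦ]
    rw [hlamz]
    gcongr
  have hl0 : 0 < A.lam z j := by
    have h1 : 0 < Φ (z, A.b z j) := hΦpos.trans_le hΦle
    simp only [hΦ, hlamz] at h1
    by_contra hcon
    have : A.lam z j * h z ^ (m + 11) * Real.exp (ε * ‖z‖ ^ 2) ≤ 0 := by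
      rw [mul_assoc]
      exact mul_nonpos_of_nonpos_of_nonneg (not_lt.mp hcon) (by positivity)
    linarith
  suffices hkey : A.lam z j * h z ^ (m + 11) ≤ K0 by
    have h1 : Φ (z, A.b z j) ≤ K0 * Real.exp (ε * P) := by
      have : Real.exp (ε * ‖z‖ ^ 2) ≤ Real.exp (ε * P) := by
        apply Real.exp_le_exp.mpr
        have := hbd z hz'
        gcongr
      simp only [hΦ, hlamz]
      exact mul_le_mul hkey this (Real.exp_pos _).le hK0pos.le
    exact hxlow.trans ((hmaxall x e hx.le he).trans (hΦle.trans h1))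
  set l := A.lam z j with hl
  set H := h z with hH
  have hH2 : H ≤ 2 := hh2 z
  have t1 : 0 ≤ D₁ * 2 ^ (m + 11) := by positivity
  have t2 : 0 ≤ K₂ * 2 ^ 8 := by positivity
  have t3 : 0 ≤ D₂ * N₁ * C₁ ^ m * 2 ^ 11 := by positivity
  by_cases hlD : D₁ < l
  swap
  · have : l * H ^ (m + 11) ≤ D₁ * 2 ^ (m + 11) := by
      have := not_lt.mp hlD
      gcongr
    linarith
  by_cases hlK : K₂ ≤ l * H ^ (m + 3)
  swap
  · have h3 : l * H ^ (m + 11) ≤ K₂ * 2 ^ 8 := by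
      calc l * H ^ (m + 11) = (l * H ^ (m + 3)) * H ^ 8 := by ring
        _ ≤ K₂ * 2 ^ 8 := by
          have := (not_le.mp hlK).le
          gcongr
    linarith
  -- test
  set w : EE n → ℝ := dd (A.b z j) (dd (A.b z j) u) with hw
  have hws : ContDiff ℝ (⊤ : ℕ∞) w := dd_smooth (dd_smooth hu _) _
  have hmax : IsLocalMax (fun y => w y * h y ^ (m + 11) * Real.exp (ε * ‖y‖ ^ 2)) z := by
    have : ∀ᶠ y in nhds z, 0 < h y := hhs.continuous.continuousAt.eventually (lt_mem_nhds hhz)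
    filter_upwards [this] with y hy
    exact (hmaxall y (A.b z j) (by simp only [hh] at hy; linarith) (A.norm_b z j)).trans hΦle
  have test := fun i => max_test hws hhs (m + 11) ε hmax (by rw [hlamz]; exact hl0) hhz (A.b z i)
  have dh1 : ∀ v, dd v h = fun y => - dd v u y := fun v => dd_const_sub 1 v
  have dh2 : ∀ v, dd v (dd v h) z = - dd v (dd v u) z := by
    intro v; rw [dh1, dd_neg]
  set p : Fin n → ℝ := fun i => dd (A.b z i) u z with hp
  set q : Fin n → ℝ := fun i => inner ℝ z (A.b z i) with hq
  have hqP : ∑ i, q i ^ 2 ≤ P := by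
    have := (A.b z).sum_sq_inner_left z
    simp only [hq]; rw [this]; exact hbd z hz'
  have f1 : ∀ i, dd (A.b z i) w z / l = β * (p i / H) - 2 * ε * q i := by
    intro i
    have t := (test i).1
    rw [dh1, hlamz] at t
    have : dd (A.b z i) w z / l + β * (-p i / H) + 2 * ε * q i = 0 := t
    rw [neg_div] at this; linarith
  have f2 : A.L w z / l - ∑ i, A.phi z i * (β * (p i / H) - 2 * ε * q i) ^ 2
      - β / H - β * ∑ i, A.phi z i * (p i / H) ^ 2 + 2 * ε * A.tr z ≤ 0 := by
    have e1 : ∀ i, A.phi z i * (dd (A.b z i) (dd (A.b z i) w) z) / l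
        - A.phi z i * (β * (p i / H) - 2 * ε * q i) ^ 2
        + β * (-(A.phi z i * A.lam z i) / H - A.phi z i * (p i / H) ^ 2) + 2 * ε * A.phi z i ≤ 0 := by
      intro i
      have t2 := (test i).2
      rw [hlamz, f1, dh2, dh1, A.norm_b, A.diag] at t2
      simp only [if_true] at t2
      have := mul_nonpos_of_nonneg_of_nonpos (A.pos z i).le t2
      calc _ = A.phi z i * (dd (A.b z i) (dd (A.b z i) w) z / l - (β * (p i / H) - 2 * ε * q i) ^ 2 +
            β * (-A.lam z i / H - (-p i / H) ^ 2) + 2 * ε * 1 ^ 2) := by ring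
        _ ≤ 0 := this
    have e2 := Finset.sum_nonpos (fun i (_ : i ∈ Finset.univ) => e1 i)
    rw [Finset.sum_add_distrib, Finset.sum_add_distrib, Finset.sum_sub_distrib, ← Finset.sum_div,
      ← Finset.mul_sum, Finset.sum_sub_distrib, ← Finset.sum_div, Finset.sum_neg_distrib, A.euler,
      ← Finset.mul_sum] at e2
    have e4 : β * (-1 / H - ∑ i, A.phi z i * (p i / H) ^ 2) =
      -(β / H) - β * ∑ i, A.phi z i * (p i / H) ^ 2 := by ring
    rw [e4] at e2
    have e5 : ∑ i, A.phi z i = A.tr z := rfl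
    have e6 : ∑ i, A.phi z i * dd (A.b z i) (dd (A.b z i) w) z = A.L w z := rfl
    rw [e5, e6] at e2
    linarith
  have core := A.hess_core hD₁ hD₂ z j hlD hhz hβ1 hεpos hεP p q hqP f1 f2
  rw [← hl] at core
  have hG : ∑ i, p i ^ 2 = ‖gradient u z‖ ^ 2 := (gradSq_basis (A.b z) z).symm
  have hsq : (∑ i, (β * (p i / H) - 2 * ε * q i) ^ 2) * H ^ (m + 3) ≤ K₃ := by
    have s1 : ∑ i, (β * (p i / H) - 2 * ε * q i) ^ 2 ≤
        2 * β ^ 2 / H ^ 2 * ‖gradient u z‖ ^ 2 + 8 * ε ^ 2 * P := by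
      calc _ ≤ ∑ i, (2 * β ^ 2 / H ^ 2 * p i ^ 2 + 8 * ε ^ 2 * q i ^ 2) := by
            refine Finset.sum_le_sum fun i _ => ?_
            have e : 2 * β ^ 2 / H ^ 2 * p i ^ 2 = 2 * (β * (p i / H)) ^ 2 := by
              rw [mul_pow, div_pow]; ring
            rw [e]
            nlinarith [sq_nonneg (β * (p i / H) + 2 * ε * q i)]
        _ = 2 * β ^ 2 / H ^ 2 * ‖gradient u z‖ ^ 2 + 8 * ε ^ 2 * ∑ i, q i ^ 2 := by
            rw [Finset.sum_add_distrib, ← Finset.mul_sum, ← Finset.mul_sum, hG]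
        _ ≤ _ := by gcongr
    have s2 := hgrad' z (by simp only [hH, hh] at hhz; linarith)
    have s3 : ‖gradient u z‖ ^ 2 * H ^ (m + 1) ≤ Kg := s2
    calc _ ≤ (2 * β ^ 2 / H ^ 2 * ‖gradient u z‖ ^ 2 + 8 * ε ^ 2 * P) * H ^ (m + 3) :=
          mul_le_mul_of_nonneg_right s1 (by positivity)
      _ = 2 * β ^ 2 * (‖gradient u z‖ ^ 2 * H ^ (m + 1)) + 8 * ε ^ 2 * P * H ^ (m + 3) := by
          rw [show m + 3 = (m + 1) + 2 by ring, pow_add H (m + 1) 2]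
          field_simp
      _ ≤ 2 * β ^ 2 * Kg + 8 * ε ^ 2 * P * 2 ^ (m + 3) := by gcongr
  set S := ∑ i, (β * (p i / H) - 2 * ε * q i) ^ 2 with hS
  have hSl : S / l ≤ ε / (10 * D₁) := by
    have hS0 : 0 ≤ S := Finset.sum_nonneg fun i _ => sq_nonneg _
    have : S * K₂ ≤ K₃ * l := by
      calc S * K₂ ≤ S * (l * H ^ (m + 3)) := by gcongr
        _ = (S * H ^ (m + 3)) * l := by ring
        _ ≤ _ := mul_le_mul_of_nonneg_right hsq hl0.le
    rw [div_le_div_iff₀ hl0 (by positivity)]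
    have e : S * K₂ = S * (10 * D₁) * K₃ / ε := by rw [hK₂]; ring
    rw [e, div_le_iff₀ hεpos] at this
    have h5 : K₃ * (S * (10 * D₁)) ≤ K₃ * (ε * l) := by linarith
    exact le_of_mul_le_mul_left h5 hK₃pos
  have htr := A.tr_pos z
  have hT1 : ε * A.tr z ≤ β / H + ε * (n * D₂) / (2 * D₁) := by
    have e1 : 5 / l * (n * D₂ + D₁ * A.tr z) * S ≤ 5 * (n * D₂ + D₁ * A.tr z) * (ε / (10 * D₁)) := by
      calc _ = 5 * (n * D₂ + D₁ * A.tr z) * (S / l) := by ring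
        _ ≤ _ := by gcongr
    have e2 : 5 * (n * D₂ + D₁ * A.tr z) * (ε / (10 * D₁)) = ε * (n * D₂) / (2 * D₁) + ε / 2 * A.tr z := by
      field_simp; ring
    linarith
  have hTC : ∑ i, A.phi z i ≤ C₁ / H := by
    have e0 : ∑ i, A.phi z i = A.tr z := rfl
    rw [e0, le_div_iff₀ hhz]
    have e1 : (ε * A.tr z) * H ≤ β + ε * (n * D₂ / D₁) := by
      calc _ ≤ (β / H + ε * (n * D₂) / (2 * D₁)) * H := by gcongr
        _ = β + ε * (n * D₂) / (2 * D₁) * H := by field_simp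
        _ ≤ β + ε * (n * D₂) / (2 * D₁) * 2 := by gcongr
        _ = _ := by field_simp
    have e2 : A.tr z * H ≤ β / ε + n * D₂ / D₁ := by
      have : ε * (A.tr z * H) ≤ ε * (β / ε + n * D₂ / D₁) := by
        have : ε * (β / ε + n * D₂ / D₁) = β + ε * (n * D₂ / D₁) := by field_simp
        linarith
      exact le_of_mul_le_mul_left this hεpos
    linarith
  have hC1 : 1 ≤ C₁ / H := by rw [le_div_iff₀ hhz]; linarith
  have hN := A.condN z (C₁ / H) hC1 hTC j
  have hd := A.condD z j hlD
  have h2 : l ≤ N₁ * (C₁ / H) ^ m * D₂ := by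
    calc l ≤ (N₁ * (C₁ / H) ^ m * A.phi z j) * l := le_mul_of_one_le_left hl0.le hN
      _ = N₁ * (C₁ / H) ^ m * (A.phi z j * l) := by ring
      _ ≤ _ := mul_le_mul_of_nonneg_left hd (by positivity)
  have h3 : l * H ^ (m + 11) ≤ D₂ * N₁ * C₁ ^ m * 2 ^ 11 := by
    calc l * H ^ (m + 11) ≤ N₁ * (C₁ / H) ^ m * D₂ * H ^ (m + 11) :=
          mul_le_mul_of_nonneg_right h2 (by positivity)
      _ = D₂ * N₁ * C₁ ^ m * H ^ 11 := by rw [div_pow, pow_add]; field_simp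
      _ ≤ _ := by gcongr
  linarith



theorem global_hess_bound {n : ℕ} [NeZero n] {N₁ : ℝ} {m : ℕ} {D₁ D₂ c C₀ : ℝ} (hN₁ : 0 < N₁)
    (hD₁ : 0 < D₁) (hD₂ : 0 < D₂) (hc : 0 < c) {u : EE n → ℝ} (A : EllData n N₁ m D₁ D₂ u)
    (hg : ∀ x, c * ‖x‖ ^ 2 - C₀ ≤ u x) :
    ∃ M : ℝ, 0 < M ∧ ∀ x v, |dd v (dd v u) x| ≤ M * ‖v‖ ^ 2 := by
  obtain ⟨K, hK, hb⟩ := hess_bound n N₁ m D₁ D₂ (c / 2) hN₁ hD₁ hD₂ (by positivity)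
  have hn1 : (1:ℝ) ≤ n := by exact_mod_cast Nat.one_le_iff_ne_zero.mpr (NeZero.ne n)
  set M := K * 2 ^ (m + 11) with hM
  have hMpos : 0 < M := by positivity
  have up1 : ∀ x0 e, ‖e‖ = 1 → dd e (dd e u) x0 ≤ M := by
    intro x0 e he
    set R : ℝ := 1 + c * ‖x0‖ ^ 2 + |C₀| + 2 * |u x0| with hR
    have hR1 : 1 ≤ R := by
      have : 0 ≤ c * ‖x0‖ ^ 2 := by positivity
      have := abs_nonneg C₀; have := abs_nonneg (u x0); linarith
    have hRpos : 0 < R := by linarith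
    have hRR : R ≤ R ^ 2 := by nlinarith
    have hgr : ∀ x, c / 2 * ‖x‖ ^ 2 - 1 ≤ R⁻¹ ^ 2 * u (x0 + R • x) := by
      intro x
      have h1 := hg (x0 + R • x)
      have h2 : R ^ 2 * ‖x‖ ^ 2 / 2 - ‖x0‖ ^ 2 ≤ ‖x0 + R • x‖ ^ 2 := by
        have e1 : R • x = (x0 + R • x) - x0 := by simp
        have e2 : ‖R • x‖ ≤ ‖x0 + R • x‖ + ‖x0‖ := by
          conv_lhs => rw [e1]
          exact norm_sub_le _ _
        rw [norm_smul, Real.norm_of_nonneg hRpos.le] at e2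
        have : (R * ‖x‖) ^ 2 ≤ (‖x0 + R • x‖ + ‖x0‖) ^ 2 := by gcongr
        nlinarith [sq_nonneg (‖x0 + R • x‖ - ‖x0‖)]
      have h3 : C₀ ≤ |C₀| := le_abs_self _
      have h4 : (c / 2 * ‖x‖ ^ 2 - 1) * R ^ 2 ≤ u (x0 + R • x) := by
        have := mul_le_mul_of_nonneg_left h2 hc.le
        have := abs_nonneg (u x0)
        nlinarith
      rw [inv_pow, inv_mul_eq_div, le_div_iff₀ (by positivity)]
      exact h4
    have h0 : R⁻¹ ^ 2 * u (x0 + R • (0 : EE n)) ≤ 1 / 2 := by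
      rw [smul_zero, add_zero, inv_pow, inv_mul_eq_div, div_le_iff₀ (by positivity)]
      have := le_abs_self (u x0)
      have : 0 ≤ c * ‖x0‖ ^ 2 := by positivity
      have := abs_nonneg C₀
      linarith
    have := hb _ (A.scale x0 R hRpos) hgr 0 (by linarith) e he
    rw [A.scale_hess x0 R hRpos] at this
    simp only [smul_zero, add_zero] at this h0
    by_cases hpos : 0 < dd e (dd e u) x0
    swap
    · linarith
    have h5 : (1 / 2 : ℝ) ^ (m + 11) ≤ (1 - R⁻¹ ^ 2 * u x0) ^ (m + 11) := by
      gcongr; linarith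
    have h6 : dd e (dd e u) x0 * (1 / 2 : ℝ) ^ (m + 11) ≤ K :=
      (mul_le_mul_of_nonneg_left h5 hpos.le).trans this
    rw [one_div, inv_pow, ← div_eq_mul_inv, div_le_iff₀ (by positivity)] at h6
    exact h6
  have lamup : ∀ x i, A.lam x i ≤ M := by
    intro x i
    have := up1 x (A.b x i) (A.norm_b x i)
    rw [A.diag] at this; simpa using this
  have lamlow : ∀ x i, -(n * M) ≤ A.lam x i := by
    intro x i
    have h1 := A.trace_pos x (A.b x)
    simp only [A.diag, if_true] at h1
    have h2 : M - A.lam x i ≤ ∑ k, (M - A.lam x k) :=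
      Finset.single_le_sum (f := fun k => M - A.lam x k) (fun k _ => by linarith [lamup x k])
        (Finset.mem_univ i)
    rw [Finset.sum_sub_distrib] at h2
    simp at h2
    linarith
  refine ⟨n * M, by positivity, fun x v => ?_⟩
  rw [A.hess_diag, ← A.sum_inner_sq x v, Finset.mul_sum]
  refine (Finset.abs_sum_le_sum_abs _ _).trans (Finset.sum_le_sum fun i _ => ?_)
  rw [abs_mul, abs_of_nonneg (sq_nonneg (inner ℝ (A.b x i) v))]
  refine mul_le_mul_of_nonneg_right ?_ (sq_nonneg _)
  rw [abs_le]
  refine ⟨lamlow x i, (lamup x i).trans ?_⟩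
  exact le_mul_of_one_le_left hMpos.le hn1



section area
variable {n : ℕ}
open MeasureTheory

lemma abs_det_le (f : EE n →L[ℝ] EE n) {K : ℝ} (hK : 0 ≤ K) (h : ∀ v, ‖f v‖ ≤ K * ‖v‖) :
    |f.det| ≤ K ^ n := by
  have h1 := Measure.addHaar_image_continuousLinearMap (volume : Measure (EE n)) f
    (Metric.closedBall 0 1)
  have h2 : f '' (Metric.closedBall 0 1) ⊆ Metric.closedBall 0 K := by
    rintro _ ⟨v, hv, rfl⟩
    simp only [mem_closedBall_zero_iff] at hv ⊢
    calc ‖f v‖ ≤ K * ‖v‖ := h v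
      _ ≤ K * 1 := by gcongr
      _ = K := mul_one K
  have h3 := measure_mono (μ := (volume : Measure (EE n))) h2
  rw [h1, Measure.addHaar_closedBall' _ _ hK] at h3
  have hp : volume (Metric.closedBall (0 : EE n) 1) ≠ 0 :=
    (Metric.measure_closedBall_pos _ _ one_pos).ne'
  have hf : volume (Metric.closedBall (0 : EE n) 1) ≠ ⊤ := measure_closedBall_lt_top.ne
  have h4 := (ENNReal.mul_le_mul_iff_left hp hf).1 h3
  rw [finrank_euclideanSpace_fin] at h4
  exact (ENNReal.ofReal_le_ofReal_iff (by positivity)).1 h4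

lemma hess_polar {g : EE n → ℝ} (hg : ContDiff ℝ (⊤ : ℕ∞) g) {x : EE n} {M : ℝ}
    (hb : ∀ v, |dd v (dd v g) x| ≤ M * ‖v‖ ^ 2) (v w : EE n) :
    |dd v (dd w g) x| ≤ M * (‖v‖ * ‖w‖) := by
  rcases eq_or_ne v 0 with rfl | hv
  · simp [dd]
  rcases eq_or_ne w 0 with rfl | hw
  · rw [dd_comm hg]; simp [dd]
  have hv' : 0 < ‖v‖ := norm_pos_iff.mpr hv
  have hw' : 0 < ‖w‖ := norm_pos_iff.mpr hw
  set p := ‖w‖ • v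
  set q := ‖v‖ • w
  have e1 : dd (p + q) (dd (p + q) g) x - dd (p - q) (dd (p - q) g) x = 4 * dd p (dd q g) x := by
    have c := congrFun (dd_comm hg p q) x
    simp only [dd_dd_eq hg] at c ⊢
    simp only [map_add, map_sub, add_apply, sub_apply]
    rw [c]; ring
  have e2 : dd p (dd q g) x = ‖w‖ * ‖v‖ * dd v (dd w g) x := by
    simp only [dd_dd_eq hg, p, q, map_smul, smul_apply, smul_eq_mul]; ring
  have e3 : ‖p + q‖ ^ 2 + ‖p - q‖ ^ 2 = 4 * (‖v‖ * ‖w‖) ^ 2 := by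
    have := parallelogram_law_with_norm ℝ p q
    have h1 : ‖p‖ = ‖w‖ * ‖v‖ := by simp [p, norm_smul]
    have h2 : ‖q‖ = ‖v‖ * ‖w‖ := by simp [q, norm_smul]
    rw [h1, h2] at this
    linear_combination this
  have h1 := abs_le.1 (hb (p + q))
  have h2 := abs_le.1 (hb (p - q))
  have hM : M * ‖p + q‖ ^ 2 + M * ‖p - q‖ ^ 2 = M * (4 * (‖v‖ * ‖w‖) ^ 2) := by rw [← e3]; ring
  have hpos : 0 < ‖v‖ * ‖w‖ := by positivity
  rw [e2] at e1
  rw [abs_le]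
  constructor
  · refine le_of_mul_le_mul_left ?_ hpos
    linarith
  · refine le_of_mul_le_mul_left ?_ hpos
    linarith

lemma grad_hasFDeriv {g : EE n → ℝ} (hg : ContDiff ℝ (⊤ : ℕ∞) g) (x : EE n) :
    ∃ G : EE n →L[ℝ] EE n, HasFDerivAt (gradient g) G x ∧
      ∀ v w, inner ℝ (G v) w = dd v (dd w g) x := by
  have h1 : ContDiff ℝ (⊤ : ℕ∞) (fderiv ℝ g) := hg.fderiv_right (by simp)
  have h2 := ((h1.differentiable (by simp)) x).hasFDerivAt
  let E : (EE n →L[ℝ] ℝ) →L[ℝ] EE n :=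
    ((InnerProductSpace.toDual ℝ (EE n)).symm.toContinuousLinearEquiv : (EE n →L[ℝ] ℝ) ≃L[ℝ] EE n).toContinuousLinearMap
  have hE : ∀ l w, inner ℝ (E l) w = l w := by
    intro l w
    exact InnerProductSpace.toDual_symm_apply
  refine ⟨E.comp (fderiv ℝ (fderiv ℝ g) x), ?_, ?_⟩
  · exact E.hasFDerivAt.comp x h2
  · intro v w
    rw [dd_dd_eq hg, ContinuousLinearMap.comp_apply, hE]

lemma inner_grad {g : EE n → ℝ} (x w : EE n) : inner ℝ (gradient g x) w = dd w g x := by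
  simp [gradient, dd, InnerProductSpace.toDual_symm_apply]

lemma area_lemma {g : EE n → ℝ} (hg : ContDiff ℝ (⊤ : ℕ∞) g) {T B : Set (EE n)}
    (hT : MeasurableSet T) {M s : ℝ} (hM : 0 ≤ M)
    (hb : ∀ x ∈ T, ∀ v, |dd v (dd v g) x| ≤ M * ‖v‖ ^ 2)
    (hB : B ⊆ (fun x => x + s • gradient g x) '' T) :
    volume B ≤ ENNReal.ofReal ((1 + |s| * M) ^ n) * volume T := by
  choose G hG1 hG2 using grad_hasFDeriv hg
  have hd : ∀ x ∈ T, HasFDerivWithinAt (fun x => x + s • gradient g x)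
      (ContinuousLinearMap.id ℝ (EE n) + s • G x) T x := by
    intro x _
    exact ((hasFDerivAt_id x).add ((hG1 x).const_smul s)).hasFDerivWithinAt
  have h1 := addHaar_image_le_lintegral_abs_det_fderiv (volume : Measure (EE n)) hT hd
  refine (measure_mono hB).trans (h1.trans ?_)
  rw [← setLIntegral_const]
  refine setLIntegral_mono measurable_const fun x hx => ?_
  refine ENNReal.ofReal_le_ofReal (abs_det_le _ (by positivity) fun v => ?_)
  have hGv : ‖G x v‖ ≤ M * ‖v‖ := by
    have h2 := hess_polar hg (hb x hx) v (G x v)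
    rw [← hG2, real_inner_self_eq_norm_sq, abs_of_nonneg (by positivity)] at h2
    rcases (norm_nonneg (G x v)).eq_or_lt with h | h
    · rw [← h]; positivity
    · refine le_of_mul_le_mul_right ?_ h
      linarith
  calc ‖(ContinuousLinearMap.id ℝ (EE n) + s • G x) v‖ = ‖v + s • G x v‖ := by simp
    _ ≤ ‖v‖ + |s| * ‖G x v‖ := by
      refine (norm_add_le _ _).trans ?_
      rw [norm_smul, Real.norm_eq_abs]
    _ ≤ ‖v‖ + |s| * (M * ‖v‖) := by gcongr
    _ = _ := by ring

/-- nonneg form bounded by `n` times the max of diagonal entries -/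
lemma psd_bound {g : EE n → ℝ} (hg : ContDiff ℝ (⊤ : ℕ∞) g) {x : EE n} {a K : ℝ}
    (hK : 0 ≤ K)
    (b : OrthonormalBasis (Fin n) ℝ (EE n)) (hp : ∀ v, a * ‖v‖ ^ 2 ≤ dd v (dd v g) x)
    (hd : ∀ i, dd (b i) (dd (b i) g) x - a ≤ K) (v : EE n) :
    dd v (dd v g) x ≤ (a + n * K) * ‖v‖ ^ 2 := by
  have hp1 : ∀ i, ‖b i‖ = 1 := b.orthonormal.1
  set F := fun p q : EE n => dd p (dd q g) x - a * inner ℝ p q with hF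
  have hd0 : ∀ i, 0 ≤ F (b i) (b i) := by
    intro i
    have := hp (b i)
    simp only [hF, real_inner_self_eq_norm_sq]; linarith
  have hdK : ∀ i, F (b i) (b i) ≤ K := by
    intro i
    have := hd i
    simp only [hF, real_inner_self_eq_norm_sq, hp1]; linarith
  have hcs : ∀ i j (α β : ℝ), 2 * (α * β * F (b i) (b j)) ≤ α ^ 2 * K + β ^ 2 * K := by
    intro i j α β
    have h1 := hp (α • b i - β • b j)
    have c := congrFun (dd_comm hg (b i) (b j)) x
    have h2 : dd (α • b i - β • b j) (dd (α • b i - β • b j) g) x - a * ‖α • b i - β • b j‖ ^ 2 =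
        α ^ 2 * F (b i) (b i) - 2 * (α * β * F (b i) (b j)) + β ^ 2 * F (b j) (b j) := by
      rw [← real_inner_self_eq_norm_sq]
      simp only [hF]
      simp only [dd_dd_eq hg, map_sub, map_smul, sub_apply,
        smul_apply, smul_eq_mul, inner_sub_left, inner_sub_right, inner_smul_left, inner_smul_right,
        RCLike.conj_to_real] at c ⊢
      rw [← c, real_inner_comm (b i) (b j)]; ring
    have h3 := mul_le_mul_of_nonneg_left (hdK i) (sq_nonneg α)
    have h4 := mul_le_mul_of_nonneg_left (hdK j) (sq_nonneg β)
    linarith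
  have hex : dd v (dd v g) x - a * ‖v‖ ^ 2 =
      ∑ i, ∑ j, inner ℝ (b i) v * inner ℝ (b j) v * F (b i) (b j) := by
    rw [hess_cross_expand hg b v x]
    have : ∑ i, ∑ j, inner ℝ (b i) v * inner ℝ (b j) v * inner ℝ (b i) (b j) = ‖v‖ ^ 2 := by
      rw [← b.sum_sq_inner_right v]
      refine Finset.sum_congr rfl fun i _ => ?_
      rw [Finset.sum_eq_single i]
      · rw [real_inner_self_eq_norm_sq, hp1]; ring
      · intro j _ hij
        rw [b.orthonormal.2 hij.symm]; ring
      · simp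
    rw [← this, Finset.mul_sum, ← Finset.sum_sub_distrib]
    refine Finset.sum_congr rfl fun i _ => ?_
    rw [Finset.mul_sum, ← Finset.sum_sub_distrib]
    refine Finset.sum_congr rfl fun j _ => ?_
    simp only [hF]; ring
  have hle : ∑ i, ∑ j, inner ℝ (b i) v * inner ℝ (b j) v * F (b i) (b j) ≤
      ∑ i : Fin n, ∑ j : Fin n, (inner ℝ (b i) v ^ 2 * K / 2 + inner ℝ (b j) v ^ 2 * K / 2) := by
    refine Finset.sum_le_sum fun i _ => Finset.sum_le_sum fun j _ => ?_
    have := hcs i j (inner ℝ (b i) v) (inner ℝ (b j) v)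
    linarith
  have hsum : ∑ i : Fin n, ∑ j : Fin n, (inner ℝ (b i) v ^ 2 * K / 2 + inner ℝ (b j) v ^ 2 * K / 2)
      = n * K * ‖v‖ ^ 2 := by
    have hs := b.sum_sq_inner_right v
    simp only [Finset.sum_add_distrib, Finset.sum_const, Finset.card_univ, Fintype.card_fin,
      nsmul_eq_mul, ← Finset.mul_sum, ← Finset.sum_div, ← Finset.sum_mul, hs]
    ring
  linarith

end area


section lemmaA
variable {n : ℕ}
open MeasureTheory

lemma touch_test {g : EE n → ℝ} (hg : ContDiff ℝ (⊤ : ℕ∞) g) {x y : EE n} {k : ℝ}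
    (hm : IsLocalMin (fun z => g z + k * ‖z - y‖ ^ 2) x) (v : EE n) :
    dd v g x + 2 * k * inner ℝ (x - y) v = 0 ∧ 0 ≤ dd v (dd v g) x + 2 * k * ‖v‖ ^ 2 := by
  have j := (J2_line hg x v).add ((J2_normsq (x - y) v).const_mul k)
  have r := j.localMin (by
    have := (tendsto_line x v).eventually hm
    filter_upwards [this] with t ht
    have e : x - y + t • v = x + t • v - y := by abel
    simp only [e]
    simpa using ht)
  constructor
  · linarith [r.1]
  · linarith [r.2]

/-- a minimum over a closed ball that beats the sphere values is a local minimum. -/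
lemma exists_interior_min {h : EE n → ℝ} (hc : Continuous h) {z x1 : EE n} {r : ℝ}
    (hx1 : ‖x1 - z‖ ≤ r) (hbd : ∀ x, ‖x - z‖ = r → h x1 < h x) :
    ∃ x, ‖x - z‖ < r ∧ IsLocalMin h x ∧ h x ≤ h x1 := by
  have hne : (Metric.closedBall z r).Nonempty := ⟨x1, by simpa [dist_eq_norm] using hx1⟩
  obtain ⟨x, hx, hmin⟩ := (isCompact_closedBall z r).exists_isMinOn hne hc.continuousOn
  have hle : h x ≤ h x1 := hmin (by simpa [dist_eq_norm] using hx1)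
  have hlt : ‖x - z‖ < r := by
    have h1 : ‖x - z‖ ≤ r := by simpa [dist_eq_norm] using hx
    refine lt_of_le_of_ne h1 fun h2 => ?_
    have := hbd x h2
    linarith
  refine ⟨x, hlt, ?_, hle⟩
  have hmem : Metric.closedBall z r ∈ nhds x :=
    Filter.mem_of_superset (Metric.isOpen_ball.mem_nhds (by simpa [dist_eq_norm] using hlt))
      Metric.ball_subset_closedBall
  exact hmin.isLocalMin hmem

lemma isClosed_hess {g : EE n → ℝ} (hg : ContDiff ℝ (⊤ : ℕ∞) g) (a b : ℝ) :
    IsClosed {x : EE n | ∀ v, a * ‖v‖ ^ 2 ≤ dd v (dd v g) x ∧ dd v (dd v g) x ≤ b * ‖v‖ ^ 2} := by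
  have : {x : EE n | ∀ v, a * ‖v‖ ^ 2 ≤ dd v (dd v g) x ∧ dd v (dd v g) x ≤ b * ‖v‖ ^ 2} =
      ⋂ v, ({x | a * ‖v‖ ^ 2 ≤ dd v (dd v g) x} ∩ {x | dd v (dd v g) x ≤ b * ‖v‖ ^ 2}) := by
    ext x; simp
  rw [this]
  refine isClosed_iInter fun v => ?_
  have hc := (dd_smooth (dd_smooth hg v) v).continuous
  exact (isClosed_le continuous_const hc).inter (isClosed_le hc continuous_const)

namespace EllData
variable {N₁ : ℝ} {m : ℕ} {D₁ D₂ : ℝ} {u : EE n → ℝ}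

lemma L_add (A : EllData n N₁ m D₁ D₂ u) {g h : EE n → ℝ} (hg : ContDiff ℝ (⊤ : ℕ∞) g)
    (hh : ContDiff ℝ (⊤ : ℕ∞) h) (x : EE n) :
    A.L (fun y => g y + h y) x = A.L g x + A.L h x := by
  unfold L
  rw [← Finset.sum_add_distrib]
  refine Finset.sum_congr rfl fun i _ => ?_
  rw [dd_add hg hh, dd_add (dd_smooth hg _) (dd_smooth hh _)]; ring

lemma L_const_mul (A : EllData n N₁ m D₁ D₂ u) {g : EE n → ℝ} (hg : ContDiff ℝ (⊤ : ℕ∞) g)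
    (a : ℝ) (x : EE n) : A.L (fun y => a * g y) x = a * A.L g x := by
  unfold L
  rw [Finset.mul_sum]
  refine Finset.sum_congr rfl fun i _ => ?_
  rw [dd_const_mul hg, dd_const_mul (dd_smooth hg _)]; ring

lemma L_sum (A : EllData n N₁ m D₁ D₂ u) {ι : Type*} (s : Finset ι) {g : ι → EE n → ℝ}
    (hg : ∀ i, ContDiff ℝ (⊤ : ℕ∞) (g i)) (x : EE n) :
    A.L (fun y => ∑ i ∈ s, g i y) x = ∑ i ∈ s, A.L (g i) x := by
  unfold L
  rw [Finset.sum_comm]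
  refine Finset.sum_congr rfl fun i _ => ?_
  rw [dd_sum s hg, dd_sum s (fun i => dd_smooth (hg i) _), Finset.mul_sum]

lemma L_const_sub (A : EllData n N₁ m D₁ D₂ u) {g : EE n → ℝ}
    (a : ℝ) (x : EE n) : A.L (fun y => a - g y) x = - A.L g x := by
  unfold L
  rw [← Finset.sum_neg_distrib]
  refine Finset.sum_congr rfl fun i _ => ?_
  rw [dd_const_sub, dd_neg]; ring

lemma ell_bound (A : EllData n N₁ m D₁ D₂ u) {g : EE n → ℝ} (hg : ContDiff ℝ (⊤ : ℕ∞) g) {x : EE n}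
    {a l S : ℝ} (hl : 0 < l) (hS : 0 ≤ S) (hφ : ∀ i, l ≤ A.phi x i)
    (hp : ∀ v, a * ‖v‖ ^ 2 ≤ dd v (dd v g) x) (hL : A.L g x - a * A.tr x ≤ S) (v : EE n) :
    dd v (dd v g) x ≤ (a + n * (S / l)) * ‖v‖ ^ 2 := by
  refine psd_bound hg (by positivity) (A.b x) hp (fun i => ?_) v
  rw [le_div_iff₀ hl]
  have hnn : ∀ j, 0 ≤ dd (A.b x j) (dd (A.b x j) g) x - a := by
    intro j
    have := hp (A.b x j)
    rw [A.norm_b] at this; linarith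
  have h1 : A.phi x i * (dd (A.b x i) (dd (A.b x i) g) x - a) ≤
      ∑ j, A.phi x j * (dd (A.b x j) (dd (A.b x j) g) x - a) :=
    Finset.single_le_sum (f := fun j => A.phi x j * (dd (A.b x j) (dd (A.b x j) g) x - a))
      (fun j _ => mul_nonneg (A.pos x j).le (hnn j)) (Finset.mem_univ i)
  have h2 : ∑ j, A.phi x j * (dd (A.b x j) (dd (A.b x j) g) x - a) = A.L g x - a * A.tr x := by
    unfold L tr
    rw [Finset.mul_sum, ← Finset.sum_sub_distrib]
    refine Finset.sum_congr rfl fun j _ => by ring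
  have h3 := mul_le_mul_of_nonneg_right (hφ i) (hnn i)
  linarith

lemma L_lower (A : EllData n N₁ m D₁ D₂ u) {g : EE n → ℝ} {x : EE n}
    {a : ℝ} (hp : ∀ v, a * ‖v‖ ^ 2 ≤ dd v (dd v g) x) : a * A.tr x ≤ A.L g x := by
  unfold L tr
  rw [Finset.mul_sum]
  refine Finset.sum_le_sum fun i _ => ?_
  have := hp (A.b x i)
  rw [A.norm_b] at this
  have h2 := mul_le_mul_of_nonneg_left this (A.pos x i).le
  linarith

end EllData

/-- Lemma A. -/
theorem lemmaA {N₁ : ℝ} {m : ℕ} {D₁ D₂ c C₀ : ℝ} (hN₁ : 0 < N₁) (hc : 0 < c) {u : EE n → ℝ}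
    (A : EllData n N₁ m D₁ D₂ u) (hg : ∀ x, c * ‖x‖ ^ 2 - C₀ ≤ u x) :
    ∃ K P : ℝ, 0 < K ∧ 0 < P ∧ ∀ (V : EE n → ℝ), ContDiff ℝ (⊤ : ℕ∞) V → (∀ x, 0 ≤ V x) →
      (∀ x, A.L V x ≤ 0) → ∀ x0 : EE n, ∃ R0 : ℝ, 0 < R0 ∧ ∀ R τ : ℝ, R0 ≤ R → 0 ≤ τ →
        τ * V x0 ≤ c * R ^ 2 / 2 →
        volume (Metric.closedBall (0 : EE n) R) ≤ ENNReal.ofReal P *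
          volume ({x : EE n | ‖x‖ ≤ 4 * R ∧ τ * V x ≤ 3 * c * R ^ 2} ∩
            {x : EE n | ∀ v, c * ‖v‖ ^ 2 ≤ dd v (dd v (fun y => u y + τ * V y)) x ∧
              dd v (dd v (fun y => u y + τ * V y)) x ≤ K * ‖v‖ ^ 2}) := by
  set Q : ℝ := max 1 (1 / c) with hQ
  have hQ1 : 1 ≤ Q := le_max_left _ _
  set l : ℝ := 1 / (N₁ * Q ^ m) with hl
  have hlpos : 0 < l := by positivity
  set K : ℝ := c + n * (1 / l) with hK
  have hKpos : 0 < K := by positivity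
  refine ⟨K, (1 + |-(1 / c)| * K) ^ n, hKpos, by positivity, ?_⟩
  intro V hV hV0 hLV x0
  set R0 : ℝ := 1 + ‖x0‖ + |C₀ + u x0| / c with hR0
  have hR0pos : 1 ≤ R0 := by
    have : 0 ≤ |C₀ + u x0| / c := by positivity
    have := norm_nonneg x0
    linarith
  refine ⟨R0, by linarith, ?_⟩
  intro R τ hR hτ hτV
  have hU : ContDiff ℝ (⊤ : ℕ∞) (fun y => u y + τ * V y) :=
    A.smooth.add (contDiff_const.mul hV)
  have hR1 : 1 ≤ R := by linarith
  have hx0R : ‖x0‖ ≤ R := by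
    have : 0 ≤ |C₀ + u x0| / c := by positivity
    linarith
  have hC : C₀ + u x0 ≤ c * R ^ 2 := by
    have h1 : |C₀ + u x0| / c ≤ R := by
      have := norm_nonneg x0
      linarith
    rw [div_le_iff₀ hc] at h1
    have h2 := le_abs_self (C₀ + u x0)
    have h3 : R * c ≤ c * R ^ 2 := by
      have : R ≤ R ^ 2 := by nlinarith
      nlinarith
    linarith
  refine area_lemma hU ?_ hKpos.le ?_ ?_
  · refine ((IsClosed.inter ?_ ?_).inter (isClosed_hess hU c K)).measurableSet
    · exact isClosed_le continuous_norm continuous_const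
    · exact isClosed_le (continuous_const.mul hV.continuous) continuous_const
  · rintro x ⟨_, hx⟩ v
    have := hx v
    rw [abs_le]
    have h0 : 0 ≤ c * ‖v‖ ^ 2 := by positivity
    have h1 : 0 ≤ K * ‖v‖ ^ 2 := by positivity
    constructor <;> linarith [this.1, this.2]
  · intro y hy
    have hyR : ‖y‖ ≤ R := by simpa using hy
    -- key estimate
    have key : ∀ x, u x + τ * V x + (-(c / 2)) * ‖x - y‖ ^ 2 ≤
        u x0 + τ * V x0 + (-(c / 2)) * ‖x0 - y‖ ^ 2 →
        c / 4 * ‖x‖ ^ 2 + τ * V x ≤ 3 * c * R ^ 2 := by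
      intro x hx
      have h1 := hg x
      have h2 : ‖x - y‖ ^ 2 ≤ 3 / 2 * ‖x‖ ^ 2 + 3 * ‖y‖ ^ 2 := by
        have h3 := norm_sub_le x y
        have h4 := norm_nonneg (x - y)
        have h5 : ‖x - y‖ ^ 2 ≤ (‖x‖ + ‖y‖) ^ 2 := by gcongr
        nlinarith [sq_nonneg (‖x‖ - 2 * ‖y‖)]
      have h3 : ‖y‖ ^ 2 ≤ R ^ 2 := by gcongr
      have h4 : c / 2 * ‖x - y‖ ^ 2 ≤ c / 2 * (3 / 2 * ‖x‖ ^ 2 + 3 * R ^ 2) := by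
        gcongr; linarith
      have h5 : 0 ≤ c / 2 * ‖x0 - y‖ ^ 2 := by positivity
      linarith
    obtain ⟨x, hxR, hmin, hle⟩ := exists_interior_min (n := n)
      (h := fun x => u x + τ * V x + (-(c / 2)) * ‖x - y‖ ^ 2)
      (hU.continuous.add (by fun_prop)) (z := 0) (x1 := x0) (r := 4 * R)
      (by simp only [sub_zero]; linarith) (by
        intro x hx
        by_contra hcon
        have := key x (not_lt.1 hcon)
        rw [sub_zero] at hx
        rw [hx] at this
        have h0 : 0 ≤ τ * V x := mul_nonneg hτ (hV0 x)
        have h1 : 0 < c * R ^ 2 := by positivity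
        nlinarith)
    have hk := key x hle
    have hneg : 0 ≤ c / 4 * ‖x‖ ^ 2 := by positivity
    have hH : ∀ v, c * ‖v‖ ^ 2 ≤ dd v (dd v (fun y => u y + τ * V y)) x := by
      intro v
      have := (touch_test hU hmin v).2
      linarith
    have hLU : A.L (fun y => u y + τ * V y) x ≤ 1 := by
      rw [A.L_add A.smooth (contDiff_const.mul hV), A.L_const_mul hV, A.L_u]
      have := mul_nonpos_of_nonneg_of_nonpos hτ (hLV x)
      linarith
    have htr : A.tr x ≤ Q := by
      have h1 := A.L_lower hH
      have : A.tr x ≤ 1 / c := by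
        rw [le_div_iff₀ hc]; linarith
      exact this.trans (le_max_right _ _)
    have hφ : ∀ i, l ≤ A.phi x i := by
      intro i
      have := A.condN x Q hQ1 htr i
      rw [hl, div_le_iff₀ (by positivity)]; linarith
    have htr0 : 0 ≤ A.tr x := Finset.sum_nonneg fun i _ => (A.pos x i).le
    have hub := A.ell_bound hU hlpos zero_le_one hφ hH (by
      have : 0 ≤ c * A.tr x := by positivity
      linarith)
    refine ⟨x, ⟨⟨?_, ?_⟩, fun v => ⟨hH v, hub v⟩⟩, ?_⟩
    · simpa using hxR.le
    · linarith
    · simp only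
      refine ext_inner_right ℝ fun w => ?_
      have := (touch_test hU hmin w).1
      rw [inner_add_left, inner_smul_left, inner_grad]
      rw [inner_sub_left] at this
      simp only [RCLike.conj_to_real]
      have hd : dd w (fun y => u y + τ * V y) x = c * (inner ℝ x w - inner ℝ y w) := by linarith
      rw [hd]; field_simp; ring

end lemmaA


section step2
variable {n : ℕ}
open MeasureTheory

theorem exists_V {N₁ : ℝ} {m : ℕ} {D₁ D₂ M : ℝ} {u : EE n → ℝ}
    (A : EllData n N₁ m D₁ D₂ u) (hM : 0 < M) (hb : ∀ x v, |dd v (dd v u) x| ≤ M * ‖v‖ ^ 2) :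
    ∃ (V : EE n → ℝ) (C : ℝ), 0 < C ∧ ContDiff ℝ (⊤ : ℕ∞) V ∧ (∀ x, 0 ≤ V x) ∧
      (∀ x, A.L V x ≤ 0) ∧ (∀ ε : ℝ, 0 < ε → ∃ x, V x ≤ ε) ∧
      ∀ x y η, V x ≤ η → V y ≤ η → ∀ v,
        |dd v (dd v u) x - dd v (dd v u) y| ≤ C * Real.sqrt η * ‖v‖ ^ 2 := by
  classical
  set b : OrthonormalBasis (Fin n) ℝ (EE n) := EuclideanSpace.basisFun (Fin n) ℝ with hbdef
  have hbn : ∀ i, ‖b i‖ = 1 := b.orthonormal.1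
  set w : Fin n × Fin n → EE n := fun p => b p.1 + b p.2 with hw
  set z : EE n → (Fin n × Fin n → ℝ) := fun x p => dd (w p) (dd (w p) u) x with hz
  have hwn : ∀ p, ‖w p‖ ≤ 2 := by
    intro p
    have := norm_add_le (b p.1) (b p.2)
    rw [hbn, hbn] at this
    simp only [hw]; linarith
  have hzs : ∀ p, ContDiff ℝ (⊤ : ℕ∞) (fun x => z x p) := fun p =>
    dd_smooth (dd_smooth A.smooth _) _
  have hzb : ∀ x p, |z x p| ≤ 4 * M := by
    intro x p
    have h1 := hb x (w p)
    have h2 : ‖w p‖ ^ 2 ≤ 2 ^ 2 := by have := hwn p; gcongr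
    have h3 : M * ‖w p‖ ^ 2 ≤ M * 2 ^ 2 := by gcongr
    simp only [hz]; linarith
  set S : Set (Fin n × Fin n → ℝ) := closure (Set.range z) with hS
  have hSsub : S ⊆ Set.Icc (fun _ => -(4 * M)) (fun _ => 4 * M) := by
    refine closure_minimal ?_ isClosed_Icc
    rintro _ ⟨x, rfl⟩
    exact ⟨fun p => (abs_le.1 (hzb x p)).1, fun p => (abs_le.1 (hzb x p)).2⟩
  have hScomp : IsCompact S := isCompact_Icc.of_isClosed_subset isClosed_closure hSsub
  obtain ⟨zs, hzs1, hzs2⟩ := hScomp.exists_isMaxOn (f := fun q : Fin n × Fin n → ℝ =>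
    ∑ p, (q p + 4 * M) ^ 2) ⟨z 0, subset_closure ⟨0, rfl⟩⟩ (by fun_prop)
  set pp : Fin n × Fin n → ℝ := fun p => zs p + 4 * M with hpp
  have hpp0 : ∀ p, 0 ≤ pp p := by
    intro p
    have := (hSsub hzs1).1 p
    simp only at this
    simp only [hpp]; linarith
  set V : EE n → ℝ := fun x => ∑ p, (pp p * zs p - pp p * z x p) with hV
  have hVlow : ∀ x, ∑ p, (zs p - z x p) ^ 2 / 2 ≤ V x := by
    intro x
    have h1 := hzs2 (subset_closure (Set.mem_range_self x) : z x ∈ S)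
    simp only [Set.mem_ofPred_eq] at h1
    have h2 : ∑ p, (z x p + 4 * M) ^ 2 - ∑ p, (zs p + 4 * M) ^ 2 =
      2 * (∑ p, (zs p - z x p) ^ 2 / 2 - V x) := by
      rw [hV, ← Finset.sum_sub_distrib, ← Finset.sum_sub_distrib, Finset.mul_sum]
      refine Finset.sum_congr rfl fun p _ => ?_
      simp only [hpp]; ring
    linarith
  have hV0 : ∀ x, 0 ≤ V x := fun x =>
    le_trans (Finset.sum_nonneg fun p _ => by positivity) (hVlow x)
  have hVi : ∀ p, ContDiff ℝ (⊤ : ℕ∞) (fun x => pp p * zs p - pp p * z x p) := fun p =>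
    contDiff_const.sub (contDiff_const.mul (hzs p))
  have hdist : ∀ x η p, V x ≤ η → |zs p - z x p| ≤ Real.sqrt (2 * η) := by
    intro x η p hx
    refine Real.abs_le_sqrt ?_
    have h1 : (zs p - z x p) ^ 2 / 2 ≤ ∑ p, (zs p - z x p) ^ 2 / 2 :=
      Finset.single_le_sum (f := fun p => (zs p - z x p) ^ 2 / 2)
        (fun q _ => by positivity) (Finset.mem_univ p)
    linarith [hVlow x]
  refine ⟨V, 3 * (n : ℝ) ^ 2 + 1, by positivity, ContDiff.sum fun p _ => hVi p, hV0, ?_, ?_, ?_⟩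
  · intro x
    rw [hV, A.L_sum _ hVi]
    refine Finset.sum_nonpos fun p _ => ?_
    rw [A.L_const_sub, A.L_const_mul (hzs p)]
    have h1 := (A.bilin_test x (w p)).2
    have := mul_nonneg (hpp0 p) h1
    linarith
  · intro ε hε
    have hcont : Continuous (fun q : Fin n × Fin n → ℝ => ∑ p, (pp p * zs p - pp p * q p)) := by
      fun_prop
    have hopen : IsOpen {q : Fin n × Fin n → ℝ | ∑ p, (pp p * zs p - pp p * q p) < ε} :=
      isOpen_lt hcont continuous_const
    obtain ⟨q, hq1, x, rfl⟩ := mem_closure_iff.1 hzs1 _ hopen (by simpa using hε)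
    exact ⟨x, le_of_lt hq1⟩
  · intro x y η hx hy v
    have hη : 0 ≤ η := (hV0 x).trans hx
    have hs2 : Real.sqrt (2 * η) ≤ 1.5 * Real.sqrt η := by
      rw [Real.sqrt_mul (by norm_num)]
      gcongr
      rw [Real.sqrt_le_left (by norm_num)]; norm_num
    have hd : ∀ p, |z x p - z y p| ≤ 3 * Real.sqrt η := by
      intro p
      have h1 := abs_le.1 (hdist x η p hx)
      have h2 := abs_le.1 (hdist y η p hy)
      rw [abs_le]; constructor <;> linarith [h1.1, h1.2, h2.1, h2.2]
    have hij : ∀ x i j, dd (b i) (dd (b j) u) x =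
        (z x (i, j) - z x (i, i) / 4 - z x (j, j) / 4) / 2 := by
      intro x i j
      have c := congrFun (dd_comm A.smooth (b i) (b j)) x
      simp only [hz, hw]
      simp only [dd_dd_eq A.smooth, map_add, add_apply] at c ⊢
      rw [c]; ring
    have hdij : ∀ i j, |dd (b i) (dd (b j) u) x - dd (b i) (dd (b j) u) y| ≤ 3 * Real.sqrt η := by
      intro i j
      have h1 := abs_le.1 (hd (i, j))
      have h2 := abs_le.1 (hd (i, i))
      have h3 := abs_le.1 (hd (j, j))
      rw [hij x, hij y, abs_le]
      constructor <;> linarith [h1.1, h1.2, h2.1, h2.2, h3.1, h3.2, Real.sqrt_nonneg η]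
    rw [hess_cross_expand A.smooth b v x, hess_cross_expand A.smooth b v y,
      ← Finset.sum_sub_distrib]
    have hin : ∀ i, |inner ℝ (b i) v| ≤ ‖v‖ := by
      intro i
      have := abs_real_inner_le_norm (b i) v
      rwa [hbn, one_mul] at this
    calc |∑ i, (∑ j, inner ℝ (b i) v * (inner ℝ (b j) v * dd (b i) (dd (b j) u) x) -
          ∑ j, inner ℝ (b i) v * (inner ℝ (b j) v * dd (b i) (dd (b j) u) y))|
        ≤ ∑ i : Fin n, ∑ j : Fin n, ‖v‖ * (‖v‖ * (3 * Real.sqrt η)) := by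
          refine (Finset.abs_sum_le_sum_abs _ _).trans (Finset.sum_le_sum fun i _ => ?_)
          rw [← Finset.sum_sub_distrib]
          refine (Finset.abs_sum_le_sum_abs _ _).trans (Finset.sum_le_sum fun j _ => ?_)
          rw [← mul_sub, ← mul_sub, abs_mul, abs_mul]
          have h1 := hin i
          have h2 := hin j
          have h3 := hdij i j
          gcongr
      _ = 3 * (n : ℝ) ^ 2 * Real.sqrt η * ‖v‖ ^ 2 := by
          simp only [Finset.sum_const, Finset.card_univ, Fintype.card_fin, nsmul_eq_mul]; ring
      _ ≤ _ := by
          have : 0 ≤ Real.sqrt η * ‖v‖ ^ 2 := by positivity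
          nlinarith

end step2


section step3
variable {n : ℕ}
open MeasureTheory

lemma vol_mul (x y : EE n) {k r : ℝ} (hk : 0 ≤ k) (hr : 0 ≤ r) :
    volume (Metric.closedBall x (k * r)) =
      ENNReal.ofReal (k ^ n) * volume (Metric.closedBall y r) := by
  rw [Measure.addHaar_closedBall_mul _ _ hk hr,
      Measure.addHaar_closedBall_center _ y, finrank_euclideanSpace_fin]

lemma exists_inter {q : ℕ} {T : ℕ → Set (EE n)} {R P : ℝ} (hR : 0 < R) (hP : 0 < P)
    (hm : ∀ k, MeasurableSet (T k)) (hsub : ∀ k, T k ⊆ Metric.closedBall 0 (4 * R))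
    (hv : ∀ k < q, volume (Metric.closedBall (0 : EE n) R) ≤ ENNReal.ofReal P * volume (T k))
    (hq : P * 4 ^ n < q) : ∃ i j, i < j ∧ j < q ∧ (T i ∩ T j).Nonempty := by
  set B := Metric.closedBall (0 : EE n) (4 * R) with hB
  have hB4 : volume B = ENNReal.ofReal (4 ^ n) * volume (Metric.closedBall (0 : EE n) R) := by
    exact vol_mul 0 0 (by norm_num) hR.le
  have hp : volume (Metric.closedBall (0 : EE n) R) ≠ 0 :=
    (Metric.measure_closedBall_pos _ _ hR).ne'
  have hf : volume (Metric.closedBall (0 : EE n) R) ≠ ⊤ := measure_closedBall_lt_top.ne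
  have hres : ∀ k, volume.restrict B (T k) = volume (T k) := by
    intro k
    rw [Measure.restrict_apply (hm k), Set.inter_eq_left.2 (hsub k)]
  have H : volume.restrict B Set.univ < ∑ i ∈ Finset.range q, volume.restrict B (T i) := by
    rw [Measure.restrict_apply_univ]
    simp only [hres]
    have h1 : ∑ i ∈ Finset.range q, volume (Metric.closedBall (0 : EE n) R) ≤
        ∑ i ∈ Finset.range q, ENNReal.ofReal P * volume (T i) :=
      Finset.sum_le_sum fun i hi => hv i (Finset.mem_range.1 hi)
    rw [Finset.sum_const, Finset.card_range, nsmul_eq_mul, ← Finset.mul_sum] at h1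
    by_contra hcon
    have h2 := h1.trans (mul_le_mul_right (not_lt.1 hcon) (ENNReal.ofReal P))
    rw [hB4, ← mul_assoc, ENNReal.mul_le_mul_iff_left hp hf, ← ENNReal.ofReal_mul hP.le,
      ← ENNReal.ofReal_natCast, ENNReal.ofReal_le_ofReal_iff (by positivity)] at h2
    linarith
  obtain ⟨i, hi, j, hj, hne, hinter⟩ := exists_nonempty_inter_of_measure_univ_lt_sum_measure
    (volume.restrict B) (fun i _ => (hm i).nullMeasurableSet) H
  rcases lt_or_gt_of_ne hne with h | h
  · exact ⟨i, j, h, Finset.mem_range.1 hj, hinter⟩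
  · exact ⟨j, i, h, Finset.mem_range.1 hi, by rwa [Set.inter_comm]⟩

theorem step3 {N₁ : ℝ} {m : ℕ} {D₁ D₂ c C₀ M : ℝ} (hN₁ : 0 < N₁) (hc : 0 < c) {u : EE n → ℝ}
    (A : EllData n N₁ m D₁ D₂ u) (hg : ∀ x, c * ‖x‖ ^ 2 - C₀ ≤ u x) (hM : 0 < M)
    (hb : ∀ x v, |dd v (dd v u) x| ≤ M * ‖v‖ ^ 2) {V : EE n → ℝ}
    (hV : ContDiff ℝ (⊤ : ℕ∞) V) (hV0 : ∀ x, 0 ≤ V x)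
    (hLV : ∀ x, A.L V x ≤ 0) (hinf : ∀ ε : ℝ, 0 < ε → ∃ x, V x ≤ ε) (ε : ℝ) (hε : 0 < ε) :
    ∃ x, V x ≤ ε ∧ ∀ v, c / 2 * ‖v‖ ^ 2 ≤ dd v (dd v u) x := by
  obtain ⟨K, P, hK, hP, hA⟩ := lemmaA hN₁ hc A hg
  obtain ⟨q, hq⟩ := exists_nat_gt (P * 4 ^ n)
  set G : ℝ := 1 + 2 * (K + M) / c with hG
  have hG1 : 1 ≤ G := by
    have : 0 ≤ 2 * (K + M) / c := by positivity
    linarith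
  obtain ⟨x0, hx0⟩ := hinf (ε / (6 * G ^ q)) (by positivity)
  obtain ⟨R, hR0, hR⟩ := hA V hV hV0 hLV x0
  set τ : ℕ → ℝ := fun k => 3 * c * R ^ 2 / ε * G ^ k with hτ
  have hτpos : ∀ k, 0 < τ k := fun k => by simp only [hτ]; positivity
  set T : ℕ → Set (EE n) := fun k => ({x : EE n | ‖x‖ ≤ 4 * R ∧ τ k * V x ≤ 3 * c * R ^ 2} ∩
            {x : EE n | ∀ v, c * ‖v‖ ^ 2 ≤ dd v (dd v (fun y => u y + τ k * V y)) x ∧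
              dd v (dd v (fun y => u y + τ k * V y)) x ≤ K * ‖v‖ ^ 2}) with hT
  have hU : ∀ k, ContDiff ℝ (⊤ : ℕ∞) (fun y => u y + τ k * V y) := fun k =>
    A.smooth.add (contDiff_const.mul hV)
  have hdd : ∀ k v x, dd v (dd v (fun y => u y + τ k * V y)) x =
      dd v (dd v u) x + τ k * dd v (dd v V) x := by
    intro k v x
    rw [dd_add A.smooth (contDiff_const.mul hV), dd_add (dd_smooth A.smooth _) (dd_smooth (contDiff_const.mul hV) _),
      dd_const_mul hV, dd_const_mul (dd_smooth hV _)]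
  obtain ⟨i, j, hij, hjq, x, hxi, hxj⟩ := exists_inter (T := T) (q := q) hR0 hP
    (by
      intro k
      refine ((IsClosed.inter ?_ ?_).inter (isClosed_hess (hU k) c K)).measurableSet
      · exact isClosed_le continuous_norm continuous_const
      · exact isClosed_le (continuous_const.mul hV.continuous) continuous_const)
    (by
      rintro k x ⟨⟨h, _⟩, _⟩
      simpa using h)
    (by
      intro k hk
      refine hR R (τ k) le_rfl (hτpos k).le ?_
      have h1 : G ^ k ≤ G ^ q := pow_le_pow_right₀ hG1 hk.le
      calc τ k * V x0 ≤ τ k * (ε / (6 * G ^ q)) := mul_le_mul_of_nonneg_left hx0 (hτpos k).le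
        _ = c * R ^ 2 / 2 * (G ^ k / G ^ q) := by
          simp only [hτ]; field_simp; ring
        _ ≤ c * R ^ 2 / 2 * 1 := by
          gcongr
          rw [div_le_one (by positivity)]; exact h1
        _ = _ := by ring)
    hq
  refine ⟨x, ?_, fun v => ?_⟩
  · have h1 := hxi.1.2
    have h2 : 3 * c * R ^ 2 / ε ≤ τ i := by
      simp only [hτ]
      have : 1 ≤ G ^ i := one_le_pow₀ hG1
      have h0 : 0 ≤ 3 * c * R ^ 2 / ε := by positivity
      nlinarith
    have h3 : 3 * c * R ^ 2 / ε * V x ≤ 3 * c * R ^ 2 :=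
      (mul_le_mul_of_nonneg_right h2 (hV0 x)).trans h1
    have h4 : 0 < 3 * c * R ^ 2 := by positivity
    rw [div_mul_eq_mul_div, div_le_iff₀ hε] at h3
    exact le_of_mul_le_mul_left h3 h4
  · have h1 := (hxi.2 v).1
    have h2 := (hxj.2 v).2
    rw [hdd] at h1 h2
    have h3 := (abs_le.1 (hb x v)).1
    have hGτ : τ i * (2 * (K + M) / c) ≤ τ j := by
      have e : τ i * G ≤ τ j := by
        simp only [hτ]
        rw [mul_assoc, ← pow_succ]
        gcongr
        omega
      have := hτpos i
      refine le_trans ?_ e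
      gcongr
      linarith
    -- τ j * HV ≤ (K+M) |v|²
    have h4 : τ j * dd v (dd v V) x ≤ (K + M) * ‖v‖ ^ 2 := by linarith
    have h5 : τ i * dd v (dd v V) x ≤ c / 2 * ‖v‖ ^ 2 := by
      rcases le_or_gt (dd v (dd v V) x) 0 with h | h
      · have := mul_nonpos_of_nonneg_of_nonpos (hτpos i).le h
        have : 0 ≤ c / 2 * ‖v‖ ^ 2 := by positivity
        linarith
      · have h6 := (mul_le_mul_of_nonneg_right hGτ h.le).trans h4
        have h7 : (2 * (K + M) / c) * (τ i * dd v (dd v V) x) ≤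
            (2 * (K + M) / c) * (c / 2 * ‖v‖ ^ 2) := by
          have : (2 * (K + M) / c) * (c / 2 * ‖v‖ ^ 2) = (K + M) * ‖v‖ ^ 2 := by field_simp
          rw [this]; linarith
        exact le_of_mul_le_mul_left h7 (by positivity)
    linarith

theorem step3' {N₁ : ℝ} {m : ℕ} {D₁ D₂ c C₀ M : ℝ} (hN₁ : 0 < N₁) (hc : 0 < c) {u : EE n → ℝ}
    (A : EllData n N₁ m D₁ D₂ u) (hg : ∀ x, c * ‖x‖ ^ 2 - C₀ ≤ u x) (hM : 0 < M)
    (hb : ∀ x v, |dd v (dd v u) x| ≤ M * ‖v‖ ^ 2) {V : EE n → ℝ} {C : ℝ} (hC : 0 < C)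
    (hV : ContDiff ℝ (⊤ : ℕ∞) V) (hV0 : ∀ x, 0 ≤ V x)
    (hLV : ∀ x, A.L V x ≤ 0) (hinf : ∀ ε : ℝ, 0 < ε → ∃ x, V x ≤ ε)
    (hosc : ∀ x y η, V x ≤ η → V y ≤ η → ∀ v,
        |dd v (dd v u) x - dd v (dd v u) y| ≤ C * Real.sqrt η * ‖v‖ ^ 2) :
    ∃ η0 l Q : ℝ, 0 < η0 ∧ 0 < l ∧ 0 < Q ∧ ∀ x, V x ≤ η0 → A.tr x ≤ Q ∧ ∀ i, l ≤ A.phi x i := by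
  set η0 : ℝ := (c / (4 * C)) ^ 2 with hη0
  have hη0p : 0 < η0 := by positivity
  set Q : ℝ := max 1 (4 / c) with hQ
  have hQ1 : 1 ≤ Q := le_max_left _ _
  refine ⟨η0, 1 / (N₁ * Q ^ m), Q, hη0p, by positivity, by linarith, fun x hx => ?_⟩
  obtain ⟨y, hy, hHy⟩ := step3 hN₁ hc A hg hM hb hV hV0 hLV hinf η0 hη0p
  have hs : Real.sqrt η0 = c / (4 * C) := Real.sqrt_sq (by positivity)
  have hH : ∀ v, c / 4 * ‖v‖ ^ 2 ≤ dd v (dd v u) x := by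
    intro v
    have h1 := (abs_le.1 (hosc x y η0 hx hy v)).1
    have h2 := hHy v
    have h3 : C * Real.sqrt η0 * ‖v‖ ^ 2 = c / 4 * ‖v‖ ^ 2 := by
      rw [hs]; field_simp
    rw [h3] at h1
    linarith
  have h1 := A.L_lower hH
  rw [A.L_u] at h1
  have htr : A.tr x ≤ Q := by
    refine le_trans ?_ (le_max_right _ _)
    rw [le_div_iff₀ hc]; linarith
  refine ⟨htr, fun i => ?_⟩
  have := A.condN x Q hQ1 htr i
  rw [div_le_iff₀ (by positivity)]; linarith

end step3


lemma J2.exp {g : ℝ → ℝ} {a b c : ℝ} (hg : J2 g a b c) :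
    J2 (fun t => Real.exp (g t)) (Real.exp a) (Real.exp a * b) (Real.exp a * (c + b ^ 2)) := by
  obtain ⟨h0, g', h1, h2, h3⟩ := hg
  refine ⟨by simp [h0], fun t => Real.exp (g t) * g' t, ?_, by simp [h0, h2], ?_⟩
  · filter_upwards [h1] with t ht using ht.exp
  · have := (h1.self_of_nhds.exp).mul h3
    refine this.congr_deriv ?_
    rw [h0, h2]; ring

section lemmaB
variable {n : ℕ} {N₁ : ℝ} {m : ℕ} {D₁ D₂ : ℝ} {u : EE n → ℝ}
open MeasureTheory

theorem lemmaP (A : EllData n N₁ m D₁ D₂ u) {V : EE n → ℝ}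
    (hV : ContDiff ℝ (⊤ : ℕ∞) V) (hV0 : ∀ x, 0 ≤ V x) (hLV : ∀ x, A.L V x ≤ 0)
    {η0 l Q : ℝ} (hl : 0 < l) (hQ : 0 < Q)
    (hell : ∀ x, V x ≤ η0 → A.tr x ≤ Q ∧ ∀ i, l ≤ A.phi x i)
    {x1 : EE n} {t r : ℝ} (ht : 0 < t) (hr : 0 < r) (htη : 2 * t ≤ η0) (hx1 : V x1 ≤ t) :
    volume (Metric.closedBall x1 r) ≤ ENNReal.ofReal ((2 + n * (Q / l)) ^ n) *
      volume ({x | V x ≤ 2 * t} ∩ Metric.closedBall x1 (3 * r)) := by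
  set a : ℝ := t / r ^ 2 with ha
  have hapos : 0 < a := by positivity
  have har : a * r ^ 2 = t := by rw [ha]; field_simp
  set K : ℝ := a * (1 + n * (Q / l)) with hK
  have hKpos : 0 < K := by positivity
  have e : (2 + n * (Q / l)) ^ n = (1 + |1 / a| * K) ^ n := by
    rw [abs_of_pos (by positivity), hK]; congr 1; field_simp; ring
  rw [e]
  have hsub : ({x | V x ≤ 2 * t} ∩ Metric.closedBall x1 (3 * r)) ∩
      {x : EE n | ∀ v, -K * ‖v‖ ^ 2 ≤ dd v (dd v V) x ∧ dd v (dd v V) x ≤ K * ‖v‖ ^ 2} ⊆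
      ({x | V x ≤ 2 * t} ∩ Metric.closedBall x1 (3 * r)) := Set.inter_subset_left
  refine le_trans ?_ (mul_le_mul_right (measure_mono hsub) _)
  refine area_lemma hV ?_ hKpos.le ?_ ?_
  · exact (((isClosed_le hV.continuous continuous_const).inter Metric.isClosed_closedBall).inter
      (isClosed_hess hV _ _)).measurableSet
  · rintro x ⟨_, hx⟩ v
    rw [abs_le]
    have := hx v
    constructor <;> linarith [this.1, this.2]
  · intro y hy
    have hyr : ‖y - x1‖ ≤ r := by simpa [dist_eq_norm] using hy
    have hyr2 : ‖x1 - y‖ ^ 2 ≤ r ^ 2 := by rw [norm_sub_rev]; gcongr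
    have hx1v : V x1 + a / 2 * ‖x1 - y‖ ^ 2 ≤ 3 / 2 * t := by
      have : a / 2 * ‖x1 - y‖ ^ 2 ≤ a / 2 * r ^ 2 := by gcongr
      linarith
    obtain ⟨x, hxr, hmin, hle⟩ := exists_interior_min (n := n)
      (h := fun x => V x + a / 2 * ‖x - y‖ ^ 2)
      (hV.continuous.add (by fun_prop)) (z := x1) (x1 := x1) (r := 3 * r)
      (by simp; linarith) (by
        intro x hx
        have h1 : 2 * r ≤ ‖x - y‖ := by
          have : ‖x - x1‖ ≤ ‖x - y‖ + ‖y - x1‖ := norm_sub_le_norm_sub_add_norm_sub x y x1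
          linarith
        have h2 : (2 * r) ^ 2 ≤ ‖x - y‖ ^ 2 := by gcongr
        have h3 : a / 2 * (2 * r) ^ 2 ≤ a / 2 * ‖x - y‖ ^ 2 := by gcongr
        have h4 := hV0 x
        nlinarith)
    have hVx : V x ≤ 3 / 2 * t := by
      have : 0 ≤ a / 2 * ‖x - y‖ ^ 2 := by positivity
      linarith
    have hH : ∀ v, -a * ‖v‖ ^ 2 ≤ dd v (dd v V) x := by
      intro v
      have := (touch_test hV hmin v).2
      linarith
    obtain ⟨htr, hφ⟩ := hell x (by linarith)
    have hub := A.ell_bound hV hl (S := a * Q) (by positivity) hφ hH (by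
      have := hLV x
      have : a * A.tr x ≤ a * Q := by gcongr
      linarith)
    refine ⟨x, ⟨⟨?_, ?_⟩, fun v => ⟨?_, ?_⟩⟩, ?_⟩
    · simp only [Set.mem_ofPred_eq]; linarith
    · simpa [dist_eq_norm] using hxr.le
    · refine le_trans ?_ (hH v)
      have : a ≤ K := by
        rw [hK]
        have : 0 ≤ a * (n * (Q / l)) := by positivity
        linarith
      gcongr
    · refine (hub v).trans ?_
      gcongr
      rw [hK]
      have : (n:ℝ) * (a * Q / l) = a * (n * (Q / l)) := by field_simp
      rw [this]; linarith
    · simp only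
      refine ext_inner_right ℝ fun w => ?_
      have := (touch_test hV hmin w).1
      rw [inner_add_left, inner_smul_left, inner_grad]
      rw [inner_sub_left] at this
      simp only [RCLike.conj_to_real]
      have hd : dd w V x = - (a * (inner ℝ x w - inner ℝ y w)) := by linarith
      rw [hd]; field_simp; ring

theorem barrier (A : EllData n N₁ m D₁ D₂ u) {V : EE n → ℝ}
    (hV : ContDiff ℝ (⊤ : ℕ∞) V) (hV0 : ∀ x, 0 ≤ V x) (hLV : ∀ x, A.L V x ≤ 0)
    {η0 l Q : ℝ} (hl : 0 < l) (hQ : 0 < Q)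
    (hell : ∀ x, V x ≤ η0 → A.tr x ≤ Q ∧ ∀ i, l ≤ A.phi x i) :
    ∃ C : ℝ, 1 < C ∧ ∀ (z x1 : EE n) (r t : ℝ), 0 < r → 0 < t → ‖x1 - z‖ ≤ 2 * r → V x1 ≤ t →
      C * t ≤ η0 → ∃ x2, ‖x2 - z‖ ≤ r / 2 ∧ V x2 ≤ C * t := by
  set α : ℝ := 2 * Q / l + 1 with hα
  have hαpos : 0 < α := by positivity
  set e4 := Real.exp (-(4 * α)) with he4
  set e9 := Real.exp (-(9 * α)) with he9
  have h49 : e9 < e4 := Real.exp_lt_exp.2 (by linarith)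
  have he9p : 0 < e9 := Real.exp_pos _
  have he41 : e4 < 1 := by
    rw [he4, Real.exp_lt_one_iff]; linarith
  refine ⟨2 / (e4 - e9), ?_, ?_⟩
  · rw [lt_div_iff₀ (by linarith)]; linarith
  intro z x1 r t hr ht hx1 hVx1 hCt
  set S : ℝ := 2 / (e4 - e9) * t with hS
  have hSpos : 0 < S := mul_pos (div_pos two_pos (by linarith)) ht
  have hSe : S * (e4 - e9) = 2 * t := by
    have : e4 - e9 ≠ 0 := by linarith
    rw [hS]; field_simp
  by_contra! hcon
  set β : ℝ := α / r ^ 2 with hβ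
  have hβpos : 0 < β := by positivity
  have hβr : β * r ^ 2 = α := by rw [hβ]; field_simp
  have hx1W : V x1 + (-S) * Real.exp ((-β) * ‖x1 - z‖ ^ 2) ≤ t - S * e4 := by
    have h1 : ‖x1 - z‖ ^ 2 ≤ (2 * r) ^ 2 := by gcongr
    have h2 : e4 ≤ Real.exp ((-β) * ‖x1 - z‖ ^ 2) := by
      refine Real.exp_le_exp.2 ?_
      nlinarith
    have h3 := mul_le_mul_of_nonneg_left h2 hSpos.le
    linarith
  obtain ⟨x, hxr, hmin, hle⟩ := exists_interior_min (n := n)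
      (h := fun x => V x + (-S) * Real.exp ((-β) * ‖x - z‖ ^ 2))
      (hV.continuous.add (by fun_prop)) (z := z) (x1 := x1) (r := 3 * r)
      (by linarith) (by
        intro x hx
        rw [hx]
        have h1 : (-β) * (3 * r) ^ 2 = -(9 * α) := by rw [← hβr]; ring
        rw [h1, ← he9]
        have := hV0 x
        nlinarith)
  set E := Real.exp ((-β) * ‖x - z‖ ^ 2) with hE
  have hEpos : 0 < E := Real.exp_pos _
  have hE1 : E ≤ 1 := Real.exp_le_one_iff.2 (by
    have : 0 ≤ β * ‖x - z‖ ^ 2 := by positivity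
    linarith)
  have hSe9 : 0 < S * e9 := by positivity
  have hVxS : V x ≤ S := by
    have : S * E ≤ S * 1 := by gcongr
    nlinarith
  obtain ⟨htr, hφ⟩ := hell x (hVxS.trans hCt)
  have hxr2 : r / 2 < ‖x - z‖ := by
    by_contra h
    have := hcon x (not_lt.1 h)
    linarith
  have hHv : ∀ v, S * E * (4 * β ^ 2 * inner ℝ (x - z) v ^ 2 - 2 * β * ‖v‖ ^ 2) ≤
      dd v (dd v V) x := by
    intro v
    have j := (J2_line hV x v).add (((J2_normsq (x - z) v).const_mul (-β)).exp.const_mul (-S))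
    have rr := j.localMin (by
      have := (tendsto_line x v).eventually hmin
      filter_upwards [this] with t ht
      have e : x - z + t • v = x + t • v - z := by abel
      simp only [e]
      simpa using ht)
    have := rr.2
    rw [← hE] at this
    linarith
  have hsum : S * E * (4 * β ^ 2 * (l * ‖x - z‖ ^ 2) - 2 * β * Q) ≤ A.L V x := by
    have h1 : ∑ i, A.phi x i * (S * E * (4 * β ^ 2 * inner ℝ (x - z) (A.b x i) ^ 2 - 2 * β)) ≤
        A.L V x := by
      unfold EllData.L
      refine Finset.sum_le_sum fun i _ => ?_
      have := hHv (A.b x i)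
      rw [A.norm_b] at this
      refine mul_le_mul_of_nonneg_left ?_ (A.pos x i).le
      linarith
    have h2 : ∑ i, A.phi x i * (S * E * (4 * β ^ 2 * inner ℝ (x - z) (A.b x i) ^ 2 - 2 * β)) =
        S * E * (4 * β ^ 2 * ∑ i, A.phi x i * inner ℝ (x - z) (A.b x i) ^ 2 - 2 * β * A.tr x) := by
      unfold EllData.tr
      simp only [mul_sub, Finset.mul_sum, ← Finset.sum_sub_distrib]
      refine Finset.sum_congr rfl fun i _ => ?_
      ring
    have h3 : l * ‖x - z‖ ^ 2 ≤ ∑ i, A.phi x i * inner ℝ (x - z) (A.b x i) ^ 2 := by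
      rw [← (A.b x).sum_sq_inner_left (x - z), Finset.mul_sum]
      refine Finset.sum_le_sum fun i _ => ?_
      exact mul_le_mul_of_nonneg_right (hφ i) (sq_nonneg _)
    refine le_trans ?_ h1
    rw [h2]
    refine mul_le_mul_of_nonneg_left ?_ (by positivity)
    have h4 : 4 * β ^ 2 * (l * ‖x - z‖ ^ 2) ≤
      4 * β ^ 2 * ∑ i, A.phi x i * inner ℝ (x - z) (A.b x i) ^ 2 := by gcongr
    have h5 : 2 * β * A.tr x ≤ 2 * β * Q := by gcongr
    linarith
  have hpos : 0 < 4 * β ^ 2 * (l * ‖x - z‖ ^ 2) - 2 * β * Q := by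
    have h1 : (r / 2) ^ 2 ≤ ‖x - z‖ ^ 2 := by gcongr
    have h2 : 4 * β ^ 2 * (l * (r / 2) ^ 2) ≤ 4 * β ^ 2 * (l * ‖x - z‖ ^ 2) := by gcongr
    have h3 : 4 * β ^ 2 * (l * (r / 2) ^ 2) = β * (l * α) := by rw [← hβr]; ring
    have h4 : l * α = 2 * Q + l := by rw [hα]; field_simp
    rw [h3, h4] at h2
    have : 0 < β * l := by positivity
    nlinarith
  have := hLV x
  have h0 : 0 < S * E * (4 * β ^ 2 * (l * ‖x - z‖ ^ 2) - 2 * β * Q) := by positivity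
  linarith

theorem lemmaB (A : EllData n N₁ m D₁ D₂ u) {V : EE n → ℝ}
    (hV : ContDiff ℝ (⊤ : ℕ∞) V) (hV0 : ∀ x, 0 ≤ V x) (hLV : ∀ x, A.L V x ≤ 0)
    {η0 l Q : ℝ} (hl : 0 < l) (hQ : 0 < Q)
    (hell : ∀ x, V x ≤ η0 → A.tr x ≤ Q ∧ ∀ i, l ≤ A.phi x i) :
    ∃ G P : ℝ, 1 < G ∧ 0 < P ∧ ∀ (z x1 : EE n) (r t : ℝ), 0 < r → 0 < t → ‖x1 - z‖ ≤ 2 * r →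
      V x1 ≤ t → G * t ≤ η0 → volume (Metric.closedBall z r) ≤
        ENNReal.ofReal P * volume ({x | V x ≤ G * t} ∩ Metric.closedBall z r) := by
  obtain ⟨C, hC, hbar⟩ := barrier A hV hV0 hLV hl hQ hell
  refine ⟨2 * C, 6 ^ n * (2 + n * (Q / l)) ^ n, by linarith, by positivity, ?_⟩
  intro z x1 r t hr ht hx1 hVx1 hG
  obtain ⟨x2, hx2, hVx2⟩ := hbar z x1 r t hr ht hx1 hVx1 (by nlinarith)
  have h1 := lemmaP A hV hV0 hLV hl hQ hell (x1 := x2) (t := C * t) (r := r / 6) (by positivity)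
    (by positivity) (by linarith) hVx2
  have h2 : volume (Metric.closedBall z r) =
      ENNReal.ofReal (6 ^ n) * volume (Metric.closedBall x2 (r / 6)) := by
    rw [← vol_mul z x2 (by norm_num) (by positivity)]
    congr 2; ring
  rw [h2, ENNReal.ofReal_mul (by positivity), mul_assoc]
  refine mul_le_mul_right (h1.trans (mul_le_mul_right (measure_mono ?_) _)) _
  rintro x ⟨hx, hx'⟩
  refine ⟨?_, ?_⟩
  · simp only [Set.mem_ofPred_eq] at hx ⊢; linarith
  · rw [Metric.mem_closedBall] at hx' ⊢
    have := dist_triangle x x2 z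
    rw [dist_eq_norm x2 z] at this
    linarith

end lemmaB


section vitali
variable {n : ℕ}
open MeasureTheory

theorem vitali_step {V : EE n → ℝ} (hVc : Continuous V) {η0 G P : ℝ} (hP : 0 < P)
    (hB : ∀ (z x1 : EE n) (r t : ℝ), 0 < r → 0 < t → ‖x1 - z‖ ≤ 2 * r →
      V x1 ≤ t → G * t ≤ η0 → volume (Metric.closedBall z r) ≤
        ENNReal.ofReal P * volume ({x | V x ≤ G * t} ∩ Metric.closedBall z r))
    {t R : ℝ} (ht : 0 < t) (hGt : G * t ≤ η0) {x0 : EE n} (hx0 : V x0 ≤ t) (hx0R : ‖x0‖ ≤ R) :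
    volume ({x | t < V x} ∩ Metric.closedBall 0 R) ≤ ENNReal.ofReal (5 ^ n * P) *
      volume ({x | t < V x ∧ V x ≤ G * t} ∩ Metric.closedBall 0 (2 * R)) := by
  set F : Set (EE n) := {x | V x ≤ t} with hF
  have hFc : IsClosed F := isClosed_le hVc continuous_const
  have hFne : F.Nonempty := ⟨x0, hx0⟩
  set E : Set (EE n) := {x | t < V x} ∩ Metric.closedBall 0 R with hE
  set r : EE n → ℝ := fun z => Metric.infDist z F / 2 with hr
  have hrpos : ∀ z ∈ E, 0 < r z := by
    intro z hz
    have : z ∉ F := fun h => absurd (show V z ≤ t from h) (not_le.2 hz.1)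
    have := (hFc.notMem_iff_infDist_pos hFne).1 this
    simp only [hr]; linarith
  have hnear : ∀ z, ∃ x1, V x1 ≤ t ∧ ‖x1 - z‖ ≤ 2 * r z := by
    intro z
    obtain ⟨y, hy, hd⟩ := hFc.exists_infDist_eq_dist hFne z
    refine ⟨y, hy, ?_⟩
    rw [← dist_eq_norm, dist_comm, ← hd]
    simp only [hr]; linarith
  have hrR : ∀ z ∈ E, r z ≤ R := by
    intro z hz
    have h1 := Metric.infDist_le_dist_of_mem (x := z) (s := F) (y := x0) hx0
    have h2 : ‖z‖ ≤ R := by simpa using hz.2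
    have h3 : dist z x0 ≤ ‖z‖ + ‖x0‖ := by rw [dist_eq_norm]; exact norm_sub_le _ _
    simp only [hr]; linarith
  have hball : ∀ z ∈ E, Metric.closedBall z (r z) ⊆ {x | t < V x} ∩ Metric.closedBall 0 (2 * R) := by
    intro z hz x hx
    constructor
    · simp only [Set.mem_ofPred_eq]
      by_contra h
      have h1 := Metric.infDist_le_dist_of_mem (x := z) (s := F) (y := x) (not_lt.1 h)
      have h2 := hrpos z hz
      rw [Metric.mem_closedBall, dist_comm] at hx
      simp only [hr] at hx h2
      linarith
    · have h2 : ‖z‖ ≤ R := by simpa using hz.2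
      have h3 := hrR z hz
      have h4 := dist_triangle x z 0
      rw [Metric.mem_closedBall] at hx ⊢
      rw [dist_zero_right z] at h4
      linarith
  obtain ⟨W, hWE, hdis, hcov⟩ := Vitali.exists_disjoint_subfamily_covering_enlargement_closedBall
    E (fun z => z) r R hrR 5 (by norm_num)
  have hcount : W.Countable := by
    refine hdis.countable_of_nonempty_interior fun z hz => ?_
    exact ⟨z, Metric.ball_subset_interior_closedBall (Metric.mem_ball_self (hrpos z (hWE hz)))⟩
  set Ly : Set (EE n) := {x | t < V x ∧ V x ≤ G * t} ∩ Metric.closedBall 0 (2 * R) with hLy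
  have hEsub : E ⊆ ⋃ z ∈ W, Metric.closedBall z (5 * r z) := by
    intro x hx
    obtain ⟨b, hb, hsub⟩ := hcov x hx
    exact Set.mem_biUnion hb (hsub (Metric.mem_closedBall_self (hrpos x hx).le))
  have hone : ∀ z ∈ W, volume (Metric.closedBall z (5 * r z)) ≤
      ENNReal.ofReal (5 ^ n * P) * volume (Ly ∩ Metric.closedBall z (r z)) := by
    intro z hz
    have hzE := hWE hz
    obtain ⟨x1, hx1, hx1d⟩ := hnear z
    have h1 := hB z x1 (r z) t (hrpos z hzE) ht hx1d hx1 hGt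
    rw [vol_mul z z (by norm_num) (hrpos z hzE).le, ENNReal.ofReal_mul (by positivity), mul_assoc]
    refine mul_le_mul_right (h1.trans (mul_le_mul_right (measure_mono ?_) _)) _
    rintro x ⟨hx, hx'⟩
    have h2 := hball z hzE hx'
    exact ⟨⟨⟨h2.1, hx⟩, h2.2⟩, hx'⟩
  have hLm : MeasurableSet Ly := by
    refine MeasurableSet.inter (MeasurableSet.inter ?_ ?_) Metric.isClosed_closedBall.measurableSet
    · exact (isOpen_lt continuous_const hVc).measurableSet
    · exact (isClosed_le hVc continuous_const).measurableSet
  calc volume E ≤ volume (⋃ z ∈ W, Metric.closedBall z (5 * r z)) := measure_mono hEsub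
    _ ≤ ∑' z : W, volume (Metric.closedBall (z : EE n) (5 * r z)) := measure_biUnion_le _ hcount _
    _ ≤ ∑' z : W, ENNReal.ofReal (5 ^ n * P) * volume (Ly ∩ Metric.closedBall (z : EE n) (r z)) :=
      ENNReal.tsum_le_tsum fun z => hone z z.2
    _ = ENNReal.ofReal (5 ^ n * P) * ∑' z : W, volume (Ly ∩ Metric.closedBall (z : EE n) (r z)) :=
      ENNReal.tsum_mul_left
    _ = ENNReal.ofReal (5 ^ n * P) * volume (⋃ z ∈ W, Ly ∩ Metric.closedBall z (r z)) := by
      rw [measure_biUnion hcount]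
      · intro a ha b hb hab
        exact (hdis ha hb hab).mono Set.inter_subset_right Set.inter_subset_right
      · intro z _
        exact hLm.inter Metric.isClosed_closedBall.measurableSet
    _ ≤ _ := by
      refine mul_le_mul_right (measure_mono ?_) _
      exact Set.iUnion₂_subset fun z _ => Set.inter_subset_left

theorem density {V : EE n → ℝ} (hVc : Continuous V) {η0 G P : ℝ} (hG : 1 < G) (hP : 0 < P)
    (hB : ∀ (z x1 : EE n) (r t : ℝ), 0 < r → 0 < t → ‖x1 - z‖ ≤ 2 * r →
      V x1 ≤ t → G * t ≤ η0 → volume (Metric.closedBall z r) ≤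
        ENNReal.ofReal P * volume ({x | V x ≤ G * t} ∩ Metric.closedBall z r))
    (hinf : ∀ ε : ℝ, 0 < ε → ∃ x, V x ≤ ε) {ε η : ℝ} (hε : 0 < ε) (hη : 0 < η) (hη0 : η ≤ η0) :
    ∃ R1 : ℝ, 0 < R1 ∧ ∀ R, R1 ≤ R → volume ({x | η < V x} ∩ Metric.closedBall 0 R) ≤
      ENNReal.ofReal ε * volume (Metric.closedBall (0 : EE n) R) := by
  obtain ⟨K, hK⟩ := exists_nat_gt (5 ^ n * P * 2 ^ n / ε)
  have hGpos : 0 < G := by linarith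
  have hKpos : (0:ℝ) < K := lt_of_le_of_lt (by positivity) hK
  rw [div_lt_iff₀ hε] at hK
  obtain ⟨x0, hx0⟩ := hinf (η / G ^ K) (by positivity)
  refine ⟨‖x0‖ + 1, by positivity, fun R hR => ?_⟩
  have hRpos : 0 < R := by have := norm_nonneg x0; linarith
  set E := {x | η < V x} ∩ Metric.closedBall (0 : EE n) R with hE
  set t : ℕ → ℝ := fun k => η / G ^ (k + 1) with ht
  have htpos : ∀ k, 0 < t k := fun k => by simp only [ht]; positivity
  have hGt : ∀ k, G * t k = η / G ^ k := by
    intro k; simp only [ht]; rw [pow_succ]; field_simp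
  have htle : ∀ k, η / G ^ k ≤ η := fun k => div_le_self hη.le (one_le_pow₀ hG.le)
  set Ly : ℕ → Set (EE n) := fun k =>
    {x | t k < V x ∧ V x ≤ G * t k} ∩ Metric.closedBall 0 (2 * R) with hLy
  have h1 : ∀ k ∈ Finset.range K, volume E ≤ ENNReal.ofReal (5 ^ n * P) * volume (Ly k) := by
    intro k hk
    have hkK := Finset.mem_range.1 hk
    have hx0k : V x0 ≤ t k := by
      refine hx0.trans ?_
      simp only [ht]
      gcongr
      · exact hG.le
      · omega
    have := vitali_step hVc hP hB (htpos k) (by rw [hGt]; exact (htle k).trans hη0) hx0k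
      (R := R) (by linarith)
    refine le_trans (measure_mono ?_) this
    rintro x ⟨hx, hx'⟩
    exact ⟨lt_of_le_of_lt (htle (k + 1)) hx, hx'⟩
  have h2 := Finset.sum_le_sum h1
  rw [Finset.sum_const, Finset.card_range, nsmul_eq_mul, ← Finset.mul_sum] at h2
  have h3 : ∑ k ∈ Finset.range K, volume (Ly k) ≤ volume (Metric.closedBall (0 : EE n) (2 * R)) := by
    rw [← measure_biUnion_finset]
    · refine measure_mono ?_
      exact Set.iUnion₂_subset fun z _ => Set.inter_subset_right
    · have aux : ∀ i j, i < j → Disjoint (Ly i) (Ly j) := by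
        intro i j hij
        rw [Set.disjoint_left]
        rintro x ⟨⟨hx1, _⟩, _⟩ ⟨⟨_, hx2⟩, _⟩
        rw [hGt] at hx2
        have : η / G ^ j ≤ t i := by
          simp only [ht]
          gcongr
          · exact hG.le
          · omega
        linarith
      intro i _ j _ hij
      rcases lt_or_gt_of_ne hij with h | h
      · exact aux i j h
      · exact (aux j i h).symm
    · intro k _
      refine MeasurableSet.inter (MeasurableSet.inter ?_ ?_)
        Metric.isClosed_closedBall.measurableSet
      · exact (isOpen_lt continuous_const hVc).measurableSet
      · exact (isClosed_le hVc continuous_const).measurableSet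
  have h4 := h2.trans (mul_le_mul_right h3 _)
  rw [vol_mul 0 0 (by norm_num) hRpos.le, ← mul_assoc, ← ENNReal.ofReal_mul (by positivity)] at h4
  have h5 : ENNReal.ofReal (5 ^ n * P * 2 ^ n) * volume (Metric.closedBall (0 : EE n) R) ≤
      (K : ENNReal) * (ENNReal.ofReal ε * volume (Metric.closedBall (0 : EE n) R)) := by
    rw [← mul_assoc, ← ENNReal.ofReal_natCast, ← ENNReal.ofReal_mul hKpos.le]
    exact mul_le_mul_left (ENNReal.ofReal_le_ofReal hK.le) _
  have h6 := h4.trans h5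
  refine (ENNReal.mul_le_mul_iff_right ?_ (ENNReal.natCast_ne_top K)).1 h6
  have : K ≠ 0 := by rintro rfl; simp at hKpos
  exact_mod_cast this

end vitali


section step5
variable {n : ℕ}
open MeasureTheory

theorem hess_const [NeZero n] {N₁ : ℝ} {m : ℕ} {D₁ D₂ c C₀ : ℝ} (hN₁ : 0 < N₁)
    (hD₁ : 0 < D₁) (hD₂ : 0 < D₂) (hc : 0 < c) {u : EE n → ℝ} (A : EllData n N₁ m D₁ D₂ u)
    (hg : ∀ x, c * ‖x‖ ^ 2 - C₀ ≤ u x) (x y v : EE n) :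
    dd v (dd v u) x = dd v (dd v u) y := by
  obtain ⟨M, hM, hb⟩ := global_hess_bound hN₁ hD₁ hD₂ hc A hg
  obtain ⟨V, C, hC, hV, hV0, hLV, hinf, hosc⟩ := exists_V A hM hb
  obtain ⟨η0, l, Q, hη0, hl, hQ, hell⟩ :=
    step3' hN₁ hc A hg hM hb hC hV hV0 hLV hinf hosc
  obtain ⟨G, P', hG, hP', hB⟩ := lemmaB A hV hV0 hLV hl hQ hell
  obtain ⟨K, P, hK, hP, hA⟩ := lemmaA hN₁ hc A hg
  -- upper bound
  have up : ∀ η, 0 < η → η ≤ η0 → ∀ xs, V xs ≤ η → ∀ y e,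
      dd e (dd e u) y ≤ dd e (dd e u) xs + C * Real.sqrt η * ‖e‖ ^ 2 := by
    intro η hη hηη xs hxs y e
    have hbdd : BddAbove (Set.range fun x => dd e (dd e u) x) := by
      refine ⟨M * ‖e‖ ^ 2, ?_⟩
      rintro _ ⟨x, rfl⟩
      exact (abs_le.1 (hb x e)).2
    set Me := sSup (Set.range fun x => dd e (dd e u) x) with hMe
    have hle : ∀ x, dd e (dd e u) x ≤ Me := fun x => le_csSup hbdd ⟨x, rfl⟩
    have hs : ContDiff ℝ (⊤ : ℕ∞) (dd e (dd e u)) := dd_smooth (dd_smooth A.smooth e) e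
    refine le_of_forall_pos_le_add fun δ' hδ' => ?_
    set δ := δ' / 6 with hδdef
    have hδ : 0 < δ := by positivity
    obtain ⟨_, ⟨x0, rfl⟩, hx0⟩ := exists_lt_of_lt_csSup
      (⟨_, ⟨0, rfl⟩⟩ : (Set.range fun x => dd e (dd e u) x).Nonempty)
      (show Me - δ < sSup (Set.range fun x => dd e (dd e u) x) by rw [← hMe]; linarith)
    simp only at hx0
    obtain ⟨R0, hR0, hA2⟩ := hA (fun x => Me - dd e (dd e u) x) (contDiff_const.sub hs)
      (fun x => by linarith [hle x]) (fun x => by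
        rw [A.L_const_sub]
        linarith [(A.bilin_test x e).2]) x0
    have hε : 0 < 1 / (2 * P * 4 ^ n) := by positivity
    obtain ⟨R1, hR1, hden⟩ := density hV.continuous hG hP' hB hinf hε hη hηη
    set R := max R0 R1 with hR
    have hRpos : 0 < R := lt_of_lt_of_le hR0 (le_max_left _ _)
    set τ : ℝ := c * R ^ 2 / (2 * δ) with hτ
    have hτpos : 0 < τ := by positivity
    have h1 := hA2 R τ (le_max_left _ _) hτpos.le (by
      have : τ * (Me - dd e (dd e u) x0) ≤ τ * δ := by gcongr; linarith
      have h2 : τ * δ = c * R ^ 2 / 2 := by rw [hτ]; field_simp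
      linarith)
    have h2 := hden (4 * R) (by
      have := le_max_right R0 R1
      linarith)
    rw [vol_mul 0 0 (by norm_num) hRpos.le, ← mul_assoc, ← ENNReal.ofReal_mul hε.le] at h2
    have hp : volume (Metric.closedBall (0 : EE n) R) ≠ 0 :=
      (Metric.measure_closedBall_pos _ _ hRpos).ne'
    have hf : volume (Metric.closedBall (0 : EE n) R) ≠ ⊤ := measure_closedBall_lt_top.ne
    have hex : ∃ x, V x ≤ η ∧ τ * (Me - dd e (dd e u) x) ≤ 3 * c * R ^ 2 := by
      by_contra! hcon
      have hsub := measure_mono (μ := (volume : Measure (EE n))) (show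
        ({x : EE n | ‖x‖ ≤ 4 * R ∧ τ * (Me - dd e (dd e u) x) ≤ 3 * c * R ^ 2} ∩
            {x : EE n | ∀ v, c * ‖v‖ ^ 2 ≤ dd v (dd v (fun y => u y + τ * (Me - dd e (dd e u) y))) x ∧
              dd v (dd v (fun y => u y + τ * (Me - dd e (dd e u) y))) x ≤ K * ‖v‖ ^ 2}) ⊆
          {x | η < V x} ∩ Metric.closedBall (0 : EE n) (4 * R) by
        rintro x ⟨⟨hx1, hx2⟩, _⟩
        refine ⟨?_, by simpa using hx1⟩
        simp only [Set.mem_ofPred_eq]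
        by_contra h
        have := hcon x (not_lt.1 h)
        linarith)
      have h3 := h1.trans (mul_le_mul_right (hsub.trans h2) _)
      rw [← mul_assoc, ← ENNReal.ofReal_mul hP.le] at h3
      have h4 : P * (1 / (2 * P * 4 ^ n) * 4 ^ n) = 1 / 2 := by field_simp
      rw [h4] at h3
      have h5 : (1 : ENNReal) * volume (Metric.closedBall (0 : EE n) R) ≤
        ENNReal.ofReal (1 / 2) * volume (Metric.closedBall (0 : EE n) R) := by rwa [one_mul]
      rw [ENNReal.mul_le_mul_iff_left hp hf, ← ENNReal.ofReal_one,
        ENNReal.ofReal_le_ofReal_iff (by norm_num)] at h5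
      norm_num at h5
    obtain ⟨x, hx1, hx2⟩ := hex
    have hx3 : Me - dd e (dd e u) x ≤ δ' := by
      have h3 : τ * δ' = 3 * c * R ^ 2 := by
        rw [hτ, hδdef]; field_simp; ring
      rw [← h3] at hx2
      exact le_of_mul_le_mul_left hx2 hτpos
    have h6 := (abs_le.1 (hosc x xs η hx1 hxs e)).2
    linarith [hle y]
  have two : ∀ η, 0 < η → η ≤ η0 → ∀ xs, V xs ≤ η → ∀ y e,
      |dd e (dd e u) y - dd e (dd e u) xs| ≤ C * Real.sqrt η * (1 + n * (Q / l)) * ‖e‖ ^ 2 := by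
    intro η hη hηη xs hxs y e
    set κ := C * Real.sqrt η with hκ
    have hκ0 : 0 ≤ κ := by positivity
    obtain ⟨htr, hφ⟩ := hell xs (hxs.trans hηη)
    set g : EE n → ℝ := fun w => u w + (-1) * u ((y - xs) + (1:ℝ) • w) with hgdef
    have hu2 : ContDiff ℝ (⊤ : ℕ∞) (fun w => u ((y - xs) + (1:ℝ) • w)) :=
      A.smooth.comp (contDiff_const.add (contDiff_id.const_smul _))
    have hgs : ContDiff ℝ (⊤ : ℕ∞) g := A.smooth.add (contDiff_const.mul hu2)
    have hdd : ∀ e, dd e (dd e g) xs = dd e (dd e u) xs - dd e (dd e u) y := by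
      intro e
      rw [hgdef, dd_add A.smooth (contDiff_const.mul hu2),
        dd_add (dd_smooth A.smooth _) (dd_smooth (contDiff_const.mul hu2) _),
        dd_const_mul hu2, dd_const_mul (dd_smooth hu2 _), dd_comp_affine A.smooth]
      simp only [one_mul]
      rw [dd_comp_affine (dd_smooth A.smooth _)]
      simp only [one_mul, one_smul, sub_add_cancel]
      ring
    have hp : ∀ v, -κ * ‖v‖ ^ 2 ≤ dd v (dd v g) xs := by
      intro v
      rw [hdd]
      have := up η hη hηη xs hxs y v
      linarith
    have hL : A.L g xs ≤ 0 := by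
      have h1 := A.comp xs y (A.b xs)
      have h2 := A.L_u xs
      have h3 : A.L g xs = A.L u xs - ∑ i, A.phi xs i * dd (A.b xs i) (dd (A.b xs i) u) y := by
        unfold EllData.L
        rw [← Finset.sum_sub_distrib]
        refine Finset.sum_congr rfl fun i _ => ?_
        rw [hdd]; ring
      linarith
    have hub := A.ell_bound hgs hl (S := κ * Q) (by positivity) hφ hp (by
      have : κ * A.tr xs ≤ κ * Q := by gcongr
      linarith) e
    rw [hdd] at hub
    have h1 := hp e
    rw [hdd] at h1
    have e1 : κ * (1 + n * (Q / l)) * ‖e‖ ^ 2 = κ * ‖e‖ ^ 2 + n * (κ * Q / l) * ‖e‖ ^ 2 := by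
      field_simp
    have h2 : 0 ≤ n * (κ * Q / l) * ‖e‖ ^ 2 := by positivity
    have h3 : 0 ≤ κ * ‖e‖ ^ 2 := by positivity
    rw [e1, abs_le]
    constructor <;> linarith
  -- conclude
  by_contra hne
  set d := |dd v (dd v u) x - dd v (dd v u) y| with hd
  have hdpos : 0 < d := abs_pos.2 (sub_ne_zero.2 hne)
  set B := 2 * (C * (1 + n * (Q / l)) * ‖v‖ ^ 2) + 1 with hBdef
  have hBpos : 0 < B := by positivity
  set η := min η0 ((d / B) ^ 2) with hη
  have hηpos : 0 < η := lt_min hη0 (by positivity)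
  obtain ⟨xs, hxs⟩ := hinf η hηpos
  have h1 := two η hηpos (min_le_left _ _) xs hxs x v
  have h2 := two η hηpos (min_le_left _ _) xs hxs y v
  have h3 : Real.sqrt η ≤ d / B := by
    rw [Real.sqrt_le_left (by positivity)]
    exact min_le_right _ _
  have h4 : d ≤ Real.sqrt η * (B - 1) := by
    have h5 := abs_sub_le (dd v (dd v u) x) (dd v (dd v u) xs) (dd v (dd v u) y)
    rw [abs_sub_comm (dd v (dd v u) xs)] at h5
    have : Real.sqrt η * (B - 1) = 2 * (C * Real.sqrt η * (1 + n * (Q / l)) * ‖v‖ ^ 2) := by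
      rw [hBdef]; ring
    linarith
  have hB1 : 0 ≤ B - 1 := by rw [hBdef]; simp only [add_sub_cancel_right]; positivity
  have h5 : Real.sqrt η * (B - 1) ≤ d / B * (B - 1) := by gcongr
  have h6 : d / B * (B - 1) = d - d / B := by field_simp
  have h7 : 0 < d / B := by positivity
  linarith

end step5

section final
variable {n : ℕ}

lemma taylor_const {u : EE n → ℝ} (hu : ContDiff ℝ (⊤ : ℕ∞) u)
    (h : ∀ x y v, dd v (dd v u) x = dd v (dd v u) y) (x : EE n) :
    u x = (1 / 2) * dd x (dd x u) 0 + dd x u 0 + u 0 := by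
  set k := dd x (dd x u) 0 with hk
  have h1 : ∀ t : ℝ, HasDerivAt (fun s : ℝ => dd x u ((0 : EE n) + s • x) - k * s) 0 t := by
    intro t
    have := (dd_line (dd_smooth hu x) 0 x t).sub ((hasDerivAt_id t).const_mul k)
    rw [h _ 0 x, ← hk] at this
    refine this.congr_deriv ?_
    simp
  have h2 : ∀ t : ℝ, dd x u ((0 : EE n) + t • x) = k * t + dd x u 0 := by
    intro t
    have := is_const_of_deriv_eq_zero (fun t => (h1 t).differentiableAt) (fun t => (h1 t).deriv) t 0
    simp at this ⊢
    linarith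
  have h3 : ∀ t : ℝ, HasDerivAt (fun s : ℝ => u ((0 : EE n) + s • x) - (k / 2 * s ^ 2 + dd x u 0 * s))
      0 t := by
    intro t
    have := (dd_line hu 0 x t).sub ((((hasDerivAt_id t).pow 2).const_mul (k / 2)).add
      ((hasDerivAt_id t).const_mul (dd x u 0)))
    rw [h2] at this
    refine this.congr_deriv ?_
    simp; ring
  have := is_const_of_deriv_eq_zero (fun t => (h3 t).differentiableAt) (fun t => (h3 t).deriv) 1 0
  simp at this
  linarith

lemma hessianMatrix_apply {u : EE n → ℝ} (hu : ContDiff ℝ (⊤ : ℕ∞) u) (x : EE n) (i j : Fin n) :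
    hessianMatrix u x i j = dd (EuclideanSpace.single i 1) (dd (EuclideanSpace.single j 1) u) x := by
  rw [dd_dd_eq hu, hessianMatrix, iteratedFDeriv_two_apply]
  simp

lemma hess_symm {u : EE n → ℝ} (hu : ContDiff ℝ (⊤ : ℕ∞) u) (x : EE n) :
    (hessianMatrix u x).IsHermitian := by
  ext i j
  simp only [Matrix.conjTranspose_apply, star_trivial]
  rw [hessianMatrix_apply hu, hessianMatrix_apply hu, dd_comm hu]

lemma dd_dd_matrix {u : EE n → ℝ} (hu : ContDiff ℝ (⊤ : ℕ∞) u) (x v w : EE n) :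
    dd v (dd w u) x = ∑ i, v i * (Matrix.mulVec (hessianMatrix u x) (fun j => w j)) i := by
  have hv : ∀ v : EE n, v = ∑ i, v i • EuclideanSpace.single i (1 : ℝ) := by
    intro v
    have := (EuclideanSpace.basisFun (Fin n) ℝ).sum_repr v
    simpa using this.symm
  have h1 : dd v (dd w u) x = ∑ i, v i * dd (EuclideanSpace.single i 1) (dd w u) x := by
    conv_lhs => rw [hv v]
    rw [dd_sum_vec]
  rw [h1]
  refine Finset.sum_congr rfl fun i _ => ?_
  congr 1
  rw [dd_comm hu]
  conv_lhs => rw [hv w]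
  rw [dd_sum_vec]
  simp only [Matrix.mulVec, dotProduct]
  refine Finset.sum_congr rfl fun j _ => ?_
  rw [hessianMatrix_apply hu, dd_comm hu]; ring

lemma clm_pi (l : (Fin n → ℝ) →L[ℝ] ℝ) (v : Fin n → ℝ) : l v = ∑ i, l (Pi.single i 1) * v i := by
  conv_lhs => rw [pi_eq_sum_univ' v]
  rw [map_sum]
  refine Finset.sum_congr rfl fun i _ => ?_
  rw [map_smul, smul_eq_mul, mul_comm]

/-- tangent inequality for concave functions -/
lemma concave_tangent {Γ : Set (Fin n → ℝ)} {f : (Fin n → ℝ) → ℝ} (hf : ConcaveOn ℝ Γ f)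
    {a d : Fin n → ℝ} (ha : a ∈ Γ) (hd : d ∈ Γ) (hda : DifferentiableAt ℝ f a) :
    f d - f a ≤ fderiv ℝ f a (d - a) := by
  have h1 : HasDerivAt (fun t : ℝ => f (a + t • (d - a))) (fderiv ℝ f a (d - a)) 0 := by
    have h2 : HasDerivAt (fun s : ℝ => a + s • (d - a)) (d - a) 0 := by
      simpa using ((hasDerivAt_id (0:ℝ)).smul_const (d - a)).const_add a
    have h3 : HasFDerivAt f (fderiv ℝ f a) (a + (0:ℝ) • (d - a)) := by
      simpa using hda.hasFDerivAt
    exact h3.comp_hasDerivAt 0 h2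
  have h2 := h1.tendsto_slope_zero_right
  refine ge_of_tendsto h2 ?_
  have : Set.Ioo (0:ℝ) 1 ∈ nhdsWithin (0:ℝ) (Set.Ioi 0) := Ioo_mem_nhdsGT one_pos
  filter_upwards [this] with t ht
  have h3 := hf.2 ha hd (show 0 ≤ 1 - t by linarith [ht.2]) ht.1.le (by ring)
  have e : (1 - t) • a + t • d = a + t • (d - a) := by
    rw [smul_sub, sub_smul, one_smul]; abel
  rw [e] at h3
  simp only [smul_eq_mul, zero_add, zero_smul, add_zero] at h3 ⊢
  rw [inv_mul_eq_div, le_div_iff₀ ht.1]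
  linarith

theorem mkEllData (Γ : Set (Fin n → ℝ)) (f : (Fin n → ℝ) → ℝ)
    (hΓ : IsConvexInvariantCone Γ) (hf : IsConcaveEllipticHessianOp Γ f)
    (N₁ N₂ : ℝ) (hN₁ : 0 < N₁) (hN : ConditionN Γ f N₁ N₂)
    (u : EE n → ℝ) (hu : ContDiff ℝ (⊤ : ℕ∞) u)
    (hadm : ∀ x, hessEigen u x ∈ Γ) (heq : ∀ x, f (hessEigen u x) = 1)
    (D₁ D₂ : ℝ) (hD : ConditionD f u Set.univ D₁ D₂) :
    Nonempty (EllData n N₁ ⌈N₂⌉₊ D₁ D₂ u) := by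
  obtain ⟨hopen, -, hconv, hcone, -, hperm⟩ := hΓ
  obtain ⟨hC2, hconc, hinv, hell, -, hhom⟩ := hf
  have hsym := hess_symm hu
  have hlam : ∀ x, hessEigen u x = (hsym x).eigenvalues := fun x => by
    rw [hessEigen, dif_pos (hsym x)]
  have hdiff : ∀ a ∈ Γ, DifferentiableAt ℝ f a := fun a ha =>
    (hC2.contDiffAt (hopen.mem_nhds ha)).differentiableAt (by norm_num)
  have hdiag : ∀ x i j, dd ((hsym x).eigenvectorBasis i) (dd ((hsym x).eigenvectorBasis j) u) x =
      if i = j then hessEigen u x i else 0 := by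
    intro x i j
    rw [dd_dd_matrix hu, hlam]
    have h1 := (hsym x).mulVec_eigenvectorBasis j
    have h2 : Matrix.mulVec (hessianMatrix u x) (fun k => (hsym x).eigenvectorBasis j k) =
      (hsym x).eigenvalues j • (fun k => (hsym x).eigenvectorBasis j k) := h1
    rw [h2]
    have h3 := orthonormal_iff_ite.1 (hsym x).eigenvectorBasis.orthonormal i j
    have h4 : ∑ k, (hsym x).eigenvectorBasis i k * (hsym x).eigenvectorBasis j k =
        if i = j then 1 else 0 := by
      rw [← h3, PiLp.inner_apply]
      refine Finset.sum_congr rfl fun k _ => ?_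
      simp [mul_comm]
    have h5 : ∑ k, (hsym x).eigenvectorBasis i k *
        ((hsym x).eigenvalues j • (fun k => (hsym x).eigenvectorBasis j k)) k =
        (hsym x).eigenvalues j * ∑ k, (hsym x).eigenvectorBasis i k * (hsym x).eigenvectorBasis j k := by
      rw [Finset.mul_sum]
      refine Finset.sum_congr rfl fun k _ => ?_
      simp only [Pi.smul_apply, smul_eq_mul]; ring
    rw [h5, h4]
    by_cases hij : i = j
    · subst hij; simp
    · simp [hij]
  have heuler : ∀ x, ∑ i, fpd f i (hessEigen u x) * hessEigen u x i = 1 := by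
    intro x
    set a := hessEigen u x with ha
    have h1 : HasDerivAt (fun t : ℝ => f (t • a)) (fderiv ℝ f a a) 1 := by
      have h2 : HasDerivAt (fun s : ℝ => s • a) a 1 := by
        simpa using ((hasDerivAt_id (1:ℝ)).smul_const a)
      have h3 : HasFDerivAt f (fderiv ℝ f a) ((1:ℝ) • a) := by
        simpa using (hdiff a (hadm x)).hasFDerivAt
      exact h3.comp_hasDerivAt 1 h2
    have h2 : HasDerivAt (fun t : ℝ => f (t • a)) (f a) 1 := by
      have h3 : HasDerivAt (fun t : ℝ => t * f a) (f a) 1 := by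
        simpa using (hasDerivAt_id (1:ℝ)).mul_const (f a)
      refine h3.congr_of_eventuallyEq ?_
      filter_upwards [lt_mem_nhds (zero_lt_one' ℝ)] with t ht
      exact hhom a (hadm x) t ht
    have h3 := h1.unique h2
    rw [heq, clm_pi] at h3
    exact h3
  refine ⟨{ smooth := hu
            b := fun x => (hsym x).eigenvectorBasis
            lam := fun x => hessEigen u x
            phi := fun x i => fpd f i (hessEigen u x)
            diag := hdiag
            pos := fun x i => hell _ (hadm x) i
            euler := heuler
            comp := ?_
            condN := ?_
            condD := fun x i h => hD x (Set.mem_univ _) i h }⟩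
  · intro x y b'
    set a := hessEigen u x with ha
    set μ := hessEigen u y with hμ
    set bas := (hsym y).eigenvectorBasis with hby
    set S : Set (Fin n → ℝ) := {p ∈ Γ | 1 ≤ f p} with hS
    have hSc : Convex ℝ S := hconc.convex_ge 1
    set d : Fin n → ℝ := fun i => dd (b' i) (dd (b' i) u) y with hd
    set P : Matrix (Fin n) (Fin n) ℝ := fun i k => inner ℝ (b' i) (bas k) ^ 2 with hP
    have hdP : d = Matrix.mulVec P μ := by
      funext i
      simp only [hd, Matrix.mulVec, dotProduct, hP]
      rw [hess_cross_expand hu bas (b' i) y]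
      refine Finset.sum_congr rfl fun k _ => ?_
      rw [Finset.sum_eq_single k]
      · rw [hdiag, if_pos rfl, real_inner_comm]; ring
      · intro j _ hj
        rw [hdiag, if_neg (Ne.symm hj)]; ring
      · simp
    have hPd : P ∈ doublyStochastic ℝ (Fin n) := by
      rw [mem_doublyStochastic_iff_sum]
      refine ⟨fun i j => sq_nonneg _, fun i => ?_, fun j => ?_⟩
      · simp only [hP]
        rw [bas.sum_sq_inner_left, b'.orthonormal.1]; norm_num
      · simp only [hP]
        rw [b'.sum_sq_inner_right, bas.orthonormal.1]; norm_num
    have hdS : d ∈ S := by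
      rw [hdP]
      rw [← SetLike.mem_coe, doublyStochastic_eq_convexHull_permMatrix] at hPd
      let lm : Matrix (Fin n) (Fin n) ℝ →ₗ[ℝ] (Fin n → ℝ) :=
        { toFun := fun P => Matrix.mulVec P μ
          map_add' := fun P P' => Matrix.add_mulVec P P' μ
          map_smul' := fun c P => Matrix.smul_mulVec c P μ }
      have hpre : Convex ℝ (lm ⁻¹' S) := hSc.linear_preimage lm
      have hsub := convexHull_min (s := {Equiv.Perm.permMatrix ℝ σ | σ : Equiv.Perm (Fin n)}) (by
        rintro _ ⟨σ, rfl⟩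
        show Matrix.mulVec (Equiv.Perm.permMatrix ℝ σ) μ ∈ S
        rw [Matrix.permMatrix_mulVec]
        exact ⟨hperm _ (hadm y) σ, by rw [hinv _ (hadm y), heq]⟩) hpre
      exact hsub hPd
    have h1 := concave_tangent hconc (hadm x) hdS.1 (hdiff _ (hadm x))
    rw [heq, map_sub] at h1
    have h2 : fderiv ℝ f (hessEigen u x) (hessEigen u x) = 1 := by
      rw [clm_pi]; exact heuler x
    have h3 : fderiv ℝ f (hessEigen u x) d = ∑ i, fpd f i a * dd (b' i) (dd (b' i) u) y := by
      rw [clm_pi]; rfl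
    have h4 := hdS.2
    rw [← h3]
    linarith
  · intro x C hC hsum i
    have hC0 : 0 < C := by linarith
    have h1 := hN _ (hadm x) (heq x) C hC0 hsum i
    have h2 : C ^ N₂ ≤ C ^ ⌈N₂⌉₊ := by
      rw [← Real.rpow_natCast]
      exact Real.rpow_le_rpow_of_exponent_le hC (Nat.le_ceil _)
    have h3 : 0 < C ^ N₂ := Real.rpow_pos_of_pos hC0 _
    rw [div_le_iff₀ (by positivity)] at h1
    have h4 : 0 < fpd f i (hessEigen u x) := hell _ (hadm x) i
    calc (1:ℝ) ≤ fpd f i (hessEigen u x) * (N₁ * C ^ N₂) := h1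
      _ ≤ fpd f i (hessEigen u x) * (N₁ * C ^ ⌈N₂⌉₊) := by gcongr
      _ = _ := by ring

end final

/-- **Liouville theorem.** An entire smooth admissible solution of `F(D²u) = 1` with quadratic
growth satisfying condition D is a quadratic polynomial. -/
theorem liouville_hessian (n : ℕ) (hn : 2 ≤ n)
    (Γ : Set (Fin n → ℝ)) (f : (Fin n → ℝ) → ℝ)
    (hΓ : IsConvexInvariantCone Γ) (hf : IsConcaveEllipticHessianOp Γ f)
    (N₁ N₂ : ℝ) (hN₁ : 0 < N₁) (hN₂ : 0 < N₂) (hN : ConditionN Γ f N₁ N₂)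
    (u : EuclideanSpace ℝ (Fin n) → ℝ) (hu : ContDiff ℝ (⊤ : ℕ∞) u)
    (hadm : ∀ x, hessEigen u x ∈ Γ)
    (heq : ∀ x, f (hessEigen u x) = 1)
    (hquad : QuadraticGrowth u)
    (D₁ D₂ : ℝ) (hD₁ : 0 < D₁) (hD₂ : 0 < D₂)
    (hD : ConditionD f u Set.univ D₁ D₂) :
    IsQuadraticPolynomial u := by
  obtain ⟨A⟩ := mkEllData Γ f hΓ hf N₁ N₂ hN₁ hN u hu hadm heq D₁ D₂ hD
  obtain ⟨C, hC, hg⟩ := hquad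
  haveI : NeZero n := ⟨by omega⟩
  have hconst := hess_const hN₁ hD₁ hD₂ (inv_pos.2 hC) A hg
  refine ⟨hessianMatrix u 0, fun i => dd (EuclideanSpace.single i 1) u 0, u 0, ?_, fun x => ?_⟩
  · have := hess_symm hu 0
    rwa [Matrix.IsHermitian, Matrix.conjTranspose_eq_transpose_of_trivial] at this
  · rw [taylor_const hu hconst x, dd_dd_matrix hu]
    congr 1
    congr 1
    · congr 1
      refine Finset.sum_congr rfl fun i _ => ?_
      simp only [Matrix.mulVec, dotProduct]
      rw [Finset.mul_sum]
      refine Finset.sum_congr rfl fun j _ => ?_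
      ring
    · have hv : x = ∑ i, x i • EuclideanSpace.single i (1 : ℝ) := by
        have := (EuclideanSpace.basisFun (Fin n) ℝ).sum_repr x
        simpa using this.symm
      conv_lhs => rw [hv]
      rw [dd_sum_vec]
      refine Finset.sum_congr rfl fun i _ => mul_comm _ _
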